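/- (Decision-tree complexity of the asymmetric case of Hopcroft's problem.) For every integer d ≥ 2 there exist constants C and D such that: for all integers m, n ≥ 2 there is an algebraic decision tree of degree at most D over ℝ^N, with N = d·m + (d+1)·n, whose input encodes m points p_1, …, p_m ∈ ℝ^d and n hyperplanes given by coefficient pairs (a_1,b_1), …, (a_n,b_n) ∈ ℝ^d × ℝ, of depth at most C·((m·n)^{d/(d+1)} + m·log n + n·log m), that computes, on every input with a_j ≠ 0 for all j, the number of pairs (i,j) with a_j·p_i > b_j. -/

import Mathlib

/-!
A point `p` and a hyperplane `a · x = b` become the vectors `(p, -1)` and `(a, b)` of `ℝ^(d+1)`, and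
the task is to find the signs of all inner products between two sets `I` and `J` of vectors. The
node polynomials are inner products of iterated cross products of the input vectors, nested at most
three times, so their degree is bounded in terms of `d`; by Warren's bound (`warren`) the number `Π`
of their sign patterns on `N` vectors satisfies `log Π = O(N log N)` (`ncl_le`, `pot_le`).

*Amortization.* Trees are analysed with the potential `W log (number of sign patterns still
possible)`. If a set of tests is needed, each of them is guessed to have the sign it has in most of
the remaining patterns, and the guess is verified through a short certificate. A wrong guess
eliminates many patterns and is paid for by the potential, so the amortized cost is that of the
verification (`gv`). This makes the *length of certificates* the relevant cost. All orientations of `g` vectors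
have certificates of length `O(g ^ d)` (`exists_cert_OT`), and locating a vector in an arrangement
of polynomial size costs `O(log g)` by a centerpoint argument based on Helly's theorem (`locate`).

*Cuttings.* Cells of arrangements are decomposed canonically into simplicial cones, each
determined by boundedly many hyperplanes, and two-level random sampling in the style of Clarkson and
Shor yields cuttings with `O(r ^ d)` cells each crossed by a fraction `1 / r` of the hyperplanes
(`cutting_vec`). Guessing a cutting and locating the points in it reduces a problem with `n`
hyperplanes to `O(a ^ d)` problems with `n / a` hyperplanes at amortized cost
`O(n a ^ (d - 1) + a ^ d + |I| log a)` (`stage2`). A second, non-amortized reduction computes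
approximations of the set of hyperplanes by repeated halving; it loses a factor polylogarithmic in
the number of hyperplanes, with an exponent independent of the number of iterations (`multi`).

*Assembly.* A balanced problem of size `N` is cut, first on one side and then on the other, into
problems of size polylogarithmic in `N`, which are solved with optimal amortized cost; the potential
they need is of lower order, and the total is `O(N ^ (2 d / (d + 1)))` (`bal`). For
`n ≤ m ≤ n ^ d` the problem is reduced to `(n / N) ^ d` balanced problems whose size `N` is chosen
such that `m N ^ (d - 1)` is about `n ^ d` (`phase_large`, `phase_small`); for `m > n ^ d` the
points are split into groups of size `n ^ d`, and `m < n` is symmetric (`solve_all`). Finally the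
abstract tree is turned into an algebraic decision tree (`Can.exists_adt`).
-/

/-- An algebraic decision tree over `ℝ^N` with output values in `β`:
each internal node is labeled by a polynomial in `N` variables and has three
children corresponding to the sign (negative / zero / positive) of the
polynomial at the input; each leaf is labeled by an output value. -/
inductive ADT (N : ℕ) (β : Type) : Type
  | leaf : β → ADT N β
  | node : MvPolynomial (Fin N) ℝ → ADT N β → ADT N β → ADT N β → ADT N β

namespace ADT

/-- Evaluating an algebraic decision tree on an input `x ∈ ℝ^N`. -/
noncomputable def eval {N : ℕ} {β : Type} : ADT N β → (Fin N → ℝ) → β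
  | leaf b, _ => b
  | node p tneg tzero tpos, x =>
      if MvPolynomial.eval x p < 0 then tneg.eval x
      else if MvPolynomial.eval x p = 0 then tzero.eval x
      else tpos.eval x

/-- The depth of an algebraic decision tree: the maximum number of internal
nodes on a root-to-leaf path. -/
def depth {N : ℕ} {β : Type} : ADT N β → ℕ
  | leaf _ => 0
  | node _ tneg tzero tpos => 1 + max (max tneg.depth tzero.depth) tpos.depth

/-- All node polynomials of the tree have total degree at most `D`. -/
def DegLE {N : ℕ} {β : Type} (D : ℕ) : ADT N β → Prop
  | leaf _ => True
  | node p tneg tzero tpos => p.totalDegree ≤ D ∧ tneg.DegLE D ∧ tzero.DegLE D ∧ tpos.DegLE D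

end ADT

/-- Index of the `j`-th coordinate of the `i`-th point in the input vector. -/
def ptIdx (d m n : ℕ) (i : Fin m) (j : Fin d) : Fin (d * m + (d + 1) * n) :=
  ⟨(i : ℕ) * d + (j : ℕ), by
    have hi : (i : ℕ) + 1 ≤ m := i.isLt
    have hj : (j : ℕ) < d := j.isLt
    calc (i : ℕ) * d + (j : ℕ) < (i : ℕ) * d + d := by omega
      _ = ((i : ℕ) + 1) * d := by ring
      _ ≤ m * d := Nat.mul_le_mul_right d hi
      _ = d * m := Nat.mul_comm m d
      _ ≤ d * m + (d + 1) * n := Nat.le_add_right _ _⟩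

/-- Index of the `j`-th coefficient of the `i`-th hyperplane in the input vector. -/
def coefIdx (d m n : ℕ) (i : Fin n) (j : Fin d) : Fin (d * m + (d + 1) * n) :=
  ⟨d * m + ((i : ℕ) * (d + 1) + (j : ℕ)), by
    have hi : (i : ℕ) + 1 ≤ n := i.isLt
    have hj : (j : ℕ) < d := j.isLt
    have : (i : ℕ) * (d + 1) + (j : ℕ) < (d + 1) * n := by
      calc (i : ℕ) * (d + 1) + (j : ℕ) < (i : ℕ) * (d + 1) + (d + 1) := by omega
        _ = ((i : ℕ) + 1) * (d + 1) := by ring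
        _ ≤ n * (d + 1) := Nat.mul_le_mul_right (d + 1) hi
        _ = (d + 1) * n := Nat.mul_comm n (d + 1)
    omega⟩

/-- Index of the offset (right-hand side) of the `i`-th hyperplane in the input vector. -/
def offIdx (d m n : ℕ) (i : Fin n) : Fin (d * m + (d + 1) * n) :=
  ⟨d * m + ((i : ℕ) * (d + 1) + d), by
    have hi : (i : ℕ) + 1 ≤ n := i.isLt
    have : (i : ℕ) * (d + 1) + d < (d + 1) * n := by
      calc (i : ℕ) * (d + 1) + d < (i : ℕ) * (d + 1) + (d + 1) := by omega
        _ = ((i : ℕ) + 1) * (d + 1) := by ring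
        _ ≤ n * (d + 1) := Nat.mul_le_mul_right (d + 1) hi
        _ = (d + 1) * n := Nat.mul_comm n (d + 1)
    omega⟩

namespace Hop
open MvPolynomial

/-! ### Counting sign patterns of polynomials -/

/-- A finite set of common zeros of a system `x i ^ n = Q i (x)` with `deg (Q i) < n` has at most
`n ^ |σ|` points: restricted to the set, every polynomial is a combination of the monomials whose
exponents are all less than `n`. -/
lemma count_solutions {σ : Type} [Fintype σ] [DecidableEq σ] (n : ℕ)
    (Q : σ → MvPolynomial σ ℝ)
    (hQ : ∀ i, (Q i).totalDegree < n) (Y : Finset (σ → ℝ))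
    (hY : ∀ y ∈ Y, ∀ i, y i ^ n = eval y (Q i)) : Y.card ≤ n ^ Fintype.card σ := by
  classical
  obtain ⟨ev, hev⟩ : ∃ ev : MvPolynomial σ ℝ →ₗ[ℝ] (Y → ℝ), ∀ p y, ev p y = eval y.1 p :=
    ⟨{ toFun := fun p y => eval y.1 p
       map_add' := by intro p q; ext y; simp
       map_smul' := by intro a p; ext y; simp [smul_eval] }, fun _ _ => rfl⟩
  obtain ⟨W, hW⟩ : ∃ W : Submodule ℝ (Y → ℝ), W = Submodule.span ℝ
    (Set.range fun m : σ → Fin n =>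
      ev (monomial (Finsupp.equivFunOnFinite.symm fun i => (m i : ℕ)) 1)) := ⟨_, rfl⟩
  have key : ∀ D : ℕ, ∀ p : MvPolynomial σ ℝ, p.totalDegree ≤ D → ev p ∈ W := by
    intro D
    induction D using Nat.strong_induction_on with
    | _ D ih =>
      intro p hp
      rw [p.as_sum, map_sum]
      refine Submodule.sum_mem _ fun m hm => ?_
      have hmD : m.degree ≤ D := (le_totalDegree hm).trans hp
      have h1 : monomial m (coeff m p) = coeff m p • monomial m (1 : ℝ) := by
        rw [smul_monomial]; simp
      rw [h1, map_smul]
      refine Submodule.smul_mem _ _ ?_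
      by_cases hall : ∀ i, m i < n
      · rw [hW]
        refine Submodule.subset_span ⟨fun i => ⟨m i, hall i⟩, ?_⟩
        have : (Finsupp.equivFunOnFinite.symm fun i => m i) = m := by ext i; simp
        simp only [this]
      · push Not at hall
        obtain ⟨i, hi⟩ := hall
        let m' : σ →₀ ℕ := m - Finsupp.single i n
        have hmm : Finsupp.single i n + m' = m := by
          ext j
          by_cases hj : j = i
          · subst hj; simp [m']; omega
          · simp [m', Finsupp.single_eq_of_ne hj]
        have hdeg : n + m'.degree = m.degree := by
          rw [← hmm, map_add]; simp
        have h2 : ev (monomial m 1) = ev (Q i * monomial m' 1) := by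
          ext y
          have : monomial m (1 : ℝ) = X i ^ n * monomial m' 1 := by
            rw [X_pow_eq_monomial, monomial_mul, hmm]; simp
          rw [hev, hev, this]
          simp only [map_mul, map_pow, eval_X]
          rw [hY y.1 y.2 i]
        rw [h2]
        have h3 : (Q i * monomial m' (1 : ℝ)).totalDegree < D := by
          refine lt_of_le_of_lt (totalDegree_mul _ _) ?_
          have h := totalDegree_monomial_le (R := ℝ) m' 1
          change _ ≤ m'.degree at h
          have := hQ i
          omega
        exact ih _ h3 _ le_rfl
  have hsurj : ∀ f : Y → ℝ, ∃ p, ev p = f := by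
    intro f
    have hsep : ∀ a b : Y, ∃ p : MvPolynomial σ ℝ, a ≠ b → eval a.1 p = 1 ∧ eval b.1 p = 0 := by
      intro a b
      by_cases hab : a = b
      · exact ⟨0, fun h => absurd hab h⟩
      · have : a.1 ≠ b.1 := fun h => hab (Subtype.ext h)
        obtain ⟨i, hi⟩ := Function.ne_iff.1 this
        refine ⟨C ((a.1 i - b.1 i)⁻¹) * (X i - C (b.1 i)), fun _ => ⟨?_, by simp⟩⟩
        simpa using inv_mul_cancel₀ (sub_ne_zero.2 hi)
    choose s hs using hsep
    refine ⟨∑ a : Y, C (f a) * ∏ b ∈ Finset.univ.erase a, s a b, ?_⟩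
    ext y
    rw [hev]
    simp only [map_sum, map_mul, eval_C, map_prod]
    rw [Finset.sum_eq_single y]
    · rw [Finset.prod_eq_one]; · simp
      intro b hb
      exact (hs y b (Finset.ne_of_mem_erase hb).symm).1
    · intro a _ hay
      rw [Finset.prod_eq_zero (Finset.mem_erase.2 ⟨hay.symm, Finset.mem_univ y⟩)
        (hs a y hay).2]
      simp
    · simp
  have htop : W = ⊤ := by
    rw [eq_top_iff]
    intro f _
    obtain ⟨p, rfl⟩ := hsurj f
    exact key _ p le_rfl
  have hfin : Module.finrank ℝ W ≤ Fintype.card (σ → Fin n) := by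
    rw [hW]; exact finrank_range_le_card _
  rw [htop, finrank_top, Module.finrank_fintype_fun_eq_card] at hfin
  simpa using hfin

lemma poly_bound {σ : Type} [Fintype σ] (p : MvPolynomial σ ℝ) (E : ℕ) (hp : p.totalDegree ≤ E) :
    ∃ c : ℝ, 0 ≤ c ∧ ∀ x : σ → ℝ, |eval x p| ≤ c * (1 + ‖x‖) ^ E := by
  classical
  refine ⟨∑ m ∈ p.support, |coeff m p|, Finset.sum_nonneg fun _ _ => abs_nonneg _, fun x => ?_⟩
  rw [eval_eq, Finset.sum_mul]
  refine (Finset.abs_sum_le_sum_abs _ _).trans (Finset.sum_le_sum fun m hm => ?_)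
  rw [abs_mul]
  refine mul_le_mul_of_nonneg_left ?_ (abs_nonneg _)
  rw [Finset.abs_prod]
  have h1 : ∏ i ∈ m.support, |x i ^ m i| ≤ ∏ i ∈ m.support, (1 + ‖x‖) ^ m i := by
    refine Finset.prod_le_prod (fun _ _ => abs_nonneg _) fun i _ => ?_
    rw [abs_pow]
    refine pow_le_pow_left₀ (abs_nonneg _) ?_ _
    have := norm_le_pi_norm x i
    rw [Real.norm_eq_abs] at this
    linarith
  refine h1.trans ?_
  rw [Finset.prod_pow_eq_pow_sum]
  refine pow_le_pow_right₀ (by linarith [norm_nonneg x]) ?_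
  exact (le_totalDegree hm).trans hp

lemma totalDegree_pderiv_le' {σ : Type} [DecidableEq σ] (p : MvPolynomial σ ℝ) (i : σ) :
    (pderiv i p).totalDegree ≤ p.totalDegree := by
  classical
  conv_lhs => rw [p.as_sum, map_sum]
  refine totalDegree_finsetSum_le fun m hm => ?_
  rw [pderiv_monomial]
  refine (totalDegree_monomial_le _ _).trans ?_
  change (m - Finsupp.single i 1).degree ≤ _
  refine le_trans ?_ (le_totalDegree hm)
  change _ ≤ m.degree
  exact Finsupp.degree_mono (tsub_le_self)

lemma hasDerivAt_pderiv {σ : Type} [DecidableEq σ] (p : MvPolynomial σ ℝ) (y : σ → ℝ) (i : σ) :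
    HasDerivAt (fun s => eval (Function.update y i s) p) (eval y (pderiv i p)) (y i) := by
  induction p using MvPolynomial.induction_on with
  | C a => simpa using hasDerivAt_const (y i) a
  | add p q hp hq =>
    have := hp.fun_add hq
    simp only [map_add]
    exact this
  | mul_X p j hp =>
    have hX : HasDerivAt (fun s => Function.update y i s j) (eval y (pderiv i (X j))) (y i) := by
      by_cases hj : j = i
      · subst hj; simpa using hasDerivAt_id' (y j)
      · simpa [Function.update_of_ne hj, pderiv_X_of_ne hj] using hasDerivAt_const (y i) (y j)
    have h := hp.fun_mul hX
    simp only [Function.update_eq_self] at h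
    simp only [Derivation.leibniz, smul_eq_mul, map_mul, map_add, eval_X]
    refine h.congr_deriv ?_
    ring

/-- The strict case of the sign pattern bound: every region on which the `g i` have prescribed
nonzero signs and which meets `P` contains a critical point of `(∏ g i)² - t ∑ xᵢ^(2 * E + 2)`. -/
lemma warren_strict {σ ι : Type} [Fintype σ] [DecidableEq σ] [Fintype ι]
    (g : ι → MvPolynomial σ ℝ) (E : ℕ)
    (hE : (∏ i, g i).totalDegree ≤ E) (P : Finset (σ → ℝ))
    (hne : ∀ x ∈ P, ∀ i, eval x (g i) ≠ 0)
    (hinj : ∀ x ∈ P, ∀ y ∈ P, (∀ i, SignType.sign (eval x (g i)) = SignType.sign (eval y (g i))) →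
      x = y) : P.card ≤ (2 * E + 1) ^ Fintype.card σ := by
  classical
  obtain ⟨f, hf⟩ : ∃ f, f = ∏ i, g i := ⟨_, rfl⟩
  rw [← hf] at hE
  have hf0 : ∀ x ∈ P, 0 < (eval x f) ^ 2 := fun x hx => by
    have : eval x f ≠ 0 := by
      rw [hf, map_prod]; exact Finset.prod_ne_zero_iff.2 fun i _ => hne x hx i
    positivity
  -- a scale `t` at which the perturbed polynomial is still positive on `P`
  obtain ⟨t, ht0, ht⟩ : ∃ t : ℝ, 0 < t ∧ ∀ x ∈ P,
      0 < (eval x f) ^ 2 - t * ∑ i, x i ^ (2 * E + 2) := by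
    have h : ∀ x ∈ P, ∀ᶠ t : ℝ in nhdsWithin 0 (Set.Ioi 0),
        0 < (eval x f) ^ 2 - t * ∑ i, x i ^ (2 * E + 2) := by
      intro x hx
      have hc : Filter.Tendsto (fun t : ℝ => (eval x f) ^ 2 - t * ∑ i, x i ^ (2 * E + 2))
          (nhdsWithin 0 (Set.Ioi 0)) (nhds ((eval x f) ^ 2 - 0 * ∑ i, x i ^ (2 * E + 2))) :=
        ((by fun_prop : Continuous fun t : ℝ => (eval x f) ^ 2 - t * ∑ i, x i ^ (2 * E + 2)).tendsto
          0).mono_left nhdsWithin_le_nhds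
      exact hc.eventually (lt_mem_nhds (by simpa using hf0 x hx))
    have h2 := (Filter.eventually_all_finset P).2 h
    obtain ⟨t, h3, h4⟩ := (h2.and self_mem_nhdsWithin).exists
    exact ⟨t, h4, h3⟩
  let F : MvPolynomial σ ℝ := f ^ 2 - C t * ∑ i, X i ^ (2 * E + 2)
  have hFe : ∀ x, eval x F = (eval x f) ^ 2 - t * ∑ i, x i ^ (2 * E + 2) := by
    intro x; simp [F]
  have hcont : ∀ p : MvPolynomial σ ℝ, Continuous fun x : σ → ℝ => eval x p :=
    fun p => MvPolynomial.continuous_eval p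
  obtain ⟨c, hc0, hc⟩ := poly_bound f E hE
  have hbdd : ∀ x, 0 < eval x F → ‖x‖ ≤ max 1 (c ^ 2 * 4 ^ E / t) := by
    intro x hx
    rcases le_or_gt ‖x‖ 1 with h1 | h1
    · exact h1.trans (le_max_left _ _)
    refine le_trans ?_ (le_max_right _ _)
    rw [hFe] at hx
    have hs : ‖x‖ ^ (2 * E + 2) ≤ ∑ i, x i ^ (2 * E + 2) := by
      have hσ : Nonempty σ := by
        by_contra h
        rw [not_nonempty_iff] at h
        have : ‖x‖ = 0 := by rw [Subsingleton.elim x 0]; simp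
        linarith
      obtain ⟨i, hi⟩ : ∃ i, ‖x i‖ = ‖x‖ := by
        obtain ⟨i, hi⟩ := Finite.exists_max fun i => ‖x i‖
        exact ⟨i, le_antisymm (norm_le_pi_norm x i)
          ((pi_norm_le_iff_of_nonempty _).2 hi)⟩
      rw [← hi, Real.norm_eq_abs, Even.pow_abs ⟨E + 1, by ring⟩]
      exact Finset.single_le_sum (f := fun i => x i ^ (2 * E + 2))
        (fun i _ => Even.pow_nonneg ⟨E + 1, by ring⟩ _) (Finset.mem_univ i)
    have h2 : (eval x f) ^ 2 ≤ c ^ 2 * 4 ^ E * ‖x‖ ^ (2 * E) := by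
      have h3 : |eval x f| ≤ c * (2 * ‖x‖) ^ E :=
        (hc x).trans (mul_le_mul_of_nonneg_left
          (pow_le_pow_left₀ (by positivity) (by linarith) _) hc0)
      calc (eval x f) ^ 2 = |eval x f| ^ 2 := (sq_abs _).symm
        _ ≤ (c * (2 * ‖x‖) ^ E) ^ 2 := pow_le_pow_left₀ (abs_nonneg _) h3 _
        _ = _ := by
          rw [mul_pow, mul_pow, mul_pow, ← pow_mul, ← pow_mul, mul_comm E 2, pow_mul 2 2 E]
          norm_num; ring
    have h4 : t * (‖x‖ ^ (2 * E) * ‖x‖ ^ 2) < c ^ 2 * 4 ^ E * ‖x‖ ^ (2 * E) := by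
      rw [← pow_add]
      have := mul_le_mul_of_nonneg_left hs ht0.le
      linarith
    have hpos : 0 < ‖x‖ ^ (2 * E) := by positivity
    rw [le_div_iff₀ ht0]
    have h5 : t * ‖x‖ ^ 2 < c ^ 2 * 4 ^ E := by
      by_contra h
      push Not at h
      nlinarith
    have h6 : ‖x‖ * t ≤ ‖x‖ * t * ‖x‖ := le_mul_of_one_le_right (by positivity) h1.le
    nlinarith
  have hcrit : ∀ x ∈ P, ∃ y : σ → ℝ,
      (∀ i, SignType.sign (eval y (g i)) = SignType.sign (eval x (g i))) ∧
      ∀ i, eval y (pderiv i F) = 0 := by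
    intro x hx
    let K : Set (σ → ℝ) := {z | (∀ i, 0 ≤ eval x (g i) * eval z (g i)) ∧ eval x F ≤ eval z F}
    have hxF : 0 < eval x F := by rw [hFe]; exact ht x hx
    have hKc : IsCompact K := by
      refine Metric.isCompact_of_isClosed_isBounded ?_ ?_
      · refine IsClosed.inter ?_ (isClosed_le continuous_const (hcont F))
        have hU : {z : σ → ℝ | ∀ i, 0 ≤ eval x (g i) * eval z (g i)} =
            ⋂ i, {z : σ → ℝ | 0 ≤ eval x (g i) * eval z (g i)} := by ext z; simp
        change IsClosed {z : σ → ℝ | ∀ i, 0 ≤ eval x (g i) * eval z (g i)}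
        rw [hU]
        exact isClosed_iInter fun i => isClosed_le continuous_const
          (continuous_const.mul (hcont (g i)))
      · refine isBounded_iff_forall_norm_le.2 ⟨_, fun z hz => hbdd z (hxF.trans_le hz.2)⟩
    have hxK : x ∈ K := ⟨fun i => mul_self_nonneg _, le_rfl⟩
    obtain ⟨y, hyK, hy⟩ := hKc.exists_isMaxOn ⟨x, hxK⟩ (hcont F).continuousOn
    have hyf : eval y f ≠ 0 := by
      intro h0
      have h1 := hxF.trans_le hyK.2
      rw [hFe, h0] at h1
      have : 0 ≤ ∑ i, y i ^ (2 * E + 2) :=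
        Finset.sum_nonneg fun i _ => Even.pow_nonneg ⟨E + 1, by ring⟩ _
      nlinarith
    have hyg : ∀ i, 0 < eval x (g i) * eval y (g i) := fun i => by
      refine lt_of_le_of_ne (hyK.1 i) (Ne.symm (mul_ne_zero (hne x hx i) ?_))
      rw [hf, map_prod] at hyf
      exact Finset.prod_ne_zero_iff.1 hyf i (Finset.mem_univ i)
    refine ⟨y, fun i => ?_, fun i => ?_⟩
    · rcases pos_and_pos_or_neg_and_neg_of_mul_pos (hyg i) with h | h
      · rw [sign_pos h.1, sign_pos h.2]
      · rw [sign_neg h.1, sign_neg h.2]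
    · have hloc : IsLocalMax (fun z => eval z F) y := by
        have hev : ∀ᶠ z in nhds y, ∀ i, 0 < eval x (g i) * eval z (g i) :=
          Filter.eventually_all.2 fun i =>
            (continuous_const.mul (hcont (g i))).continuousAt.eventually (lt_mem_nhds (hyg i))
        filter_upwards [hev] with z hz
        by_contra hlt
        push Not at hlt
        exact absurd (hy ⟨fun i => (hz i).le, hyK.2.trans hlt.le⟩) (not_le.2 hlt)
      have hcu : ContinuousAt (fun s : ℝ => Function.update y i s) (y i) :=
        (continuous_const.update i continuous_id).continuousAt
      have hl2 : IsLocalMax (fun s : ℝ => eval (Function.update y i s) F) (y i) := by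
        have h5 : Filter.Tendsto (fun s : ℝ => Function.update y i s) (nhds (y i)) (nhds y) := by
          have := hcu.tendsto
          rwa [Function.update_eq_self] at this
        have := h5.eventually hloc
        simpa [IsLocalMax, IsMaxFilter] using this
      exact hl2.hasDerivAt_eq_zero (hasDerivAt_pderiv F y i)
  choose! y hy1 hy2 using hcrit
  have hcard : (P.image y).card = P.card := by
    refine Finset.card_image_of_injOn fun a ha b hb hab => hinj a ha b hb fun i => ?_
    rw [← hy1 a ha i, ← hy1 b hb i, hab]
  rw [← hcard]
  refine count_solutions (2 * E + 1)
    (fun i => C (t * (2 * E + 2))⁻¹ * pderiv i (f ^ 2)) (fun i => ?_) _ ?_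
  · refine lt_of_le_of_lt (totalDegree_mul _ _) ?_
    have h1 := totalDegree_pderiv_le' (f ^ 2) i
    have h2 := totalDegree_pow f 2
    rw [totalDegree_C]
    have := Nat.mul_le_mul_left 2 hE
    omega
  · intro z hz i
    obtain ⟨x, hx, rfl⟩ := Finset.mem_image.1 hz
    have h := hy2 x hx i
    have h6 : pderiv i F = pderiv i (f ^ 2) - C t * (C (2 * E + 2 : ℝ) * X i ^ (2 * E + 1)) := by
      simp only [F, map_sub, pderiv_C_mul, map_sum]
      rw [Finset.sum_eq_single i]
      · have h7 : (C (2 * E + 2 : ℝ) : MvPolynomial σ ℝ) = ((2 * E + 2 : ℕ) : MvPolynomial σ ℝ) := by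
          rw [← map_natCast (C : ℝ →+* MvPolynomial σ ℝ)]; push_cast; rfl
        rw [pderiv_pow (i := i) (f := X i), pderiv_X_self, h7]; simp
      · intro j _ hj
        rw [pderiv_pow (i := i) (f := X j), pderiv_X_of_ne hj]; simp
      · simp
    rw [h6] at h
    simp only [map_sub, map_mul, eval_C, map_pow, eval_X] at h ⊢
    have hpos : t * (2 * E + 2) ≠ 0 := by positivity
    rw [inv_mul_eq_div, eq_div_iff hpos]
    linarith

/-- Warren's bound: the number of sign patterns in `{-1, 0, 1}` of `L` real polynomials of degree
at most `D` in `N` variables is at most `(4 L D + 1) ^ N`. -/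
theorem warren {σ ι : Type} [Fintype σ] [Fintype ι] (f : ι → MvPolynomial σ ℝ) (D : ℕ)
    (hD : ∀ i, (f i).totalDegree ≤ D) :
    (Set.range fun (x : σ → ℝ) (i : ι) => SignType.sign (eval x (f i))).ncard
      ≤ (4 * Fintype.card ι * D + 1) ^ Fintype.card σ := by
  classical
  let R := Set.range fun (x : σ → ℝ) (i : ι) => SignType.sign (eval x (f i))
  have hR : R.Finite := Set.toFinite R
  have hrep : ∀ s ∈ R, ∃ x : σ → ℝ, (fun i => SignType.sign (eval x (f i))) = s := fun s hs => hs
  choose! rep hr using hrep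
  let P : Finset (σ → ℝ) := hR.toFinset.image rep
  have hPc : P.card = R.ncard := by
    rw [Set.ncard_eq_toFinset_card R hR]
    refine Finset.card_image_of_injOn fun a ha b hb hab => ?_
    rw [← hr a (by simpa using ha), ← hr b (by simpa using hb), hab]
  -- a shift smaller than every nonzero value at the representatives makes all signs strict
  obtain ⟨e, he0, he⟩ : ∃ e : ℝ, 0 < e ∧ ∀ x ∈ P, ∀ i, eval x (f i) ≠ 0 → e < |eval x (f i)| := by
    have h : ∀ x ∈ P, ∀ᶠ e : ℝ in nhdsWithin 0 (Set.Ioi 0),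
        ∀ i, eval x (f i) ≠ 0 → e < |eval x (f i)| := by
      intro x _
      refine Filter.eventually_all.2 fun i => ?_
      by_cases h0 : eval x (f i) = 0
      · exact Filter.Eventually.of_forall fun e h => absurd h0 h
      · have := (Filter.tendsto_id (α := ℝ) (x := nhds 0)).eventually
          (gt_mem_nhds (abs_pos.2 h0))
        filter_upwards [nhdsWithin_le_nhds this] with e h _ using h
    obtain ⟨e, h3, h4⟩ := (((Filter.eventually_all_finset P).2 h).and self_mem_nhdsWithin).exists
    exact ⟨e, h4, h3⟩
  let g : ι × Bool → MvPolynomial σ ℝ := fun p => f p.1 + C (if p.2 then e else -e)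
  have hgd : (∏ p, g p).totalDegree ≤ 2 * Fintype.card ι * D := by
    refine (totalDegree_finsetProd _ _).trans ?_
    refine (Finset.sum_le_card_nsmul _ _ D fun p _ => ?_).trans ?_
    · refine (totalDegree_add _ _).trans ?_
      rw [totalDegree_C]
      simpa using hD p.1
    · simp [Fintype.card_prod]; ring_nf; rfl
  have hge : ∀ x p, eval x (g p) = eval x (f p.1) + if p.2 then e else -e := by
    intro x p; simp [g]
  have hval : ∀ x ∈ P, ∀ i, eval x (f i) = 0 ∨ e < eval x (f i) ∨ eval x (f i) < -e := by
    intro x hx i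
    by_cases h0 : eval x (f i) = 0
    · exact Or.inl h0
    · right
      rcases lt_abs.1 (he x hx i h0) with h | h
      · exact Or.inl h
      · right; linarith
  have := warren_strict g (2 * Fintype.card ι * D) hgd P ?_ ?_
  · rw [hPc] at this
    refine this.trans (le_of_eq ?_)
    congr 1; ring
  · rintro x hx ⟨i, b⟩
    rw [hge]
    rcases hval x hx i with h | h | h <;> cases b <;> simp <;>
      intro h' <;> linarith
  · intro x hx y hy h
    obtain ⟨a, ha, rfl⟩ := Finset.mem_image.1 hx
    obtain ⟨b, hb, rfl⟩ := Finset.mem_image.1 hy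
    congr 1
    rw [← hr a (by simpa using ha), ← hr b (by simpa using hb)]
    ext1 i
    have h1 := h (i, true)
    have h2 := h (i, false)
    simp only [hge] at h1 h2
    have sp : ∀ z ∈ P, (SignType.sign (eval z (f i) + e), SignType.sign (eval z (f i) + -e)) =
        if SignType.sign (eval z (f i)) = 0 then ((1, -1) : SignType × SignType)
        else (SignType.sign (eval z (f i)), SignType.sign (eval z (f i))) := by
      intro z hz
      rcases hval z hz i with h | h | h
      · rw [h]; simp [he0]
      · rw [sign_pos (show 0 < eval z (f i) by linarith),
          sign_pos (show 0 < eval z (f i) + e by linarith),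
          sign_pos (show 0 < eval z (f i) + -e by linarith)]; simp
      · rw [sign_neg (show eval z (f i) < 0 by linarith),
          sign_neg (show eval z (f i) + e < 0 by linarith),
          sign_neg (show eval z (f i) + -e < 0 by linarith)]; simp
    have h3 := sp _ hx
    have h4 := sp _ hy
    simp only [if_true, Bool.false_eq_true, if_false] at h1 h2
    rw [h1, h2, h4] at h3
    generalize SignType.sign (eval (rep a) (f i)) = u at h3 ⊢
    generalize SignType.sign (eval (rep b) (f i)) = w at h3 ⊢
    revert u w; decide

end Hop

namespace Hop

/-! ### Generalized cross products -/

/-- The generalized cross product of `d` vectors of length `d + 1`: the vector of signed maximal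
minors, orthogonal to all of them. -/
def cr {R : Type} [CommRing R] {d : ℕ} (c : Fin d → Fin (d + 1) → R) : Fin (d + 1) → R :=
  fun j => (-1) ^ (j : ℕ) * Matrix.det (Matrix.of fun (i l : Fin d) => c i (j.succAbove l))

lemma dot_cr {R : Type} [CommRing R] {d : ℕ} (c : Fin d → Fin (d + 1) → R) (y : Fin (d + 1) → R) :
    y ⬝ᵥ cr c = Matrix.det (Matrix.of (Fin.cons y c : Fin (d + 1) → Fin (d + 1) → R)) := by
  rw [Matrix.det_succ_row_zero]
  simp only [dotProduct, cr]
  refine Finset.sum_congr rfl fun j _ => ?_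
  have h : Matrix.of (fun (i l : Fin d) => c i (j.succAbove l)) =
      (Matrix.of (Fin.cons y c : Fin (d + 1) → Fin (d + 1) → R)).submatrix Fin.succ
        j.succAbove := by
    ext a b; simp
  rw [h]
  simp only [Matrix.of_apply, Fin.cons_zero]
  ring

lemma dot_cr_self {R : Type} [CommRing R] {d : ℕ} (c : Fin d → Fin (d + 1) → R) (i : Fin d) :
    c i ⬝ᵥ cr c = 0 := by
  rw [dot_cr]
  refine Matrix.det_zero_of_row_eq (i := 0) (j := i.succ) (Fin.succ_ne_zero i).symm ?_
  ext l; simp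

/-- A nonsingular complement `y` to independent `c`. -/
lemma exists_cons_det_ne_zero {d : ℕ} {c : Fin d → Fin (d + 1) → ℝ} (hc : LinearIndependent ℝ c) :
    ∃ y : Fin (d + 1) → ℝ,
      Matrix.det (Matrix.of (Fin.cons y c : Fin (d + 1) → Fin (d + 1) → ℝ)) ≠ 0 := by
  have h1 : Submodule.span ℝ (Set.range c) ≠ ⊤ := by
    intro h
    have h2 := finrank_span_eq_card hc
    rw [h, finrank_top] at h2
    simp at h2
  obtain ⟨y, hy⟩ : ∃ y, y ∉ Submodule.span ℝ (Set.range c) := by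
    by_contra h
    push Not at h
    exact h1 (eq_top_iff.2 fun x _ => h x)
  refine ⟨y, ?_⟩
  have h3 : LinearIndependent ℝ (Fin.cons y c : Fin (d + 1) → Fin (d + 1) → ℝ) :=
    linearIndependent_finCons.2 ⟨hc, hy⟩
  have h4 : LinearIndependent ℝ
      (Matrix.of (Fin.cons y c : Fin (d + 1) → Fin (d + 1) → ℝ)).row := h3
  rw [Matrix.linearIndependent_rows_iff_isUnit, Matrix.isUnit_iff_isUnit_det] at h4
  exact h4.ne_zero

lemma cr_ne_zero {d : ℕ} {c : Fin d → Fin (d + 1) → ℝ} (hc : LinearIndependent ℝ c) :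
    cr c ≠ 0 := by
  obtain ⟨y, hy⟩ := exists_cons_det_ne_zero hc
  intro h
  rw [← dot_cr, h] at hy
  simp at hy

lemma cr_parallel {d : ℕ} {c : Fin d → Fin (d + 1) → ℝ} (hc : LinearIndependent ℝ c)
    {z : Fin (d + 1) → ℝ} (hz : ∀ i, c i ⬝ᵥ z = 0) : ∃ a : ℝ, z = a • cr c := by
  obtain ⟨y, hy⟩ := exists_cons_det_ne_zero hc
  have hy' : y ⬝ᵥ cr c ≠ 0 := by rwa [dot_cr]
  refine ⟨(y ⬝ᵥ z) / (y ⬝ᵥ cr c), ?_⟩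
  rw [← sub_eq_zero]
  refine Matrix.eq_zero_of_mulVec_eq_zero hy ?_
  ext i
  refine Fin.cases ?_ (fun i => ?_) i
  · simp only [Matrix.mulVec, Matrix.of_apply, Fin.cons_zero, dotProduct_sub, dotProduct_smul,
      smul_eq_mul, Pi.zero_apply]
    field_simp; ring
  · change c i ⬝ᵥ (z - _ • cr c) = 0
    rw [dotProduct_sub, dotProduct_smul, hz, dot_cr_self]
    simp

end Hop

namespace Hop

/-! ### Apexes of arrangement cells -/

/-- Vectors of the homogenized space. -/
abbrev Vec (d : ℕ) := Fin (d + 1) → ℝ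

/-- `WS x y`: the sign of `y` is that of `x` or zero. -/
def WS (x y : ℝ) : Prop := (x = 0 → y = 0) ∧ (0 < x → 0 ≤ y) ∧ (x < 0 → y ≤ 0)

lemma WS.refl (x : ℝ) : WS x x := ⟨id, le_of_lt, le_of_lt⟩

lemma WS.trans {x y w : ℝ} (h : WS x y) (h' : WS y w) : WS x w := by
  obtain ⟨h1, h2, h3⟩ := h
  obtain ⟨h1', h2', h3'⟩ := h'
  refine ⟨fun h => h1' (h1 h), fun h => ?_, fun h => ?_⟩
  · rcases (h2 h).eq_or_lt with h | h
    · exact (h1' h.symm).ge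
    · exact h2' h
  · rcases (h3 h).eq_or_lt with h | h
    · exact (h1' h).le
    · exact h3' h

lemma WS.smul {x y a : ℝ} (ha : 0 ≤ a) (h : WS x y) : WS x (a * y) := by
  obtain ⟨h1, h2, h3⟩ := h
  exact ⟨fun h => by simp [h1 h], fun h => mul_nonneg ha (h2 h),
    fun h => mul_nonpos_of_nonneg_of_nonpos ha (h3 h)⟩

lemma WS.add {x y w : ℝ} (h : WS x y) (h' : WS x w) : WS x (y + w) := by
  obtain ⟨h1, h2, h3⟩ := h
  obtain ⟨h1', h2', h3'⟩ := h'
  exact ⟨fun h => by simp [h1 h, h1' h], fun h => add_nonneg (h2 h) (h2' h),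
    fun h => add_nonpos (h3 h) (h3' h)⟩

lemma WS.congr {x x' y : ℝ} (hx : SignType.sign x = SignType.sign x') (h : WS x y) : WS x' y := by
  obtain ⟨h1, h2, h3⟩ := h
  refine ⟨fun h => h1 ?_, fun h => h2 ?_, fun h => h3 ?_⟩
  · rw [h, sign_zero] at hx; exact sign_eq_zero_iff.1 hx
  · rw [sign_pos h] at hx; exact sign_eq_one_iff.1 hx
  · rw [sign_neg h] at hx; exact sign_eq_neg_one_iff.1 hx

lemma WS.sign_eq {x y : ℝ} (h : WS x y) (hy : y ≠ 0) : SignType.sign x = SignType.sign y := by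
  obtain ⟨h1, h2, h3⟩ := h
  rcases lt_trichotomy x 0 with hx | hx | hx
  · rw [sign_neg hx, sign_neg (lt_of_le_of_ne (h3 hx) hy)]
  · exact absurd (h1 hx) hy
  · rw [sign_pos hx, sign_pos (lt_of_le_of_ne (h2 hx) hy.symm)]

lemma WS.isClosed (x : ℝ) : IsClosed {y | WS x y} := by
  have h : {y | WS x y} = if x = 0 then {0} else if 0 < x then Set.Ici 0 else Set.Iic 0 := by
    ext y
    rcases lt_trichotomy x 0 with hx | hx | hx
    · simp [WS, hx, hx.ne, hx.not_gt]
    · simp [WS, hx]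
    · simp [WS, hx, hx.ne', hx.not_gt]
  rw [h]
  split_ifs
  · exact isClosed_singleton
  · exact isClosed_Ici
  · exact isClosed_Iic

variable {d : ℕ}

/-- The slice of the closed cell of `p` in the arrangement `A` on which the `ℓ¹` norm is `1`
(the norm is linear on the cell once `A` contains the coordinate vectors). -/
def Slice (A : Finset (Vec d)) (p : Vec d) : Set (Vec d) :=
  {z | (∀ g ∈ A, WS (g ⬝ᵥ p) (g ⬝ᵥ z)) ∧ ∑ j, (SignType.sign (p j) : ℝ) * z j = 1}

/-- The coordinate vectors belong to `A`. -/
def Units (A : Finset (Vec d)) : Prop := ∀ j, Pi.single j 1 ∈ A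

lemma Units.mono {A B : Finset (Vec d)} (h : Units A) (hAB : A ⊆ B) : Units B :=
  fun j => hAB (h j)

lemma Units.ws {A : Finset (Vec d)} (hA : Units A) {p z : Vec d}
    (hz : ∀ g ∈ A, WS (g ⬝ᵥ p) (g ⬝ᵥ z)) (j : Fin (d + 1)) : WS (p j) (z j) := by
  simpa using hz _ (hA j)

lemma sign_mul_ws {x y : ℝ} (h : WS x y) : (SignType.sign x : ℝ) * y = |y| := by
  obtain ⟨h1, h2, h3⟩ := h
  rcases lt_trichotomy x 0 with hx | hx | hx
  · rw [sign_neg hx, abs_of_nonpos (h3 hx)]; simp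
  · rw [h1 hx]; simp
  · rw [sign_pos hx, abs_of_nonneg (h2 hx)]; simp

lemma Slice.isCompact {A : Finset (Vec d)} (hA : Units A) (p : Vec d) :
    IsCompact (Slice A p) := by
  refine Metric.isCompact_of_isClosed_isBounded ?_ ?_
  · have h : Slice A p = (⋂ g ∈ A, {z | WS (g ⬝ᵥ p) (g ⬝ᵥ z)}) ∩
        {z | ∑ j, (SignType.sign (p j) : ℝ) * z j = 1} := by
      ext z; simp [Slice]
    rw [h]
    refine IsClosed.inter (isClosed_biInter fun g _ => ?_) ?_
    · refine (WS.isClosed (g ⬝ᵥ p)).preimage (f := fun z : Vec d => g ⬝ᵥ z) ?_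
      simp only [dotProduct]; fun_prop
    · refine isClosed_eq ?_ continuous_const
      fun_prop
  · refine (Metric.isBounded_closedBall (x := (0 : Vec d)) (r := 1)).subset fun z hz => ?_
    rw [mem_closedBall_zero_iff, pi_norm_le_iff_of_nonneg zero_le_one]
    intro j
    rw [Real.norm_eq_abs, ← hz.2]
    calc |z j| ≤ ∑ j, |z j| := Finset.single_le_sum (f := fun j => |z j|)
          (fun _ _ => abs_nonneg _) (Finset.mem_univ j)
      _ = _ := Finset.sum_congr rfl fun j _ => (sign_mul_ws (hA.ws hz.1 j)).symm

lemma Slice.nonempty (A : Finset (Vec d)) {p : Vec d} (hp : p ≠ 0) : (Slice A p).Nonempty := by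
  obtain ⟨i, hi⟩ : ∃ i, p i ≠ 0 := by
    by_contra h; push Not at h; exact hp (funext h)
  have hs : 0 < ∑ j, |p j| :=
    Finset.sum_pos' (fun _ _ => abs_nonneg _) ⟨i, Finset.mem_univ i, abs_pos.2 hi⟩
  refine ⟨(∑ j, |p j|)⁻¹ • p, fun g _ => ?_, ?_⟩
  · rw [dotProduct_smul]
    exact (WS.refl _).smul (inv_nonneg.2 hs.le)
  · have : ∀ j, (SignType.sign (p j) : ℝ) * ((∑ j, |p j|)⁻¹ • p) j
        = (∑ j, |p j|)⁻¹ * |p j| := fun j => by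
      rw [← sign_mul_ws (WS.refl (p j)), Pi.smul_apply, smul_eq_mul]; ring
    simp only [this, ← Finset.mul_sum]
    exact inv_mul_cancel₀ hs.ne'

/-- Strict lexicographic order. -/
def LexLt (z w : Vec d) : Prop := ∃ i, (∀ j < i, z j = w j) ∧ z i < w i

lemma LexLt.total (z w : Vec d) : z = w ∨ LexLt z w ∨ LexLt w z := by
  by_cases h : ∀ i, z i = w i
  · exact Or.inl (funext h)
  right
  push Not at h
  have hne : (Finset.univ.filter fun i => z i ≠ w i).Nonempty := by
    obtain ⟨i, hi⟩ := h; exact ⟨i, by simpa using hi⟩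
  obtain ⟨i, hi, hmin⟩ := Finset.exists_min_image _ id hne
  have hlt : ∀ j < i, z j = w j := fun j hj => by
    by_contra hne
    exact absurd (hmin j (by simpa using hne)) (not_le.2 hj)
  rcases lt_or_gt_of_ne (show z i ≠ w i by simpa using hi) with h | h
  · exact Or.inl ⟨i, hlt, h⟩
  · exact Or.inr ⟨i, fun j hj => (hlt j hj).symm, h⟩

lemma LexLt.asymm {z w : Vec d} (h : LexLt z w) (h' : LexLt w z) : False := by
  obtain ⟨i, hi, hi'⟩ := h
  obtain ⟨j, hj, hj'⟩ := h'
  rcases lt_trichotomy i j with hij | hij | hij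
  · exact absurd (hj i hij) hi'.ne'
  · subst hij; exact lt_asymm hi' hj'
  · exact absurd (hi j hij) hj'.ne'

lemma LexLt.irrefl {z : Vec d} (h : LexLt z z) : False := h.asymm h

lemma LexLt.convex (w : Vec d) : Convex ℝ {z | LexLt z w} := by
  rintro z ⟨i, hi, hi'⟩ z' ⟨j, hj, hj'⟩ a b ha hb hab
  have hb' : b = 1 - a := by linarith
  rcases lt_trichotomy i j with hij | hij | hij
  · rcases ha.eq_or_lt with h | h
    · refine ⟨j, fun l hl => ?_, ?_⟩
      · simp [← h, hb', hj l hl]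
      · simpa [← h, hb'] using hj'
    · refine ⟨i, fun l hl => ?_, ?_⟩
      · simp [hi l hl, hj l (hl.trans hij), hb']; ring
      · simp [hj i hij, hb']; nlinarith
  · subst hij
    refine ⟨i, fun l hl => ?_, ?_⟩
    · simp [hi l hl, hj l hl, hb']; ring
    · simp only [Pi.add_apply, Pi.smul_apply, smul_eq_mul]
      rcases ha.eq_or_lt with h | h
      · simpa [← h, hb'] using hj'
      · have := mul_lt_mul_of_pos_left hi' h
        have := mul_le_mul_of_nonneg_left hj'.le hb
        calc a * z i + b * z' i < a * w i + b * w i := by linarith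
          _ = w i := by rw [hb']; ring
  · rcases hb.eq_or_lt with h | h
    · have ha1 : a = 1 := by linarith
      refine ⟨i, fun l hl => ?_, ?_⟩
      · simp [← h, ha1, hi l hl]
      · simpa [← h, ha1] using hi'
    · refine ⟨j, fun l hl => ?_, ?_⟩
      · simp [hj l hl, hi l (hl.trans hij), hb']; ring
      · simp only [Pi.add_apply, Pi.smul_apply, smul_eq_mul, hi j hij]
        have := mul_lt_mul_of_pos_left hj' h
        calc a * w j + b * z' j < a * w j + b * w j := by linarith
          _ = w j := by rw [hb']; ring

/-- A nonempty compact set has a lexicographic minimum. -/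
lemma exists_lexMin {K : Set (Vec d)} (hK : IsCompact K) (hne : K.Nonempty) :
    ∃ z ∈ K, ∀ w ∈ K, w = z ∨ LexLt z w := by
  have key : ∀ m ≤ d + 1, ∃ z ∈ K, ∀ w ∈ K,
      (∀ j : Fin (d + 1), (j : ℕ) < m → w j = z j) ∨ LexLt z w := by
    intro m
    induction m with
    | zero =>
      intro _
      obtain ⟨z, hz⟩ := hne
      exact ⟨z, hz, fun w _ => Or.inl (by simp)⟩
    | succ m ih =>
      intro hm
      obtain ⟨z, hz, hz'⟩ := ih (by omega)
      have hc : IsCompact (K ∩ {w | ∀ j : Fin (d + 1), (j : ℕ) < m → w j = z j}) := by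
        refine hK.inter_right ?_
        have : {w : Vec d | ∀ j : Fin (d + 1), (j : ℕ) < m → w j = z j} =
            ⋂ (j : Fin (d + 1)) (_ : (j : ℕ) < m), {w | w j = z j} := by
          ext w; simp
        rw [this]
        exact isClosed_iInter fun j => isClosed_iInter fun _ =>
          isClosed_eq (continuous_apply j) continuous_const
      obtain ⟨y, hy, hmin⟩ := hc.exists_isMinOn ⟨z, hz, fun _ _ => rfl⟩
        (continuous_apply (⟨m, by omega⟩ : Fin (d + 1))).continuousOn
      refine ⟨y, hy.1, fun w hw => ?_⟩
      rcases hz' w hw with h | ⟨i, hi, hi'⟩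
      · have h1 : y ⟨m, by omega⟩ ≤ w ⟨m, by omega⟩ := hmin ⟨hw, h⟩
        rcases h1.eq_or_lt with h1 | h1
        · left
          intro j hj
          rcases (Nat.lt_succ_iff.1 hj).eq_or_lt with h2 | h2
          · have : j = ⟨m, by omega⟩ := Fin.ext h2
            rw [this, h1]
          · rw [h j h2, hy.2 j h2]
        · right
          refine ⟨⟨m, by omega⟩, fun j hj => ?_, h1⟩
          have h2 : (j : ℕ) < m := hj
          rw [h j h2, hy.2 j h2]
      · by_cases him : (i : ℕ) < m
        · right
          refine ⟨i, fun j hj => ?_, by rw [hy.2 i him]; exact hi'⟩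
          rw [hy.2 j (lt_trans (show (j : ℕ) < i from hj) him), hi j hj]
        · -- `z` and `w` agree below `m`, so `w` competes in the minimization of coordinate `m`
          have h : ∀ j : Fin (d + 1), (j : ℕ) < m → w j = z j := fun j hj =>
            (hi j (show (j : ℕ) < i by omega)).symm
          have h1 : y ⟨m, by omega⟩ ≤ w ⟨m, by omega⟩ := hmin ⟨hw, h⟩
          rcases h1.eq_or_lt with h1 | h1
          · left
            intro j hj
            rcases (Nat.lt_succ_iff.1 hj).eq_or_lt with h2 | h2
            · have : j = ⟨m, by omega⟩ := Fin.ext h2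
              rw [this, h1]
            · rw [h j h2, hy.2 j h2]
          · right
            refine ⟨⟨m, by omega⟩, fun j hj => ?_, h1⟩
            have h2 : (j : ℕ) < m := hj
            rw [h j h2, hy.2 j h2]
  obtain ⟨z, hz, hz'⟩ := key (d + 1) le_rfl
  exact ⟨z, hz, fun w hw => (hz' w hw).imp (fun h => funext fun j => h j j.2) id⟩

lemma exists_eps_mul_le {α : Type*} (A : Finset α) (a b : α → ℝ) (hb : ∀ g ∈ A, 0 < b g) :
    ∃ ε > 0, ∀ g ∈ A, ε * a g ≤ b g := by
  classical
  induction A using Finset.induction_on with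
  | empty => exact ⟨1, one_pos, by simp⟩
  | insert x A _ ih =>
    obtain ⟨ε, hε, h⟩ := ih fun g hg => hb g (Finset.mem_insert_of_mem hg)
    have hx : 0 < b x := hb x (Finset.mem_insert_self _ _)
    have hpos : 0 < |a x| + 1 := by positivity
    refine ⟨min ε (b x / (|a x| + 1)), lt_min hε (div_pos hx hpos), fun g hg => ?_⟩
    rcases le_total 0 (a g) with hag | hag
    · rcases Finset.mem_insert.1 hg with rfl | hg
      · calc _ ≤ b g / (|a g| + 1) * a g := mul_le_mul_of_nonneg_right (min_le_right _ _) hag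
          _ ≤ b g / (|a g| + 1) * (|a g| + 1) := by
            gcongr; linarith [le_abs_self (a g)]
          _ = b g := div_mul_cancel₀ _ hpos.ne'
      · exact (mul_le_mul_of_nonneg_right (min_le_left _ _) hag).trans (h g hg)
    · exact (mul_nonpos_of_nonneg_of_nonpos
        (le_min hε.le (div_pos hx hpos).le) hag).trans (hb g hg).le

/-- `z` is the lexicographically smallest point of the slice of the cell of `p`. -/
def IsApex (A : Finset (Vec d)) (p z : Vec d) : Prop :=
  z ∈ Slice A p ∧ ∀ w ∈ Slice A p, w = z ∨ LexLt z w

lemma exists_isApex {A : Finset (Vec d)} (hA : Units A) {p : Vec d} (hp : p ≠ 0) :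
    ∃ z, IsApex A p z := exists_lexMin (Slice.isCompact hA p) (Slice.nonempty A hp)

lemma Slice.congr {A : Finset (Vec d)} (hA : Units A) {p p' : Vec d}
    (h : ∀ g ∈ A, SignType.sign (g ⬝ᵥ p) = SignType.sign (g ⬝ᵥ p')) : Slice A p = Slice A p' := by
  have hj : ∀ j, SignType.sign (p j) = SignType.sign (p' j) := fun j => by simpa using h _ (hA j)
  ext z
  simp only [Slice, Set.mem_ofPred_eq, hj]
  refine and_congr_left fun _ => forall₂_congr fun g hg => ⟨WS.congr (h g hg), WS.congr (h g hg).symm⟩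

lemma IsApex.unique {A : Finset (Vec d)} (hA : Units A) {p p' z z' : Vec d}
    (h : ∀ g ∈ A, SignType.sign (g ⬝ᵥ p) = SignType.sign (g ⬝ᵥ p'))
    (hz : IsApex A p z) (hz' : IsApex A p' z') : z = z' := by
  rw [IsApex, ← Slice.congr hA h] at hz'
  rcases hz.2 z' hz'.1 with h | h
  · exact h.symm
  · rcases hz'.2 z hz.1 with h' | h'
    · exact h'
    · exact (h.asymm h').elim

lemma IsApex.ne_zero {A : Finset (Vec d)} {p z : Vec d} (hz : IsApex A p z) : z ≠ 0 := by
  rintro rfl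
  simpa using hz.1.2

/-- An apex is a vertex: it is tight for `d` independent elements of `A`. -/
lemma IsApex.tight {A : Finset (Vec d)} {p z : Vec d} (hz : IsApex A p z) :
    ∃ c : Fin d → Vec d, (∀ i, c i ∈ A) ∧ LinearIndependent ℝ c ∧ ∀ i, c i ⬝ᵥ z = 0 := by
  classical
  obtain ⟨t, ht, hspan, hli⟩ := exists_linearIndependent ℝ {g : Vec d | g ∈ A ∧ g ⬝ᵥ z = 0}
  have hfin : t.Finite := (A.finite_toSet).subset fun g hg => (ht hg).1
  have : Fintype t := hfin.fintype
  by_cases hcard : d ≤ Fintype.card t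
  · obtain ⟨e⟩ : Nonempty (Fin d ↪ t) := by
      rw [Function.Embedding.nonempty_iff_card_le]; simpa using hcard
    exact ⟨fun i => (e i : Vec d), fun i => (ht (e i).2).1, hli.comp e e.injective,
      fun i => (ht (e i).2).2⟩
  exfalso
  push Not at hcard
  -- a direction preserving all tight constraints and the slice equation
  let φ : Vec d →ₗ[ℝ] (Option t → ℝ) := LinearMap.pi fun o =>
    match o with
    | none => ∑ j, (SignType.sign (p j) : ℝ) • LinearMap.proj j
    | some g => ∑ j, (g : Vec d) j • LinearMap.proj j
  have hker : LinearMap.ker φ ≠ ⊥ := by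
    apply LinearMap.ker_ne_bot_of_finrank_lt
    rw [Module.finrank_pi, Module.finrank_pi, Fintype.card_option, Fintype.card_fin]; omega
  obtain ⟨u, hu, hu0⟩ := (Submodule.ne_bot_iff _).1 hker
  have hu' := LinearMap.mem_ker.1 hu
  have hu1 : ∑ j, (SignType.sign (p j) : ℝ) * u j = 0 := by
    have := congrFun hu' none
    simpa [φ] using this
  have hu2 : ∀ g ∈ t, g ⬝ᵥ u = 0 := fun g hg => by
    have := congrFun hu' (some ⟨g, hg⟩)
    simpa [φ, dotProduct] using this
  have hu4 : ∀ g ∈ Submodule.span ℝ t, g ⬝ᵥ u = 0 := fun g hg => by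
    induction hg using Submodule.span_induction with
    | mem x hx => exact hu2 x hx
    | zero => simp
    | add x y _ _ hx hy => rw [add_dotProduct, hx, hy, add_zero]
    | smul a x _ hx => rw [smul_dotProduct, hx, smul_zero]
  have hu3 : ∀ g ∈ A, g ⬝ᵥ z = 0 → g ⬝ᵥ u = 0 := fun g hg hgz => hu4 g (by
    rw [hspan]; exact Submodule.subset_span ⟨hg, hgz⟩)
  obtain ⟨ε, hε, hεA⟩ := exists_eps_mul_le (A.filter fun g => g ⬝ᵥ z ≠ 0)
    (fun g => |g ⬝ᵥ u|) (fun g => |g ⬝ᵥ z|) (by simp)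
  have hmem : ∀ s : ℝ, |s| = ε → z + s • u ∈ Slice A p := by
    intro s hs
    refine ⟨fun g hg => ?_, ?_⟩
    · refine (hz.1.1 g hg).trans ?_
      rw [dotProduct_add, dotProduct_smul, smul_eq_mul]
      by_cases hgz : g ⬝ᵥ z = 0
      · rw [hgz, hu3 g hg hgz]; simpa using WS.refl 0
      · have h1 := hεA g (by simp [hg, hgz])
        have h2 : |s * (g ⬝ᵥ u)| ≤ |g ⬝ᵥ z| := by rw [abs_mul, hs]; exact h1
        refine ⟨fun h => absurd h hgz, fun h => ?_, fun h => ?_⟩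
        · rw [abs_of_pos h] at h2; linarith [neg_abs_le (s * (g ⬝ᵥ u))]
        · rw [abs_of_neg h] at h2; linarith [le_abs_self (s * (g ⬝ᵥ u))]
    · have h1 := hz.1.2
      simp only [Pi.add_apply, Pi.smul_apply, smul_eq_mul, mul_add, Finset.sum_add_distrib, h1]
      have : ∑ j, (SignType.sign (p j) : ℝ) * (s * u j) =
          s * ∑ j, (SignType.sign (p j) : ℝ) * u j := by
        rw [Finset.mul_sum]; exact Finset.sum_congr rfl fun j _ => by ring
      rw [this, hu1]; simp
  have hp1 := hz.2 _ (hmem ε (abs_of_pos hε))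
  have hp2 := hz.2 _ (hmem (-ε) (by rw [abs_neg, abs_of_pos hε]))
  have hne : ∀ s : ℝ, s ≠ 0 → z + s • u ≠ z := fun s hs h => by
    have : s • u = 0 := by simpa using h
    exact (smul_ne_zero hs hu0) this
  obtain ⟨i, hi, hi'⟩ := hp1.resolve_left (hne _ hε.ne')
  obtain ⟨j, hj, hj'⟩ := hp2.resolve_left (hne _ (neg_ne_zero.2 hε.ne'))
  simp only [Pi.add_apply, Pi.smul_apply, smul_eq_mul, left_eq_add, lt_add_iff_pos_right]
    at hi hi' hj hj'
  rcases lt_trichotomy i j with h | h | h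
  · have := hj i h; nlinarith
  · subst h; nlinarith
  · have := hi j h; nlinarith

/-- By Helly's theorem, at most `d + 2` elements of `A` already determine an apex. -/
lemma IsApex.exists_local {A : Finset (Vec d)} {p z : Vec d} (hz : IsApex A p z) :
    ∃ D ⊆ A, D.card ≤ d + 2 ∧ ∀ A', D ⊆ A' → A' ⊆ A → IsApex A' p z := by
  classical
  let F : Option (Vec d) → Set (Vec d) := fun o =>
    match o with
    | none => {w | LexLt w z} ∩ {w | ∑ j, (SignType.sign (p j) : ℝ) * w j = 1}
    | some g => {w | WS (g ⬝ᵥ p) (g ⬝ᵥ w)}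
  have hconv : ∀ o ∈ Finset.insertNone A, Convex ℝ (F o) := by
    rintro (_ | g) _
    · refine (LexLt.convex z).inter ?_
      intro x hx y hy a b _ _ hab
      simp only [Set.mem_ofPred_eq] at hx hy ⊢
      have : ∑ j, (SignType.sign (p j) : ℝ) * (a • x + b • y) j =
          a * ∑ j, (SignType.sign (p j) : ℝ) * x j + b * ∑ j, (SignType.sign (p j) : ℝ) * y j := by
        rw [Finset.mul_sum, Finset.mul_sum, ← Finset.sum_add_distrib]
        exact Finset.sum_congr rfl fun j _ => by simp; ring
      rw [this, hx, hy]; linarith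
    · intro x hx y hy a b ha hb _
      simp only [F, Set.mem_ofPred_eq, dotProduct_add, dotProduct_smul, smul_eq_mul] at hx hy ⊢
      exact (hx.smul ha).add (hy.smul hb)
  have hempty : ¬ (⋂ o ∈ Finset.insertNone A, F o).Nonempty := by
    rintro ⟨w, hw⟩
    simp only [Set.mem_iInter] at hw
    have h0 := hw none (by simp)
    have hwS : w ∈ Slice A p := ⟨fun g hg => hw (some g) (by simpa using hg), h0.2⟩
    rcases hz.2 w hwS with h | h
    · rw [h] at h0; exact LexLt.irrefl h0.1
    · exact LexLt.asymm h h0.1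
  have := mt (Convex.helly_theorem' (𝕜 := ℝ) hconv) hempty
  push Not at this
  obtain ⟨I, hI, hcard, hIe⟩ := this
  refine ⟨Finset.eraseNone I, fun g hg => ?_, ?_, fun A' hD hA' => ?_⟩
  · exact Finset.mem_insertNone.1 (hI (Finset.mem_eraseNone.1 hg)) g rfl
  · exact (Finset.card_eraseNone_le I).trans (hcard.trans (by simp))
  · refine ⟨⟨fun g hg => hz.1.1 g (hA' hg), hz.1.2⟩, fun w hw => ?_⟩
    rcases LexLt.total w z with h | h | h
    · exact Or.inl h
    · exfalso
      refine Set.notMem_empty w (hIe ▸ ?_)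
      simp only [Set.mem_iInter]
      rintro (_ | g) hg
      · exact ⟨h, hw.2⟩
      · exact hw.1 g (hD (by simpa using hg))
    · exact Or.inr h

end Hop

namespace Hop
variable {d : ℕ}

/-! ### Simplicial decomposition of arrangement cells -/

/-- One step of the decomposition: move from `p` away from the apex `z` of its cell until some
`g ∈ A` becomes tight, reaching `p'`. -/
def StepR (A : Finset (Vec d)) (p z g p' : Vec d) : Prop :=
  IsApex A p z ∧ g ∈ A ∧ g ⬝ᵥ z ≠ 0 ∧ (∃ t : ℝ, 0 < t ∧ p' = p - t • z) ∧ g ⬝ᵥ p' = 0 ∧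
    ∀ a ∈ A, WS (a ⬝ᵥ p) (a ⬝ᵥ p')

lemma exists_stepR {A : Finset (Vec d)} (hA : Units A) {p : Vec d} (hp : p ≠ 0) :
    ∃ z g p', StepR A p z g p' := by
  classical
  obtain ⟨z, hz⟩ := exists_isApex hA hp
  have hne : (A.filter fun g => g ⬝ᵥ z ≠ 0).Nonempty := by
    by_contra h
    rw [Finset.not_nonempty_iff_eq_empty, Finset.filter_eq_empty_iff] at h
    refine hz.ne_zero (funext fun j => ?_)
    simpa using h (hA j)
  obtain ⟨g, hg, hmin⟩ := Finset.exists_min_image _ (fun g => (g ⬝ᵥ p) / (g ⬝ᵥ z)) hne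
  obtain ⟨hgA, hgz⟩ := Finset.mem_filter.1 hg
  have hpos : ∀ a ∈ A, a ⬝ᵥ z ≠ 0 → 0 < (a ⬝ᵥ p) / (a ⬝ᵥ z) := fun a ha haz => by
    have h := (hz.1.1 a ha).sign_eq haz
    rcases lt_or_gt_of_ne haz with h1 | h1
    · rw [sign_neg h1, sign_eq_neg_one_iff] at h
      exact div_pos_of_neg_of_neg h h1
    · rw [sign_pos h1, sign_eq_one_iff] at h
      exact div_pos h h1
  refine ⟨z, g, p - ((g ⬝ᵥ p) / (g ⬝ᵥ z)) • z, hz, hgA, hgz, ⟨_, hpos g hgA hgz, rfl⟩, ?_, ?_⟩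
  · rw [dotProduct_sub, dotProduct_smul, smul_eq_mul, div_mul_cancel₀ _ hgz, sub_self]
  · intro a ha
    rw [dotProduct_sub, dotProduct_smul, smul_eq_mul]
    by_cases haz : a ⬝ᵥ z = 0
    · rw [haz, mul_zero, sub_zero]; exact WS.refl _
    · have h1 := hmin a (by simp [ha, haz])
      have h2 := (hz.1.1 a ha).sign_eq haz
      refine ⟨fun h => ?_, fun h => ?_, fun h => ?_⟩
      · have := hpos a ha haz
        rw [h] at this; simp at this
      · rw [sign_pos h] at h2
        have h3 : 0 < a ⬝ᵥ z := sign_eq_one_iff.1 h2.symm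
        rw [le_div_iff₀ h3] at h1
        linarith
      · rw [sign_neg h] at h2
        have h3 : a ⬝ᵥ z < 0 := sign_eq_neg_one_iff.1 h2.symm
        rw [le_div_iff_of_neg h3] at h1
        linarith

/-- A chain of `d + 1` steps from `q 0` to `q (d + 1)` (which is necessarily `0`), with apexes `z`
and blocking elements `g`. -/
structure Chain (A : Finset (Vec d)) (q : ℕ → Vec d) (z g : ℕ → Vec d) : Prop where
  step : ∀ i < d + 1, StepR A (q i) (z i) (g i) (q (i + 1))

namespace Chain
variable {A : Finset (Vec d)} {q z g : ℕ → Vec d}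

lemma ws_q (h : Chain A q z g) {a : Vec d} (ha : a ∈ A) {i j : ℕ} (hij : i ≤ j) (hj : j ≤ d + 1) :
    WS (a ⬝ᵥ q i) (a ⬝ᵥ q j) := by
  induction j, hij using Nat.le_induction with
  | base => exact WS.refl _
  | succ j hij ih => exact (ih (by omega)).trans ((h.step j (by omega)).2.2.2.2.2 a ha)

lemma ws_z (h : Chain A q z g) {a : Vec d} (ha : a ∈ A) {i j : ℕ} (hij : i ≤ j) (hj : j < d + 1) :
    WS (a ⬝ᵥ q i) (a ⬝ᵥ z j) :=
  (h.ws_q ha hij hj.le).trans ((h.step j hj).1.1.1 a ha)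

lemma g_mem (h : Chain A q z g) {i : ℕ} (hi : i < d + 1) : g i ∈ A := (h.step i hi).2.1

lemma g_z_ne (h : Chain A q z g) {i : ℕ} (hi : i < d + 1) : g i ⬝ᵥ z i ≠ 0 := (h.step i hi).2.2.1

lemma g_q (h : Chain A q z g) {i j : ℕ} (hij : i < j) (hj : j ≤ d + 1) : g i ⬝ᵥ q j = 0 :=
  (h.ws_q (h.g_mem (by omega)) hij hj).1 ((h.step i (by omega)).2.2.2.2.1)

lemma g_z (h : Chain A q z g) {i j : ℕ} (hij : i < j) (hj : j < d + 1) : g i ⬝ᵥ z j = 0 :=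
  (h.ws_z (h.g_mem (by omega)) hij hj).1 ((h.step i (by omega)).2.2.2.2.1)

/-- A linear relation among the `z i` is trivial (triangularity against the `g i`). -/
lemma z_indep (h : Chain A q z g) : LinearIndependent ℝ fun i : Fin (d + 1) => z i := by
  rw [Fintype.linearIndependent_iff]
  intro c hc
  by_contra hne
  push Not at hne
  have hne' : (Finset.univ.filter fun i => c i ≠ 0).Nonempty := by
    obtain ⟨i, hi⟩ := hne; exact ⟨i, by simpa using hi⟩
  obtain ⟨i, hi, hmin⟩ := Finset.exists_min_image _ id hne'
  have h1 : g i ⬝ᵥ ∑ l, c l • z l = c i * (g i ⬝ᵥ z i) := by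
    rw [dotProduct_sum, Finset.sum_eq_single i]
    · rw [dotProduct_smul, smul_eq_mul]
    · intro l _ hli
      rw [dotProduct_smul, smul_eq_mul]
      rcases lt_or_gt_of_ne hli with hl | hl
      · have : c l = 0 := by
          by_contra hcl
          exact absurd (hmin l (by simpa using hcl)) (not_le.2 hl)
        rw [this, zero_mul]
      · rw [h.g_z hl l.2, mul_zero]
    · simp
  rw [hc, dotProduct_zero] at h1
  rcases mul_eq_zero.1 h1.symm with h2 | h2
  · simp [h2] at hi
  · exact h.g_z_ne i.2 h2

lemma g_indep (h : Chain A q z g) : LinearIndependent ℝ fun i : Fin (d + 1) => g i := by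
  rw [Fintype.linearIndependent_iff]
  intro c hc
  by_contra hne
  push Not at hne
  have hne' : (Finset.univ.filter fun i => c i ≠ 0).Nonempty := by
    obtain ⟨i, hi⟩ := hne; exact ⟨i, by simpa using hi⟩
  obtain ⟨i, hi, hmax⟩ := Finset.exists_max_image _ id hne'
  have h1 : (∑ l, c l • g l) ⬝ᵥ z i = c i * (g i ⬝ᵥ z i) := by
    rw [sum_dotProduct, Finset.sum_eq_single i]
    · rw [smul_dotProduct, smul_eq_mul]
    · intro l _ hli
      rw [smul_dotProduct, smul_eq_mul]
      rcases lt_or_gt_of_ne hli with hl | hl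
      · rw [h.g_z hl i.2, mul_zero]
      · have : c l = 0 := by
          by_contra hcl
          exact absurd (hmax l (by simpa using hcl)) (not_le.2 hl)
        rw [this, zero_mul]
    · simp
  rw [hc, zero_dotProduct] at h1
  rcases mul_eq_zero.1 h1.symm with h2 | h2
  · simp [h2] at hi
  · exact h.g_z_ne i.2 h2

/-- Elements of `A` vanishing at `q (i + 1)` are combinations of `g 0, …, g i`. -/
lemma exists_coeff (h : Chain A q z g) {a : Vec d} (ha : a ∈ A) {i : ℕ}
    (h0 : a ⬝ᵥ q (i + 1) = 0) :
    ∃ c : Fin (d + 1) → ℝ, a = ∑ l, c l • g l ∧ ∀ l : Fin (d + 1), i < l → c l = 0 := by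
  let b := basisOfLinearIndependentOfCardEqFinrank h.g_indep (by simp)
  refine ⟨fun l => b.repr a l, ?_, ?_⟩
  · conv_lhs => rw [← b.sum_repr a]
    simp [b]
  · by_contra hne
    push Not at hne
    have hne' : (Finset.univ.filter fun l : Fin (d + 1) => i < l ∧ b.repr a l ≠ 0).Nonempty := by
      obtain ⟨l, hl⟩ := hne; exact ⟨l, by simpa using hl⟩
    obtain ⟨m, hm, hmax⟩ := Finset.exists_max_image _ id hne'
    simp only [Finset.mem_filter, Finset.mem_univ, true_and] at hm
    have h1 : a ⬝ᵥ z m = b.repr a m * (g m ⬝ᵥ z m) := by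
      conv_lhs => rw [← b.sum_repr a]
      rw [sum_dotProduct, Finset.sum_eq_single m]
      · rw [smul_dotProduct, smul_eq_mul]; simp [b]
      · intro l _ hli
        rw [smul_dotProduct, smul_eq_mul]
        rcases lt_or_gt_of_ne hli with hl | hl
        · have : b l = g l := by simp [b]
          rw [this, h.g_z hl m.2, mul_zero]
        · have : b.repr a l = 0 := by
            by_contra hcl
            exact absurd (hmax l (by simp; exact ⟨hm.1.trans hl, hcl⟩)) (not_le.2 hl)
          rw [this, zero_mul]
      · simp
    rw [(h.ws_z ha (show i + 1 ≤ m by omega) m.2).1 h0] at h1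
    rcases mul_eq_zero.1 h1.symm with h2 | h2
    · exact hm.2 h2
    · exact h.g_z_ne m.2 h2

lemma q_ne (h : Chain A q z g) {i : ℕ} (hi : i < d + 1) : q i ≠ 0 := by
  intro h0
  have := (h.step i hi).1.1.2
  rw [h0] at this; simp at this

/-- The chain is determined by `g 0, …, g (d - 1)` and `d + 1` signs: the signs of `q i` on `A`
are recovered by downward induction on `i`. -/
lemma unique (hA : Units A) {q' z' g' : ℕ → Vec d} (h : Chain A q z g) (h' : Chain A q' z' g')
    (hg : ∀ i < d, g i = g' i)
    (hs : ∀ i < d, SignType.sign (g i ⬝ᵥ q i) = SignType.sign (g i ⬝ᵥ q' i))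
    (hl : SignType.sign (cr (fun i : Fin d => g i) ⬝ᵥ q d) =
      SignType.sign (cr (fun i : Fin d => g i) ⬝ᵥ q' d)) :
    ∀ i < d + 1, z i = z' i := by
  have key : ∀ j ≤ d, ∀ a ∈ A,
      SignType.sign (a ⬝ᵥ q (d - j)) = SignType.sign (a ⬝ᵥ q' (d - j)) := by
    intro j
    induction j with
    | zero =>
      intro _ a _
      have hli : LinearIndependent ℝ fun i : Fin d => g i :=
        h.g_indep.comp Fin.castSucc (Fin.castSucc_injective d)
      obtain ⟨t, ht⟩ := cr_parallel hli (z := q d) fun i => h.g_q i.2 (by omega)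
      obtain ⟨t', ht'⟩ := cr_parallel hli (z := q' d) fun i => by
        rw [hg i i.2]; exact h'.g_q i.2 (by omega)
      have hpos : 0 < cr (fun i : Fin d => g i) ⬝ᵥ cr (fun i : Fin d => g i) := by
        refine lt_of_le_of_ne (Finset.sum_nonneg fun _ _ => mul_self_nonneg _) fun h0 => ?_
        exact cr_ne_zero hli (dotProduct_self_eq_zero.1 h0.symm)
      rw [ht, ht', dotProduct_smul, dotProduct_smul, smul_eq_mul, smul_eq_mul, sign_mul, sign_mul,
        sign_pos hpos, mul_one, mul_one] at hl
      rw [Nat.sub_zero, ht, ht', dotProduct_smul, dotProduct_smul, smul_eq_mul, smul_eq_mul,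
        sign_mul, sign_mul, hl]
    | succ j ih =>
      intro hj a ha
      have ih := ih (by omega) a ha
      obtain ⟨i, hi⟩ : ∃ i, d - (j + 1) = i := ⟨_, rfl⟩
      have hi' : d - j = i + 1 := by omega
      rw [hi] ; rw [hi'] at ih
      by_cases h0 : a ⬝ᵥ q (i + 1) = 0
      · obtain ⟨c, hc, hc0⟩ := h.exists_coeff ha h0
        have hcalc : ∀ (Q : ℕ → Vec d), (∀ l < i, g l ⬝ᵥ Q i = 0) →
            a ⬝ᵥ Q i = c ⟨i, by omega⟩ * (g i ⬝ᵥ Q i) := by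
          intro Q hQ
          rw [hc, sum_dotProduct, Finset.sum_eq_single ⟨i, by omega⟩]
          · rw [smul_dotProduct, smul_eq_mul]
          · intro l _ hli
            rw [smul_dotProduct, smul_eq_mul]
            rcases lt_or_gt_of_ne hli with hl | hl
            · rw [hQ l hl, mul_zero]
            · rw [hc0 l hl, zero_mul]
          · simp
        rw [hcalc q fun l hl => h.g_q hl (by omega), hcalc q' fun l hl => by
          rw [hg l (by omega)]; exact h'.g_q hl (by omega), sign_mul, sign_mul, hs i (by omega)]
      · have h0' : a ⬝ᵥ q' (i + 1) ≠ 0 := fun h1 => by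
          rw [h1, sign_zero, sign_eq_zero_iff] at ih; exact h0 ih
        rw [(h.ws_q ha (Nat.le_succ i) (by omega)).sign_eq h0,
          (h'.ws_q ha (Nat.le_succ i) (by omega)).sign_eq h0', ih]
  intro i hi
  refine IsApex.unique hA (fun a ha => ?_) (h.step i hi).1 (h'.step i hi).1
  have := key (d - i) (by omega) a ha
  rwa [show d - (d - i) = i by omega] at this

lemma last (h : Chain A q z g) : q (d + 1) = 0 := by
  let b := basisOfLinearIndependentOfCardEqFinrank h.g_indep (by simp)
  rw [← dotProduct_self_eq_zero]
  conv_lhs => enter [1]; rw [← b.sum_repr (q (d + 1))]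
  rw [sum_dotProduct]
  refine Finset.sum_eq_zero fun l _ => ?_
  have : b l = g l := by simp [b]
  rw [smul_dotProduct, this, h.g_q l.2 le_rfl, smul_zero]

lemma exists_combo (h : Chain A q z g) :
    ∃ t : Fin (d + 1) → ℝ, (∀ i, 0 ≤ t i) ∧ q 0 = ∑ i, t i • z i := by
  have hstep : ∀ i : Fin (d + 1), ∃ t : ℝ, 0 < t ∧ q (i + 1) = q i - t • z i :=
    fun i => (h.step i i.2).2.2.2.1
  choose t ht ht' using hstep
  refine ⟨t, fun i => (ht i).le, ?_⟩
  have h1 : ∑ i : Fin (d + 1), t i • z i = ∑ i : Fin (d + 1), (q i - q (i + 1)) :=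
    Finset.sum_congr rfl fun i _ => by rw [ht' i]; abel
  rw [h1, Fin.sum_univ_eq_sum_range (fun i => q i - q (i + 1)), Finset.sum_range_sub', h.last,
    sub_zero]

/-- A chain uses only `(d + 1)(d + 3)` elements of `A`. -/
lemma exists_local (h : Chain A q z g) : ∃ D ⊆ A, D.card ≤ (d + 1) * (d + 3) ∧
    ∀ A', D ⊆ A' → A' ⊆ A → Chain A' q z g := by
  classical
  have hD : ∀ i : Fin (d + 1), ∃ D ⊆ A, D.card ≤ d + 2 ∧
    ∀ A', D ⊆ A' → A' ⊆ A → IsApex A' (q i) (z i) := fun i => (h.step i i.2).1.exists_local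
  choose D hDA hDc hD' using hD
  refine ⟨Finset.univ.biUnion fun i : Fin (d + 1) => insert (g i) (D i), ?_, ?_,
    fun A' hA' hA => ⟨fun i hi => ?_⟩⟩
  · intro a ha
    simp only [Finset.mem_biUnion, Finset.mem_univ, true_and, Finset.mem_insert] at ha
    obtain ⟨i, rfl | hi⟩ := ha
    · exact h.g_mem i.2
    · exact hDA i hi
  · refine (Finset.card_biUnion_le_card_mul _ _ (d + 3) fun i _ => ?_).trans (by simp)
    exact (Finset.card_insert_le _ _).trans (by have := hDc i; omega)
  · have hsub : insert (g i) (D ⟨i, hi⟩) ⊆ A' := (Finset.subset_biUnion_of_mem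
      (fun i : Fin (d + 1) => insert (g i) (D i)) (Finset.mem_univ ⟨i, hi⟩)).trans hA'
    obtain ⟨_, _, h3, h4, h5, h6⟩ := h.step i hi
    exact ⟨hD' ⟨i, hi⟩ A' ((Finset.subset_insert _ _).trans hsub) hA,
      hsub (Finset.mem_insert_self _ _), h3, h4, h5, fun a ha => h6 a (hA ha)⟩

end Chain

/-- `p` avoids all subspaces spanned by at most `d` vertices of the arrangement `A`. -/
def Generic (A : Finset (Vec d)) (p : Vec d) : Prop :=
  ∀ n ≤ d, ∀ e : Fin n → Fin d → A,
    p ∉ Submodule.span ℝ (Set.range fun i => cr fun l => (e i l : Vec d))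

lemma Generic.mono {A B : Finset (Vec d)} {p : Vec d} (h : Generic B p) (hAB : A ⊆ B) :
    Generic A p := fun n hn e => h n hn fun i l => ⟨e i l, hAB (e i l).2⟩

lemma Generic.exists_chain {A : Finset (Vec d)} (hA : Units A) {p : Vec d} (hp : Generic A p) :
    ∃ q z g, Chain A q z g ∧ q 0 = p := by
  have key : ∀ n ≤ d + 1, ∃ q z g : ℕ → Vec d, q 0 = p ∧
      ∀ i < n, StepR A (q i) (z i) (g i) (q (i + 1)) := by
    intro n
    induction n with
    | zero => intro _; exact ⟨fun _ => p, fun _ => p, fun _ => p, rfl, by simp⟩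
    | succ n ih =>
      intro hn
      obtain ⟨q, z, g, h0, hq⟩ := ih (by omega)
      have hne : q n ≠ 0 := by
        intro hqn
        have hz : ∀ i : Fin n, ∃ e : Fin d → A, ∃ a : ℝ, z i = a • cr fun l => (e l : Vec d) := by
          intro i
          obtain ⟨c, hcA, hci, hcz⟩ := (hq i i.2).1.tight
          obtain ⟨a, ha⟩ := cr_parallel hci hcz
          exact ⟨fun l => ⟨c l, hcA l⟩, a, ha⟩
        choose e a ha using hz
        refine hp n (by omega) e ?_
        have hm : ∀ i ≤ n, p - q i ∈
            Submodule.span ℝ (Set.range fun i => cr fun l => (e i l : Vec d)) := by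
          intro i
          induction i with
          | zero => intro _; simp [h0]
          | succ i ih' =>
            intro hi
            obtain ⟨t, _, ht⟩ := (hq i (by omega)).2.2.2.1
            have : p - q (i + 1) = (p - q i) + t • z i := by rw [ht]; abel
            rw [this]
            refine Submodule.add_mem _ (ih' (by omega)) (Submodule.smul_mem _ _ ?_)
            have := ha ⟨i, by omega⟩
            simp only at this
            rw [this]
            exact Submodule.smul_mem _ _ (Submodule.subset_span ⟨⟨i, by omega⟩, rfl⟩)
        simpa [hqn] using hm n le_rfl
      obtain ⟨z', g', p', hst⟩ := exists_stepR hA hne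
      refine ⟨Function.update q (n + 1) p', Function.update z n z', Function.update g n g', ?_, ?_⟩
      · rw [Function.update_of_ne (by omega), h0]
      · intro i hi
        rcases (Nat.lt_succ_iff.1 hi).eq_or_lt with h | h
        · subst h
          rw [Function.update_of_ne (by omega), Function.update_self, Function.update_self,
            Function.update_self]
          exact hst
        · rw [Function.update_of_ne (by omega), Function.update_of_ne (by omega),
            Function.update_of_ne (by omega), Function.update_of_ne (by omega)]
          exact hq i h
  obtain ⟨q, z, g, h0, hq⟩ := key (d + 1) le_rfl
  exact ⟨q, z, g, ⟨hq⟩, h0⟩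

/-- Generic points are dense, so a closed set containing all of them is everything. -/
lemma mem_of_generic (A : Finset (Vec d)) {F : Set (Vec d)} (hF : IsClosed F)
    (h : ∀ p, Generic A p → p ∈ F) (y : Vec d) : y ∈ F := by
  by_contra hy
  have hU : 0 < MeasureTheory.volume Fᶜ := hF.isOpen_compl.measure_pos _ ⟨y, hy⟩
  have h0 : MeasureTheory.volume (⋃ (n : Fin (d + 1)) (e : Fin n → Fin d → A),
      (Submodule.span ℝ (Set.range fun i => cr fun l => (e i l : Vec d)) : Set (Vec d))) = 0 := by
    refine MeasureTheory.measure_iUnion_null fun n => MeasureTheory.measure_iUnion_null fun e => ?_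
    refine MeasureTheory.Measure.addHaar_submodule _ _ fun htop => ?_
    have h1 := finrank_range_le_card (R := ℝ) (fun i => cr fun l => (e i l : Vec d))
    rw [Set.finrank, htop, finrank_top] at h1
    have := n.2
    simp at h1
    omega
  refine hU.ne' (MeasureTheory.measure_mono_null (fun p hp => ?_) h0)
  by_contra hne
  simp only [Set.mem_iUnion, not_exists] at hne
  exact hp (h p fun n hn e => hne ⟨n, by omega⟩ e)

/-- The simplicial cones of the decomposition of the arrangement `A`, given by their vertices. -/
def Cells (A : Finset (Vec d)) : Set (Fin (d + 1) → Vec d) :=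
  {w | ∃ q z g, Chain A q z g ∧ w = fun i : Fin (d + 1) => z i}

lemma Cells.card_le {A : Finset (Vec d)} (hA : Units A) :
    (Cells A).Finite ∧ (Cells A).ncard ≤ A.card ^ d * 3 ^ (d + 1) := by
  classical
  have hch : ∀ w : Cells A, ∃ q z g, Chain A q z g ∧ 
      (w : Fin (d + 1) → Vec d) = fun i : Fin (d + 1) => z i :=
    fun w => w.2
  choose q z g hc hw using hch
  let f : Cells A → (Fin d → A) × (Fin (d + 1) → SignType) := fun w =>
    (fun i => ⟨g w i, (hc w).g_mem (by omega)⟩, fun i => if (i : ℕ) < d then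
      SignType.sign (g w i ⬝ᵥ q w i) else SignType.sign (cr (fun i : Fin d => g w i) ⬝ᵥ q w d))
  have hf : Function.Injective f := by
    intro w w' hww
    have h1 : ∀ i < d, g w i = g w' i := fun i hi => by
      exact congrArg Subtype.val (congrFun (congrArg Prod.fst hww) ⟨i, hi⟩)
    have h1' : (fun i : Fin d => g w i) = fun i : Fin d => g w' i := funext fun i => h1 i i.2
    have h2 : ∀ i < d, SignType.sign (g w i ⬝ᵥ q w i) = SignType.sign (g w i ⬝ᵥ q w' i) := by
      intro i hi
      have := congrFun (congrArg Prod.snd hww) ⟨i, by omega⟩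
      simp only [f, hi, if_true] at this
      rw [this, h1 i hi]
    have h3 : SignType.sign (cr (fun i : Fin d => g w i) ⬝ᵥ q w d) =
        SignType.sign (cr (fun i : Fin d => g w i) ⬝ᵥ q w' d) := by
      have := congrFun (congrArg Prod.snd hww) ⟨d, by omega⟩
      simp only [f, lt_irrefl, if_false] at this
      rw [this, h1']
    apply Subtype.ext
    rw [hw w, hw w']
    exact funext fun i => (hc w).unique hA (hc w') h1 h2 h3 i i.2
  have hfin : Finite (Cells A) := Finite.of_injective f hf
  refine ⟨hfin, ?_⟩
  have := Nat.card_le_card_of_injective f hf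
  rw [Nat.card_coe_set_eq] at this
  refine this.trans (le_of_eq ?_)
  rw [Nat.card_prod, Nat.card_fun, Nat.card_fun]
  simp
  norm_num [show Fintype.card SignType = 3 from rfl]

/-- The closed cone spanned by `z`. -/
def InCone (z : Fin (d + 1) → Vec d) (y : Vec d) : Prop :=
  ∃ t : Fin (d + 1) → ℝ, (∀ i, 0 ≤ t i) ∧ y = ∑ i, t i • z i

/-- The hyperplane normal to `v` crosses the interior of the cone spanned by `z`. -/
def Conflict (z : Fin (d + 1) → Vec d) (v : Vec d) : Prop :=
  (∃ i, z i ⬝ᵥ v < 0) ∧ ∃ i, 0 < z i ⬝ᵥ v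

lemma Cells.not_conflict {A : Finset (Vec d)} {w : Fin (d + 1) → Vec d} (hw : w ∈ Cells A)
    {a : Vec d} (ha : a ∈ A) : ¬ Conflict w a := by
  obtain ⟨q, z, g, h, rfl⟩ := hw
  rintro ⟨⟨i, hi⟩, ⟨j, hj⟩⟩
  simp only [dotProduct_comm _ a] at hi hj
  obtain ⟨h1, h2, _⟩ := h.ws_z ha (Nat.zero_le i) i.2
  obtain ⟨h1', _, h3'⟩ := h.ws_z ha (Nat.zero_le j) j.2
  rcases lt_trichotomy (a ⬝ᵥ q 0) 0 with h | h | h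
  · linarith [h3' h]
  · linarith [h1 h]
  · linarith [h2 h]

lemma Cells.linearIndependent {A : Finset (Vec d)} {w : Fin (d + 1) → Vec d} (hw : w ∈ Cells A) :
    LinearIndependent ℝ w := by
  obtain ⟨q, z, g, h, rfl⟩ := hw
  exact h.z_indep

lemma Cells.vertex {A : Finset (Vec d)} {w : Fin (d + 1) → Vec d} (hw : w ∈ Cells A)
    (i : Fin (d + 1)) : ∃ c : Fin d → Vec d, (∀ l, c l ∈ A) ∧ ∃ a : ℝ, w i = a • cr c := by
  obtain ⟨q, z, g, h, rfl⟩ := hw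
  obtain ⟨c, hcA, hci, hcz⟩ := (h.step i i.2).1.tight
  obtain ⟨a, ha⟩ := cr_parallel hci hcz
  exact ⟨c, hcA, a, ha⟩

lemma Cells.exists_local {A : Finset (Vec d)} {w : Fin (d + 1) → Vec d} (hw : w ∈ Cells A) :
    ∃ D ⊆ A, D.card ≤ (d + 1) * (d + 3) ∧ ∀ A', D ⊆ A' → A' ⊆ A → w ∈ Cells A' := by
  obtain ⟨q, z, g, h, rfl⟩ := hw
  obtain ⟨D, h1, h2, h3⟩ := h.exists_local
  exact ⟨D, h1, h2, fun A' h4 h5 => ⟨q, z, g, h3 A' h4 h5, rfl⟩⟩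

lemma Generic.exists_cell {A : Finset (Vec d)} (hA : Units A) {p : Vec d} (hp : Generic A p) :
    ∃ w ∈ Cells A, InCone w p := by
  obtain ⟨q, z, g, h, rfl⟩ := hp.exists_chain hA
  obtain ⟨t, ht, ht'⟩ := h.exists_combo
  exact ⟨_, ⟨q, z, g, h, rfl⟩, t, ht, ht'⟩

/-- The facet normal opposite to the `i`-th vertex of the cone spanned by `z`. -/
def facet {R : Type} [CommRing R] (z : Fin (d + 1) → Fin (d + 1) → R) (i : Fin (d + 1)) :
    Fin (d + 1) → R := cr fun l => z (i.succAbove l)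

lemma facet_dot_ne {R : Type} [CommRing R] (z : Fin (d + 1) → Fin (d + 1) → R)
    {i j : Fin (d + 1)} (h : j ≠ i) : facet z i ⬝ᵥ z j = 0 := by
  obtain ⟨l, rfl⟩ := Fin.exists_succAbove_eq h
  rw [dotProduct_comm]
  exact dot_cr_self (fun l => z (i.succAbove l)) l

lemma facet_dot_combo {R : Type} [CommRing R] (z : Fin (d + 1) → Fin (d + 1) → R)
    (t : Fin (d + 1) → R) (i : Fin (d + 1)) :
    facet z i ⬝ᵥ ∑ j, t j • z j = t i * (facet z i ⬝ᵥ z i) := by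
  rw [dotProduct_sum, Finset.sum_eq_single i]
  · rw [dotProduct_smul, smul_eq_mul]
  · intro j _ hj
    rw [dotProduct_smul, facet_dot_ne z hj, smul_zero]
  · simp

lemma facet_dot_self_ne_zero {z : Fin (d + 1) → Vec d} (hz : LinearIndependent ℝ z)
    (i : Fin (d + 1)) : facet z i ⬝ᵥ z i ≠ 0 := by
  intro h
  refine cr_ne_zero (hz.comp i.succAbove Fin.succAbove_right_injective) ?_
  change facet z i = 0
  let b := basisOfLinearIndependentOfCardEqFinrank hz (by simp)
  rw [← dotProduct_self_eq_zero]
  conv_lhs => enter [2]; rw [← b.sum_repr (facet z i)]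
  rw [dotProduct_sum]
  refine Finset.sum_eq_zero fun l _ => ?_
  have : b l = z l := by simp [b]
  rw [dotProduct_smul, this]
  by_cases hl : l = i
  · rw [hl, h, smul_zero]
  · rw [facet_dot_ne z hl, smul_zero]

lemma linearIndependent_of_facet {z : Fin (d + 1) → Vec d} (hz : ∀ i, facet z i ⬝ᵥ z i ≠ 0) :
    LinearIndependent ℝ z := by
  rw [Fintype.linearIndependent_iff]
  intro c hc i
  have := facet_dot_combo z c i
  rw [hc, dotProduct_zero] at this
  exact (mul_eq_zero.1 this.symm).resolve_right (hz i)

/-- Every vector is a combination of the vertices of a nondegenerate cone. -/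
lemma exists_combo_of_facet {z : Fin (d + 1) → Vec d} (hz : ∀ i, facet z i ⬝ᵥ z i ≠ 0) (y : Vec d) :
    ∃ t : Fin (d + 1) → ℝ, y = ∑ i, t i • z i := by
  let b := basisOfLinearIndependentOfCardEqFinrank (linearIndependent_of_facet hz) (by simp)
  refine ⟨fun i => b.repr y i, ?_⟩
  conv_lhs => rw [← b.sum_repr y]
  simp [b]

lemma inCone_iff {z : Fin (d + 1) → Vec d} (hz : LinearIndependent ℝ z) (y : Vec d) :
    InCone z y ↔ ∀ i, 0 ≤ (facet z i ⬝ᵥ y) * (facet z i ⬝ᵥ z i) := by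
  have hf := facet_dot_self_ne_zero hz
  constructor
  · rintro ⟨t, ht, rfl⟩ i
    rw [facet_dot_combo, mul_assoc]
    exact mul_nonneg (ht i) (mul_self_nonneg _)
  · intro h
    obtain ⟨t, rfl⟩ := exists_combo_of_facet hf y
    refine ⟨t, fun i => ?_, rfl⟩
    have := h i
    rw [facet_dot_combo, mul_assoc] at this
    exact nonneg_of_mul_nonneg_left this (mul_self_pos.2 (hf i))

lemma isClosed_inCone {z : Fin (d + 1) → Vec d} (hz : LinearIndependent ℝ z) :
    IsClosed {y | InCone z y} := by
  simp only [inCone_iff hz]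
  have : {y : Vec d | ∀ i, 0 ≤ (facet z i ⬝ᵥ y) * (facet z i ⬝ᵥ z i)} =
      ⋂ i, {y | 0 ≤ (facet z i ⬝ᵥ y) * (facet z i ⬝ᵥ z i)} := by ext; simp
  rw [this]
  refine isClosed_iInter fun i => isClosed_le continuous_const ?_
  simp only [dotProduct]; fun_prop

end Hop

namespace Hop
open Finset

/-! ### Random sampling: cuttings from local cell systems -/

/-- The axioms of the Clarkson–Shor sampling framework. Every `S : Finset κ` has a finite set `T S`
of cells; `K τ` is the set of elements of `κ` in conflict with the cell `τ`. -/
structure CS {κ Z : Type} (c k d b : ℕ) (T : Finset κ → Finset Z) (K : Z → Finset κ) : Prop where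
  card_le : ∀ S, (T S).card ≤ c * (S.card + k) ^ d
  disj : ∀ S, ∀ τ ∈ T S, Disjoint (K τ) S
  loc : ∀ S, ∀ τ ∈ T S, ∃ D ⊆ S, D.card ≤ b ∧ ∀ S', D ⊆ S' → S' ⊆ S → τ ∈ T S'

lemma choose_mul_pow_le (N r q : ℕ) : N.choose (r + q) * r ^ q ≤ N.choose r * N ^ q := by
  induction q with
  | zero => simp
  | succ q ih =>
    have h := Nat.choose_succ_right_eq N (r + q)
    calc N.choose (r + (q + 1)) * r ^ (q + 1)
        = N.choose (r + q + 1) * r * r ^ q := by rw [← add_assoc]; ring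
      _ ≤ N.choose (r + q + 1) * (r + q + 1) * r ^ q := by gcongr; omega
      _ = N.choose (r + q) * r ^ q * (N - (r + q)) := by rw [h]; ring
      _ ≤ N.choose r * N ^ q * N := Nat.mul_le_mul ih (Nat.sub_le _ _)
      _ = _ := by ring

lemma pow_le_mul_choose {n q : ℕ} (h : q ≤ n) : n ^ q ≤ q ^ q * q.factorial * n.choose q := by
  rcases q.eq_zero_or_pos with rfl | hq
  · simp
  have h1 : (n + 1 - q) ^ q ≤ q.factorial * n.choose q := by
    rw [← Nat.descFactorial_eq_factorial_mul_choose]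
    exact Nat.pow_sub_le_descFactorial n q
  have h2 : n ≤ q * (n + 1 - q) := by
    obtain ⟨e, rfl⟩ := Nat.exists_eq_add_of_le h
    rw [show q + e + 1 - q = e + 1 by omega]
    nlinarith
  calc n ^ q ≤ (q * (n + 1 - q)) ^ q := Nat.pow_le_pow_left h2 q
    _ = q ^ q * (n + 1 - q) ^ q := mul_pow _ _ _
    _ ≤ q ^ q * (q.factorial * n.choose q) := Nat.mul_le_mul_left _ h1
    _ = _ := by ring

lemma add_pow_le_two_pow (a b d : ℕ) : (a + b) ^ d ≤ 2 ^ d * (a ^ d + b ^ d) := by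
  rcases le_total a b with h | h
  · calc (a + b) ^ d ≤ (2 * b) ^ d := Nat.pow_le_pow_left (by omega) d
      _ = 2 ^ d * b ^ d := mul_pow _ _ _
      _ ≤ _ := by gcongr; omega
  · calc (a + b) ^ d ≤ (2 * a) ^ d := Nat.pow_le_pow_left (by omega) d
      _ = 2 ^ d * a ^ d := mul_pow _ _ _
      _ ≤ _ := by gcongr; omega

section
variable {κ Z : Type} [DecidableEq κ] [DecidableEq Z] {c k d b : ℕ} {T : Finset κ → Finset Z}
  {K : Z → Finset κ}

/-- Cells that have exactly `q` conflicts in `S'` and appear after removing them: they appear in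
a constant fraction of all subsets, so there are few of them. -/
lemma CS.few (h : CS c k d b T K) (q : ℕ) (S' : Finset κ) {r : ℕ} (hr : S'.card = r + q)
    (M : Finset Z) (hM : ∀ τ ∈ M, (K τ ∩ S').card = q ∧ τ ∈ T (S' \ K τ)) :
    M.card * 2 ^ r ≤ 2 ^ b * 2 ^ (r + q) * (c * (r + q + k) ^ d) := by
  have h1 : ∀ τ ∈ M, 2 ^ r ≤ 2 ^ b * (S'.powerset.filter fun U => τ ∈ T U).card := by
    intro τ hτ
    obtain ⟨hq, hT⟩ := hM τ hτ
    obtain ⟨D, hD, hDb, hD'⟩ := h.loc _ τ hT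
    have hc : (S' \ K τ).card = r := by
      have := card_sdiff_add_card_inter S' (K τ)
      rw [inter_comm, hq] at this; omega
    have hle : (Icc D (S' \ K τ)).card ≤ (S'.powerset.filter fun U => τ ∈ T U).card := by
      refine card_le_card fun U hU => ?_
      rw [Finset.mem_Icc] at hU
      simp only [mem_filter, mem_powerset]
      exact ⟨hU.2.trans sdiff_subset, hD' U hU.1 hU.2⟩
    rw [card_Icc_finset hD, hc] at hle
    calc 2 ^ r ≤ 2 ^ (b + (r - D.card)) := Nat.pow_le_pow_right (by norm_num) (by omega)
      _ = 2 ^ b * 2 ^ (r - D.card) := pow_add _ _ _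
      _ ≤ _ := by gcongr
  calc M.card * 2 ^ r = ∑ _τ ∈ M, 2 ^ r := by simp
    _ ≤ ∑ τ ∈ M, 2 ^ b * (S'.powerset.filter fun U => τ ∈ T U).card := sum_le_sum h1
    _ = 2 ^ b * ∑ τ ∈ M, ∑ U ∈ S'.powerset, (if τ ∈ T U then 1 else 0) := by
      rw [mul_sum]; simp only [card_filter]
    _ = 2 ^ b * ∑ U ∈ S'.powerset, ∑ τ ∈ M, (if τ ∈ T U then 1 else 0) := by rw [sum_comm]
    _ ≤ 2 ^ b * ∑ _U ∈ S'.powerset, (c * (r + q + k) ^ d) := by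
      gcongr with U hU
      rw [← card_filter]
      calc (M.filter fun τ => τ ∈ T U).card ≤ (T U).card :=
            card_le_card fun τ hτ => (mem_filter.1 hτ).2
        _ ≤ c * (U.card + k) ^ d := h.card_le U
        _ ≤ c * (r + q + k) ^ d := by
          have := card_le_card (mem_powerset.1 hU)
          gcongr; omega
    _ = _ := by simp [hr]; ring

/-- The constant of the moment bound. -/
def momC (c k d b q : ℕ) : ℕ := 2 ^ b * 2 ^ q * (c * (q + k + 1) ^ d)

lemma CS.moment (h : CS c k d b T K) (q : ℕ) (K0 : Finset κ) {r : ℕ} (hr : 1 ≤ r)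
    (hrK : r ≤ K0.card) :
    ∃ S ⊆ K0, S.card = r ∧
      (∑ τ ∈ T S, (K τ ∩ K0).card.choose q) * r ^ q ≤ momC c k d b q * r ^ d * K0.card ^ q := by
  by_contra hcon
  push Not at hcon
  -- pairs of an `r`-subset with a cell and `q` of its conflicts, versus the union set
  have hsum : ∑ S ∈ K0.powersetCard r, ∑ τ ∈ T S, (K τ ∩ K0).card.choose q ≤
      ∑ S' ∈ K0.powersetCard (r + q), momC c k d b q * r ^ d := by
    have e1 : ∀ S ∈ K0.powersetCard r, ∑ τ ∈ T S, (K τ ∩ K0).card.choose q =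
        ∑ τ ∈ T S, ((K τ ∩ K0).powersetCard q).card := fun S _ => by simp
    rw [sum_congr rfl e1]
    let Zs : Finset Z := (K0.powerset).biUnion T
    let Q : Finset κ → Finset Z := fun S' =>
      Zs.filter fun τ => (K τ ∩ S').card = q ∧ τ ∈ T (S' \ K τ)
    have e2 : ∑ S ∈ K0.powersetCard r, ∑ τ ∈ T S, ((K τ ∩ K0).powersetCard q).card =
        ((K0.powersetCard r).sigma fun S => (T S).sigma fun τ => (K τ ∩ K0).powersetCard q).card := by
      simp [card_sigma]
    have e3 : ((K0.powersetCard r).sigma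
        fun S => (T S).sigma fun τ => (K τ ∩ K0).powersetCard q).card ≤
        ((K0.powersetCard (r + q)).sigma Q).card := by
      refine card_le_card_of_injOn (fun x => ⟨x.1 ∪ x.2.2, x.2.1⟩) ?_ ?_
      · rintro ⟨S, τ, B⟩ hx
        simp only [coe_sigma, Set.mem_sigma_iff, mem_coe, mem_powersetCard, subset_inter_iff] at hx ⊢
        obtain ⟨⟨hS, hSr⟩, hτ, ⟨hB1, hB2⟩, hBq⟩ := hx
        have hdis := h.disj S τ hτ
        have hSB : Disjoint S B := (hdis.mono_left hB1).symm
        have i1 : K τ ∩ (S ∪ B) = B := by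
          rw [inter_union_distrib_left, disjoint_iff_inter_eq_empty.1 hdis, empty_union,
            inter_eq_right.2 hB1]
        have i2 : (S ∪ B) \ K τ = S := by
          rw [union_sdiff_distrib, sdiff_eq_self_of_disjoint hdis.symm,
            sdiff_eq_empty_iff_subset.2 hB1, union_empty]
        refine ⟨⟨union_subset hS hB2, by rw [card_union_of_disjoint hSB, hSr, hBq]⟩, ?_⟩
        simp only [Q, mem_filter, i1, i2, Zs, mem_biUnion, mem_powerset]
        exact ⟨⟨S, hS, hτ⟩, hBq, hτ⟩
      · rintro ⟨S, τ, B⟩ hx ⟨S2, τ2, B2⟩ hx2 heq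
        simp only [coe_sigma, Set.mem_sigma_iff, mem_coe, mem_powersetCard, subset_inter_iff]
          at hx hx2
        simp only [Sigma.mk.injEq, heq_eq_eq] at heq
        obtain ⟨h1, rfl⟩ := heq
        obtain ⟨⟨hS, hSr⟩, hτ, ⟨hB1, hB2⟩, hBq⟩ := hx
        obtain ⟨⟨_, _⟩, hτ2, ⟨hB12, _⟩, _⟩ := hx2
        have hdis := h.disj S τ hτ
        have hdis2 := h.disj S2 τ hτ2
        have i2 : (S ∪ B) \ K τ = S := by
          rw [union_sdiff_distrib, sdiff_eq_self_of_disjoint hdis.symm,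
            sdiff_eq_empty_iff_subset.2 hB1, union_empty]
        have i2' : (S2 ∪ B2) \ K τ = S2 := by
          rw [union_sdiff_distrib, sdiff_eq_self_of_disjoint hdis2.symm,
            sdiff_eq_empty_iff_subset.2 hB12, union_empty]
        have i1 : K τ ∩ (S ∪ B) = B := by
          rw [inter_union_distrib_left, disjoint_iff_inter_eq_empty.1 hdis, empty_union,
            inter_eq_right.2 hB1]
        have i1' : K τ ∩ (S2 ∪ B2) = B2 := by
          rw [inter_union_distrib_left, disjoint_iff_inter_eq_empty.1 hdis2, empty_union,
            inter_eq_right.2 hB12]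
        have hS2 : S = S2 := by rw [← i2, ← i2', h1]
        have hB' : B = B2 := by rw [← i1, ← i1', h1]
        subst hS2 hB'
        rfl
    rw [e2]
    refine e3.trans ?_
    rw [card_sigma]
    refine sum_le_sum fun S' hS' => ?_
    have hc := (mem_powersetCard.1 hS').2
    have := h.few q S' hc (Q S') fun τ hτ => (mem_filter.1 hτ).2
    have h2 : 0 < 2 ^ r := by positivity
    refine Nat.le_of_mul_le_mul_right (this.trans ?_) h2
    rw [momC]
    calc 2 ^ b * 2 ^ (r + q) * (c * (r + q + k) ^ d)
        ≤ 2 ^ b * 2 ^ (r + q) * (c * ((q + k + 1) * r) ^ d) := by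
          gcongr; nlinarith
      _ = _ := by rw [mul_pow, pow_add]; ring
  have hpos : 0 < K0.card.choose r := Nat.choose_pos hrK
  have hlt : ∑ S ∈ K0.powersetCard r, momC c k d b q * r ^ d * K0.card ^ q <
      ∑ S ∈ K0.powersetCard r, (∑ τ ∈ T S, (K τ ∩ K0).card.choose q) * r ^ q := by
    refine sum_lt_sum_of_nonempty ?_ fun S hS => ?_
    · rw [← card_pos, card_powersetCard]; exact hpos
    · obtain ⟨h1, h2⟩ := mem_powersetCard.1 hS
      exact hcon S h1 h2
  rw [sum_const, card_powersetCard, smul_eq_mul, ← sum_mul] at hlt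
  rw [sum_const, card_powersetCard, smul_eq_mul] at hsum
  have h3 := Nat.mul_le_mul_right (r ^ q) hsum
  have h4 := Nat.mul_le_mul_left (momC c k d b q * r ^ d) (choose_mul_pow_le K0.card r q)
  have := calc K0.card.choose r * (momC c k d b q * r ^ d * K0.card ^ q)
      < (∑ S ∈ K0.powersetCard r, ∑ τ ∈ T S, (K τ ∩ K0).card.choose q) * r ^ q := hlt
    _ ≤ _ := h3
    _ = momC c k d b q * r ^ d * (K0.card.choose (r + q) * r ^ q) := by ring
    _ ≤ _ := h4
    _ = K0.card.choose r * (momC c k d b q * r ^ d * K0.card ^ q) := by ring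
  exact lt_irrefl _ this

/-- Two-level sampling: a sample `S` of size about `r`, refined inside every heavy cell. -/
lemma CS.cutting (hd : 1 ≤ d) (c k b : ℕ) : ∃ C : ℕ, ∀ (κ Z : Type) [Fintype κ] [DecidableEq κ]
    [DecidableEq Z] (T : Finset κ → Finset Z) (K : Z → Finset κ), CS c k d b T K →
    ∀ r : ℕ, 1 ≤ r → ∃ (S : Finset κ) (f : Z → Finset κ),
      ∑ τ ∈ T S, (T (f τ)).card ≤ C * r ^ d ∧
      ∀ τ ∈ T S, ∀ τ' ∈ T (f τ), (K τ ∩ K τ').card * r ≤ Fintype.card κ := by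
  obtain ⟨q, hq⟩ : ∃ q, q = 2 * d := ⟨_, rfl⟩
  obtain ⟨C1, hC1⟩ : ∃ C1, C1 = momC c k d b q := ⟨_, rfl⟩
  obtain ⟨F, hF⟩ : ∃ F, F = q ^ q * q.factorial := ⟨_, rfl⟩
  obtain ⟨C5, hC5⟩ : ∃ C5, C5 = C1 * F + 1 := ⟨_, rfl⟩
  obtain ⟨C6, hC6⟩ : ∃ C6, C6 = c * (1 + k) ^ d := ⟨_, rfl⟩
  refine ⟨c * (q + k) ^ d * (c * k ^ d) +
    c * 2 ^ d * (C5 ^ d * (C6 + F * C1) + (1 + k) ^ d * C6), ?_⟩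
  intro κ Z _ _ _ T K h r hr
  obtain ⟨N, hN⟩ : ∃ N, N = Fintype.card κ := ⟨_, rfl⟩
  by_cases hNr : N ≤ q * r
  · refine ⟨univ, fun _ => ∅, ?_, ?_⟩
    · have h1 : ∀ τ ∈ T univ, (T ∅).card ≤ c * k ^ d := fun τ _ => by
        simpa using h.card_le ∅
      calc ∑ τ ∈ T univ, (T ∅).card ≤ (T univ).card * (c * k ^ d) := by
            rw [← smul_eq_mul]; exact sum_le_card_nsmul _ _ _ h1
        _ ≤ (c * (N + k) ^ d) * (c * k ^ d) := by
          gcongr; simpa [hN] using h.card_le univ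
        _ ≤ (c * ((q + k) * r) ^ d) * (c * k ^ d) := by gcongr; nlinarith
        _ = c * (q + k) ^ d * (c * k ^ d) * r ^ d := by rw [mul_pow]; ring
        _ ≤ _ := by gcongr; omega
    · intro τ hτ τ' _
      have : K τ = ∅ := by
        simpa using disjoint_iff_inter_eq_empty.1 (h.disj _ τ hτ)
      simp [this]
  push Not at hNr
  have hq1 : 1 ≤ q := by omega
  have hNpos : 0 < N := by omega
  have hrN : r ≤ N := by nlinarith
  obtain ⟨S, -, hSr, hS⟩ := h.moment q univ hr (by simpa [hN] using hrN)
  simp only [inter_univ, card_univ, ← hN, ← hC1] at hS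
  -- resampling inside one cell
  have hres : ∀ τ : Z, ∃ R : Finset κ,
      (T R).card * N ^ q ≤ c * (2 ^ d * (C5 ^ d * ((K τ).card * r) ^ q + (1 + k) ^ d * N ^ q)) ∧
      ∀ τ' ∈ T R, (K τ ∩ K τ').card * r ≤ N := by
    intro τ
    obtain ⟨m, hm⟩ : ∃ m, m = (K τ).card := ⟨_, rfl⟩
    obtain ⟨ρ, hρ⟩ : ∃ ρ, ρ = C5 * (m * r) ^ 2 / N ^ 2 + 1 := ⟨_, rfl⟩
    have hN2 : 0 < N ^ 2 := by positivity
    have hρ1 : C5 * (m * r) ^ 2 < ρ * N ^ 2 := by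
      rw [hρ, mul_comm _ (N ^ 2)]; exact Nat.lt_mul_div_succ _ hN2
    have hρ2 : ρ * N ^ 2 ≤ C5 * (m * r) ^ 2 + N ^ 2 := by
      rw [hρ, add_mul, one_mul]; exact Nat.add_le_add_right (Nat.div_mul_le_self _ _) _
    have hρ0 : 1 ≤ ρ := by rw [hρ]; exact Nat.le_add_left 1 _
    have hcount : ∀ R : Finset κ, R.card ≤ ρ →
        (T R).card * N ^ q ≤ c * (2 ^ d * (C5 ^ d * (m * r) ^ q + (1 + k) ^ d * N ^ q)) := by
      intro R hR
      calc (T R).card * N ^ q ≤ c * (ρ + k) ^ d * N ^ q := by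
            gcongr; exact (h.card_le R).trans (by gcongr)
        _ = c * ((ρ + k) * N ^ 2) ^ d := by rw [mul_pow, ← pow_mul, hq]; ring
        _ ≤ c * (C5 * (m * r) ^ 2 + (1 + k) * N ^ 2) ^ d := by gcongr; nlinarith
        _ ≤ c * (2 ^ d * ((C5 * (m * r) ^ 2) ^ d + ((1 + k) * N ^ 2) ^ d)) := by
          gcongr; exact add_pow_le_two_pow _ _ _
        _ = _ := by rw [mul_pow C5, mul_pow (1 + k), ← pow_mul, ← pow_mul, hq]
    by_cases hρm : ρ ≤ m
    · obtain ⟨R, hRK, hRc, hR⟩ := h.moment q (K τ) hρ0 (by omega)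
      refine ⟨R, by rw [← hm]; exact hcount R hRc.le, fun τ' hτ' => ?_⟩
      by_contra hx
      push Not at hx
      obtain ⟨x, hxe⟩ : ∃ x, x = (K τ ∩ K τ').card := ⟨_, rfl⟩
      rw [← hxe] at hx
      have hxq : q ≤ x := by
        by_contra hlt
        push Not at hlt
        have : x * r ≤ q * r := Nat.mul_le_mul_right r hlt.le
        omega
      have h1 : x.choose q * ρ ^ q ≤ C1 * ρ ^ d * m ^ q := by
        rw [hC1, hm]
        refine le_trans ?_ hR
        gcongr
        rw [hxe, inter_comm]
        exact single_le_sum (f := fun τ' => ((K τ' ∩ K τ).card).choose q)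
          (fun _ _ => Nat.zero_le _) hτ'
      have h2 := pow_le_mul_choose hxq
      rw [← hF] at h2
      have h3 : ρ ^ d * (N ^ 2 * ρ) ^ d ≤ ρ ^ d * (C1 * F * (m * r) ^ q) := by
        calc ρ ^ d * (N ^ 2 * ρ) ^ d = N ^ q * ρ ^ q := by
              rw [mul_pow, ← pow_mul, hq, two_mul, pow_add ρ]; ring
          _ ≤ (x * r) ^ q * ρ ^ q := by gcongr
          _ = x ^ q * r ^ q * ρ ^ q := by rw [mul_pow]
          _ ≤ F * x.choose q * r ^ q * ρ ^ q := by gcongr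
          _ = F * r ^ q * (x.choose q * ρ ^ q) := by ring
          _ ≤ F * r ^ q * (C1 * ρ ^ d * m ^ q) := by gcongr
          _ = _ := by rw [mul_pow]; ring
      have h4 := Nat.le_of_mul_le_mul_left h3 (by rw [hρ]; positivity)
      have h5 : (C5 * (m * r) ^ 2) ^ d < (N ^ 2 * ρ) ^ d :=
        Nat.pow_lt_pow_left (by rw [mul_comm (N ^ 2)]; exact hρ1) (by omega)
      rw [mul_pow, ← pow_mul, ← hq] at h5
      have h6 : C1 * F ≤ C5 ^ d := (show C1 * F ≤ C5 by omega).trans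
        (Nat.le_self_pow (by omega) C5)
      have := Nat.mul_le_mul_right ((m * r) ^ q) h6
      omega
    · push Not at hρm
      refine ⟨K τ, by rw [← hm]; exact hcount _ (by omega), fun τ' hτ' => ?_⟩
      have : K τ ∩ K τ' = ∅ := by
        rw [inter_comm]; exact disjoint_iff_inter_eq_empty.1 (h.disj _ τ' hτ')
      simp [this]
  choose f hf1 hf2 using hres
  refine ⟨S, f, ?_, fun τ _ τ' hτ' => by rw [← hN]; exact hf2 τ τ' hτ'⟩
  have hTS : (T S).card ≤ C6 * r ^ d := by
    refine (h.card_le S).trans ?_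
    rw [hSr, hC6, mul_assoc, ← mul_pow]
    gcongr; nlinarith
  have hsumq : ∑ τ ∈ T S, ((K τ).card * r) ^ q ≤ (C6 + F * C1) * r ^ d * N ^ q := by
    have h1 : ∀ τ ∈ T S, ((K τ).card * r) ^ q ≤ N ^ q + F * ((K τ).card.choose q * r ^ q) := by
      intro τ _
      by_cases hlt : (K τ).card < q
      · refine le_trans ?_ (Nat.le_add_right _ _)
        gcongr
        have : (K τ).card * r ≤ q * r := Nat.mul_le_mul_right r hlt.le
        omega
      · push Not at hlt
        refine le_trans ?_ (Nat.le_add_left _ _)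
        rw [mul_pow, ← mul_assoc, hF]
        gcongr
        exact pow_le_mul_choose hlt
    calc ∑ τ ∈ T S, ((K τ).card * r) ^ q
        ≤ ∑ τ ∈ T S, (N ^ q + F * ((K τ).card.choose q * r ^ q)) := sum_le_sum h1
      _ = (T S).card * N ^ q + F * ((∑ τ ∈ T S, (K τ).card.choose q) * r ^ q) := by
        rw [sum_add_distrib, sum_const, smul_eq_mul, ← mul_sum, sum_mul]
      _ ≤ C6 * r ^ d * N ^ q + F * (C1 * r ^ d * N ^ q) := by gcongr
      _ = _ := by ring
  refine Nat.le_of_mul_le_mul_right (c := N ^ q) ?_ (by positivity)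
  calc (∑ τ ∈ T S, (T (f τ)).card) * N ^ q = ∑ τ ∈ T S, (T (f τ)).card * N ^ q := sum_mul _ _ _
    _ ≤ ∑ τ ∈ T S, c * (2 ^ d * (C5 ^ d * ((K τ).card * r) ^ q + (1 + k) ^ d * N ^ q)) :=
      sum_le_sum fun τ _ => hf1 τ
    _ = c * (2 ^ d * (C5 ^ d * (∑ τ ∈ T S, ((K τ).card * r) ^ q) +
        (T S).card * ((1 + k) ^ d * N ^ q))) := by
      rw [← mul_sum, ← mul_sum, sum_add_distrib, ← mul_sum, sum_const, smul_eq_mul]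
    _ ≤ c * (2 ^ d * (C5 ^ d * ((C6 + F * C1) * r ^ d * N ^ q) +
        C6 * r ^ d * ((1 + k) ^ d * N ^ q))) := by gcongr
    _ = (c * 2 ^ d * (C5 ^ d * (C6 + F * C1) + (1 + k) ^ d * C6)) * r ^ d * N ^ q := by ring
    _ ≤ _ := by gcongr; omega

end

end Hop

namespace Hop
variable {d : ℕ}

/-! ### Cuttings of vector arrangements -/

/-- The family `a` together with the coordinate vectors. -/
def hat {κ : Type} (a : κ → Vec d) : κ ⊕ Fin (d + 1) → Vec d :=
  Sum.elim a fun j => Pi.single j 1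

/-- Code of a simplicial cone: each vertex is the cross product of `d` members of the family
(including the coordinate vectors). -/
abbrev Code (κ : Type) (d : ℕ) := Fin (d + 1) → Fin d → κ ⊕ Fin (d + 1)

/-- The vertices of the cone with code `c`. -/
def vx {κ : Type} (a : κ → Vec d) (c : Code κ d) (i : Fin (d + 1)) : Vec d :=
  cr fun l => hat a (c i l)

lemma cr_swap {c : Fin d → Vec d} (hd : 2 ≤ d) :
    cr (fun l => c (Equiv.swap ⟨0, by omega⟩ ⟨1, by omega⟩ l)) = - cr c := by
  ext j
  simp only [cr, Pi.neg_apply]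
  have h := Matrix.det_permute (Equiv.swap (⟨0, by omega⟩ : Fin d) ⟨1, by omega⟩)
    (Matrix.of fun (i l : Fin d) => c i (j.succAbove l))
  rw [Equiv.Perm.sign_swap (by simp)] at h
  have e : (Matrix.of fun (i l : Fin d) => c i (j.succAbove l)).submatrix
      (Equiv.swap (⟨0, by omega⟩ : Fin d) ⟨1, by omega⟩) id =
      Matrix.of fun i l => c (Equiv.swap ⟨0, by omega⟩ ⟨1, by omega⟩ i) (j.succAbove l) := by
    ext; simp
  rw [e] at h
  rw [h]; simp

/-- Cells have codes, up to positive rescaling of the vertices. -/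
lemma Cells.exists_code (hd : 2 ≤ d) {κ : Type} (a : κ → Vec d) {A : Finset (Vec d)}
    (hA : ∀ g ∈ A, ∃ x, hat a x = g) {w : Fin (d + 1) → Vec d} (hw : w ∈ Cells A) :
    ∃ (c : Code κ d) (μ : Fin (d + 1) → ℝ), (∀ i, 0 < μ i) ∧ ∀ i, w i = μ i • vx a c i := by
  have h : ∀ i, ∃ (e : Fin d → κ ⊕ Fin (d + 1)) (μ : ℝ), 0 < μ ∧
      w i = μ • cr fun l => hat a (e l) := by
    intro i
    obtain ⟨c, hc, t, ht⟩ := Cells.vertex hw i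
    choose e he using fun l => hA (c l) (hc l)
    have hce : c = fun l => hat a (e l) := funext fun l => (he l).symm
    have ht0 : t ≠ 0 := by
      rintro rfl
      exact (Cells.linearIndependent hw).ne_zero i (by rw [ht, zero_smul])
    rcases lt_or_gt_of_ne ht0 with h0 | h0
    · refine ⟨fun l => e (Equiv.swap ⟨0, by omega⟩ ⟨1, by omega⟩ l), -t, by linarith, ?_⟩
      have := cr_swap (c := fun l => hat a (e l)) hd
      rw [this, smul_neg, neg_smul, neg_neg, ht, hce]
    · exact ⟨e, t, h0, by rw [ht, hce]⟩
  choose e μ h1 h2 using h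
  exact ⟨e, μ, h1, h2⟩

lemma InCone.of_smul {w z : Fin (d + 1) → Vec d} {μ : Fin (d + 1) → ℝ} (hμ : ∀ i, 0 < μ i)
    (h : ∀ i, w i = μ i • z i) {y : Vec d} (hy : InCone w y) : InCone z y := by
  obtain ⟨t, ht, rfl⟩ := hy
  refine ⟨fun i => t i * μ i, fun i => mul_nonneg (ht i) (hμ i).le, ?_⟩
  exact Finset.sum_congr rfl fun i _ => by rw [h i, smul_smul]

lemma Conflict.of_smul {w z : Fin (d + 1) → Vec d} {μ : Fin (d + 1) → ℝ} (hμ : ∀ i, 0 < μ i)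
    (h : ∀ i, w i = μ i • z i) {v : Vec d} (hc : Conflict z v) : Conflict w v := by
  obtain ⟨⟨i, hi⟩, j, hj⟩ := hc
  refine ⟨⟨i, ?_⟩, j, ?_⟩
  · rw [h i, smul_dotProduct]; exact mul_neg_of_pos_of_neg (hμ i) hi
  · rw [h j, smul_dotProduct]; exact mul_pos (hμ j) hj

lemma linearIndependent_of_smul {w z : Fin (d + 1) → Vec d} {μ : Fin (d + 1) → ℝ}
    (h : ∀ i, w i = μ i • z i) (hw : LinearIndependent ℝ w) : LinearIndependent ℝ z := by
  rw [Fintype.linearIndependent_iff] at hw ⊢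
  intro g hg i
  have hμ : μ i ≠ 0 := by
    intro h0
    have := hw (fun j => if j = i then 1 else 0) (by simp [h i, h0]) i
    simp at this
  by_contra hgi
  have hall : ∀ j, μ j ≠ 0 := by
    intro j h0
    have := hw (fun l => if l = j then 1 else 0) (by simp [h j, h0]) j
    simp at this
  have := hw (fun j => g j * (μ j)⁻¹) (by
    rw [← hg]
    exact Finset.sum_congr rfl fun j _ => by
      rw [h j, smul_smul, mul_assoc, inv_mul_cancel₀ (hall j), mul_one]) i
  rcases mul_eq_zero.1 this with h1 | h1
  · exact hgi h1
  · exact hμ (inv_eq_zero.1 h1)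

section
variable {κ : Type} (a : κ → Vec d)

open Classical in
/-- The arrangement of a subfamily, with the coordinate vectors. -/
noncomputable def arr (S : Finset κ) : Finset (Vec d) :=
  S.image a ∪ Finset.univ.image fun j => Pi.single j 1

lemma arr_units (S : Finset κ) : Units (arr a S) := fun j => by
  simp [arr]

lemma arr_mono {S S' : Finset κ} (h : S ⊆ S') : arr a S ⊆ arr a S' := by
  classical
  exact Finset.union_subset_union (Finset.image_subset_image h) le_rfl

lemma arr_hat (S : Finset κ) : ∀ g ∈ arr a S, ∃ x, hat a x = g := by
  intro g hg
  simp only [arr, Finset.mem_union, Finset.mem_image, Finset.mem_univ, true_and] at hg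
  rcases hg with ⟨i, _, rfl⟩ | ⟨j, rfl⟩
  · exact ⟨Sum.inl i, rfl⟩
  · exact ⟨Sum.inr j, rfl⟩

lemma mem_arr {S : Finset κ} {i : κ} (hi : i ∈ S) : a i ∈ arr a S := by
  simp only [arr, Finset.mem_union, Finset.mem_image]; exact Or.inl ⟨i, hi, rfl⟩

lemma card_arr (S : Finset κ) : (arr a S).card ≤ S.card + (d + 1) := by
  classical
  refine (Finset.card_union_le _ _).trans (Nat.add_le_add Finset.card_image_le ?_)
  exact Finset.card_image_le.trans (by simp)

/-- The cells of a subfamily as a finite set. -/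
noncomputable def cellF (S : Finset κ) : Finset (Fin (d + 1) → Vec d) :=
  (Cells.card_le (arr_units a S)).1.toFinset

lemma mem_cellF {S : Finset κ} {w : Fin (d + 1) → Vec d} : w ∈ cellF a S ↔ w ∈ Cells (arr a S) := by
  simp [cellF]

open Classical in
/-- The members of the family in conflict with a cone. -/
noncomputable def confF [Fintype κ] (w : Fin (d + 1) → Vec d) : Finset κ :=
  Finset.univ.filter fun h => Conflict w (a h)

lemma cs_cells [Fintype κ] :
    CS (3 ^ (d + 1)) (d + 1) d ((d + 1) * (d + 3)) (cellF a) (confF a) := by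
  classical
  refine ⟨fun S => ?_, fun S τ hτ => ?_, fun S τ hτ => ?_⟩
  · rw [cellF, ← Set.ncard_eq_toFinset_card _ (Cells.card_le (arr_units a S)).1]
    refine ((Cells.card_le (arr_units a S)).2).trans ?_
    rw [mul_comm]
    gcongr
    exact card_arr a S
  · rw [Finset.disjoint_left]
    intro h hh hS
    exact Cells.not_conflict ((mem_cellF a).1 hτ) (mem_arr a hS) (by simpa [confF] using hh)
  · obtain ⟨D, hD, hDc, hD'⟩ := Cells.exists_local ((mem_cellF a).1 hτ)
    -- one index for each member of the family in `D`
    have hex : ∀ g : {g // g ∈ D.filter (fun g => ∃ i ∈ S, a i = g)}, ∃ i, i ∈ S ∧ a i = g :=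
      fun g => (Finset.mem_filter.1 g.2).2
    choose e he using hex
    refine ⟨(D.filter fun g => ∃ i ∈ S, a i = g).attach.image e, ?_, ?_, fun S' h1 h2 => ?_⟩
    · intro i hi
      obtain ⟨g, hg, rfl⟩ := Finset.mem_image.1 hi
      exact (he g).1
    · refine Finset.card_image_le.trans ?_
      rw [Finset.card_attach]
      exact (Finset.card_filter_le _ _).trans hDc
    · rw [mem_cellF]
      refine hD' _ (fun g hg => ?_) (arr_mono a h2)
      have hgA := hD hg
      simp only [arr, Finset.mem_union, Finset.mem_image, Finset.mem_univ, true_and] at hgA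
      rcases hgA with ⟨i, hi, hig⟩ | ⟨j, rfl⟩
      · have hg' : g ∈ D.filter (fun g => ∃ i ∈ S, a i = g) :=
          Finset.mem_filter.2 ⟨hg, i, hi, hig⟩
        have := (he ⟨g, hg'⟩).2
        simp only at this
        rw [← this]
        exact mem_arr a (h1 (Finset.mem_image_of_mem e (Finset.mem_attach _ _)))
      · exact arr_units a S' j

end

/-- Optimal cuttings: `O(r ^ d)` pairs of cones, each pair of cones crossed simultaneously by at
most a fraction `1 / r` of the family, whose intersections cover the space. -/
theorem cutting_vec (hd : 2 ≤ d) : ∃ C : ℕ, ∀ (κ : Type) [Fintype κ] (a : κ → Vec d) (r : ℕ),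
    1 ≤ r → ∃ Ξ : Finset (Code κ d × Code κ d), Ξ.card ≤ C * r ^ d ∧
      (∀ o ∈ Ξ, LinearIndependent ℝ (vx a o.1) ∧ LinearIndependent ℝ (vx a o.2)) ∧
      (∀ y, ∃ o ∈ Ξ, InCone (vx a o.1) y ∧ InCone (vx a o.2) y) ∧
      ∀ o ∈ Ξ, {h | Conflict (vx a o.1) (a h) ∧ Conflict (vx a o.2) (a h)}.ncard * r ≤
        Fintype.card κ := by
  classical
  obtain ⟨C, hC⟩ := CS.cutting (show 1 ≤ d by omega) (3 ^ (d + 1)) (d + 1) ((d + 1) * (d + 3))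
  refine ⟨C, fun κ _ a r hr => ?_⟩
  obtain ⟨S, f, hsum, hconf⟩ := hC κ _ (cellF a) (confF a) (cs_cells a) r hr
  have hcode : ∀ w : Fin (d + 1) → Vec d, ∃ (c : Code κ d) (μ : Fin (d + 1) → ℝ),
      (∃ S, w ∈ cellF a S) → (∀ i, 0 < μ i) ∧ ∀ i, w i = μ i • vx a c i := by
    intro w
    by_cases hw : ∃ S, w ∈ cellF a S
    · obtain ⟨S, hS⟩ := hw
      obtain ⟨c, μ, h1, h2⟩ := Cells.exists_code hd a (arr_hat a S) ((mem_cellF a).1 hS)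
      exact ⟨c, μ, fun _ => ⟨h1, h2⟩⟩
    · exact ⟨fun _ _ => Sum.inr 0, fun _ => 0, fun h => absurd h hw⟩
  choose c μ hc using hcode
  refine ⟨((cellF a S).sigma fun τ => cellF a (f τ)).image fun x => (c x.1, c x.2), ?_, ?_, ?_, ?_⟩
  · refine Finset.card_image_le.trans ?_
    rw [Finset.card_sigma]
    exact hsum
  · intro o ho
    obtain ⟨⟨τ, τ'⟩, hx, rfl⟩ := Finset.mem_image.1 ho
    obtain ⟨h1, h2⟩ := Finset.mem_sigma.1 hx
    exact ⟨linearIndependent_of_smul (hc τ ⟨_, h1⟩).2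
        (Cells.linearIndependent ((mem_cellF a).1 h1)),
      linearIndependent_of_smul (hc τ' ⟨_, h2⟩).2 (Cells.linearIndependent ((mem_cellF a).1 h2))⟩
  · intro y
    have hcl : IsClosed (⋃ x ∈ (cellF a S).sigma fun τ => cellF a (f τ),
        {y | InCone (vx a (c x.1)) y} ∩ {y | InCone (vx a (c x.2)) y}) := by
      refine isClosed_biUnion_finset fun x hx => IsClosed.inter ?_ ?_
      · obtain ⟨h1, h2⟩ := Finset.mem_sigma.1 hx
        exact isClosed_inCone (linearIndependent_of_smul (hc x.1 ⟨_, h1⟩).2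
          (Cells.linearIndependent ((mem_cellF a).1 h1)))
      · obtain ⟨h1, h2⟩ := Finset.mem_sigma.1 hx
        exact isClosed_inCone (linearIndependent_of_smul (hc x.2 ⟨_, h2⟩).2
          (Cells.linearIndependent ((mem_cellF a).1 h2)))
    have hy := mem_of_generic (arr a Finset.univ) hcl (fun p hp => ?_) y
    · simp only [Set.mem_iUnion] at hy
      obtain ⟨x, hx, hxy⟩ := hy
      exact ⟨_, Finset.mem_image_of_mem _ hx, hxy⟩
    · obtain ⟨τ, hτ, hτp⟩ :=
        (hp.mono (arr_mono a (Finset.subset_univ S))).exists_cell (arr_units a S)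
      obtain ⟨τ', hτ', hτp'⟩ :=
        (hp.mono (arr_mono a (Finset.subset_univ (f τ)))).exists_cell (arr_units a (f τ))
      simp only [Set.mem_iUnion]
      rw [← mem_cellF] at hτ hτ'
      exact ⟨⟨τ, τ'⟩, Finset.mem_sigma.2 ⟨hτ, hτ'⟩,
        hτp.of_smul (hc τ ⟨_, hτ⟩).1 (hc τ ⟨_, hτ⟩).2,
        hτp'.of_smul (hc τ' ⟨_, hτ'⟩).1 (hc τ' ⟨_, hτ'⟩).2⟩
  · intro o ho
    obtain ⟨⟨τ, τ'⟩, hx, rfl⟩ := Finset.mem_image.1 ho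
    obtain ⟨h1, h2⟩ := Finset.mem_sigma.1 hx
    refine le_trans ?_ (hconf τ h1 τ' h2)
    gcongr
    rw [← Set.ncard_coe_finset]
    refine Set.ncard_le_ncard (fun h hh => ?_) (Finset.finite_toSet _)
    simp only [Finset.coe_inter, Set.mem_inter_iff, Finset.mem_coe, confF, Finset.mem_filter,
      Finset.mem_univ, true_and]
    exact ⟨hh.1.of_smul (hc τ ⟨_, h1⟩).1 (hc τ ⟨_, h1⟩).2,
      hh.2.of_smul (hc τ' ⟨_, h2⟩).1 (hc τ' ⟨_, h2⟩).2⟩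

/-- Every vector lies in a cone with a code that is crossed by no member of the family. -/
lemma exists_code_cone (hd : 2 ≤ d) {κ : Type} [Fintype κ] (a : κ → Vec d) (y : Vec d) :
    ∃ c : Code κ d, LinearIndependent ℝ (vx a c) ∧ InCone (vx a c) y ∧
      ∀ h, ¬ Conflict (vx a c) (a h) := by
  classical
  have hcl : IsClosed (⋃ x ∈ cellF a Finset.univ, {y | InCone x y}) :=
    isClosed_biUnion_finset fun x hx =>
      isClosed_inCone (Cells.linearIndependent ((mem_cellF a).1 hx))
  have hy := mem_of_generic (arr a Finset.univ) hcl (fun p hp => by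
    obtain ⟨τ, hτ, hτp⟩ := hp.exists_cell (arr_units a _)
    simp only [Set.mem_iUnion]
    exact ⟨τ, (mem_cellF a).2 hτ, hτp⟩) y
  simp only [Set.mem_iUnion] at hy
  obtain ⟨w, hw, hwy⟩ := hy
  rw [mem_cellF] at hw
  obtain ⟨c, μ, h1, h2⟩ := Cells.exists_code hd a (arr_hat a _) hw
  exact ⟨c, linearIndependent_of_smul h2 (Cells.linearIndependent hw), hwy.of_smul h1 h2,
    fun h hh => Cells.not_conflict hw (mem_arr a (Finset.mem_univ h)) (hh.of_smul h1 h2)⟩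

/-! ### Transfer of signs between configurations -/

open SignType (sign)

/-- The sign of a nonnegative combination of reals of one sign depends only on signs. -/
lemma sign_sum_congr {n : ℕ} {t t' x x' : Fin n → ℝ} (ht : ∀ i, 0 ≤ t i)
    (htt : ∀ i, sign (t i) = sign (t' i)) (hx : ∀ i, sign (x i) = sign (x' i))
    (hc : ¬ ((∃ i, x i < 0) ∧ ∃ i, 0 < x i)) :
    sign (∑ i, t i * x i) = sign (∑ i, t' i * x' i) := by
  have key : ∀ (t x t' x' : Fin n → ℝ), (∀ i, 0 ≤ t i) → (∀ i, sign (t i) = sign (t' i)) →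
      (∀ i, sign (x i) = sign (x' i)) → (∀ i, 0 ≤ x i) →
      sign (∑ i, t i * x i) = sign (∑ i, t' i * x' i) := by
    intro t x t' x' ht htt hx hx0
    have hnn : ∀ {u u' : ℝ}, 0 ≤ u → sign u = sign u' → 0 ≤ u' := fun hu h => by
      rw [← sign_nonneg_iff] at hu ⊢; rwa [← h]
    have ht' : ∀ i, 0 ≤ t' i := fun i => hnn (ht i) (htt i)
    have hx' : ∀ i, 0 ≤ x' i := fun i => hnn (hx0 i) (hx i)
    have hs : 0 ≤ ∑ i, t i * x i := Finset.sum_nonneg fun i _ => mul_nonneg (ht i) (hx0 i)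
    have hs' : 0 ≤ ∑ i, t' i * x' i := Finset.sum_nonneg fun i _ => mul_nonneg (ht' i) (hx' i)
    have hiff : ∑ i, t i * x i = 0 ↔ ∑ i, t' i * x' i = 0 := by
      rw [Finset.sum_eq_zero_iff_of_nonneg fun i _ => mul_nonneg (ht i) (hx0 i),
        Finset.sum_eq_zero_iff_of_nonneg fun i _ => mul_nonneg (ht' i) (hx' i)]
      refine forall₂_congr fun i _ => ?_
      rw [← sign_eq_zero_iff, ← sign_eq_zero_iff (a := t' i * x' i), sign_mul, sign_mul, htt, hx]
    rcases hs.eq_or_lt with h | h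
    · rw [← h, hiff.1 h.symm]
    · have h' : 0 < ∑ i, t' i * x' i := lt_of_le_of_ne hs' fun h0 => h.ne' (hiff.2 h0.symm)
      rw [sign_pos h, sign_pos h']
  by_cases hneg : ∃ i, x i < 0
  · have hle : ∀ i, x i ≤ 0 := fun i => by
      by_contra h; push Not at h; exact hc ⟨hneg, i, h⟩
    have := key t (fun i => - x i) t' (fun i => - x' i) ht htt
      (fun i => by rw [Left.sign_neg, Left.sign_neg, hx]) (fun i => by linarith [hle i])
    simp only [mul_neg, Finset.sum_neg_distrib, Left.sign_neg] at this
    exact neg_inj.1 this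
  · push Not at hneg
    exact key t x t' x' ht htt hx hneg

/-- Two families have the same orientations of cross products against members. -/
def SameOT {κ : Type} (a a' : κ → Vec d) : Prop :=
  ∀ (e : Fin d → κ ⊕ Fin (d + 1)) (h : κ),
    sign ((cr fun l => hat a (e l)) ⬝ᵥ a h) = sign ((cr fun l => hat a' (e l)) ⬝ᵥ a' h)

lemma SameOT.symm {κ : Type} {a a' : κ → Vec d} (h : SameOT a a') : SameOT a' a :=
  fun e x => (h e x).symm

/-- Families with the same orientations realize the same sign vectors. -/
lemma SameOT.covector (hd : 2 ≤ d) {κ : Type} [Fintype κ] {a a' : κ → Vec d} (h : SameOT a a')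
    (y : Vec d) : ∃ y', ∀ i, sign (a i ⬝ᵥ y) = sign (a' i ⬝ᵥ y') := by
  obtain ⟨c, -, ⟨t, ht, rfl⟩, hc⟩ := exists_code_cone hd a y
  refine ⟨∑ i, t i • vx a' c i, fun x => ?_⟩
  simp only [dotProduct_sum, dotProduct_smul, smul_eq_mul]
  refine sign_sum_congr ht (fun _ => rfl) (fun i => ?_) fun hcon => hc x ?_
  · rw [dotProduct_comm, dotProduct_comm (a' x)]; exact h (c i) x
  · simpa only [Conflict, dotProduct_comm (a x)] using hcon

/-- Signs against a vector in a cone follow from the signs at the vertices. -/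
lemma sign_of_cone {z z' : Fin (d + 1) → Vec d} {y y' h h' : Vec d}
    (hz : ∀ i, facet z i ⬝ᵥ z i ≠ 0) (hy : InCone z y)
    (hs : ∀ i, sign (facet z i ⬝ᵥ z i) = sign (facet z' i ⬝ᵥ z' i))
    (hf : ∀ i, sign (facet z i ⬝ᵥ y) = sign (facet z' i ⬝ᵥ y'))
    (hh : ∀ i, sign (z i ⬝ᵥ h) = sign (z' i ⬝ᵥ h')) (hc : ¬ Conflict z h) :
    sign (y ⬝ᵥ h) = sign (y' ⬝ᵥ h') := by
  have hz' : ∀ i, facet z' i ⬝ᵥ z' i ≠ 0 := fun i h0 => by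
    have := hs i; rw [h0, sign_zero, sign_eq_zero_iff] at this; exact hz i this
  obtain ⟨t, ht, rfl⟩ := hy
  obtain ⟨t', rfl⟩ := exists_combo_of_facet hz' y'
  simp only [sum_dotProduct, smul_dotProduct, smul_eq_mul]
  refine sign_sum_congr ht (fun i => ?_) hh hc
  have := hf i
  rw [facet_dot_combo, facet_dot_combo, sign_mul, sign_mul, ← hs i] at this
  have h0 : sign (facet z i ⬝ᵥ z i) ≠ 0 := fun h0 => hz i (sign_eq_zero_iff.1 h0)
  exact mul_right_cancel₀ h0 this

/-- Membership in a cone follows from signs at its facets. -/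
lemma inCone_congr {z z' : Fin (d + 1) → Vec d} {y y' : Vec d}
    (hz : LinearIndependent ℝ z) (hy : InCone z y)
    (hs : ∀ i, sign (facet z i ⬝ᵥ z i) = sign (facet z' i ⬝ᵥ z' i))
    (hf : ∀ i, sign (facet z i ⬝ᵥ y) = sign (facet z' i ⬝ᵥ y')) :
    LinearIndependent ℝ z' ∧ InCone z' y' := by
  have hz' : LinearIndependent ℝ z' := linearIndependent_of_facet fun i h0 => by
    have := hs i
    rw [h0, sign_zero, sign_eq_zero_iff] at this
    exact facet_dot_self_ne_zero hz i this
  refine ⟨hz', (inCone_iff hz' y').2 fun i => ?_⟩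
  have := (inCone_iff hz y).1 hy i
  rw [← sign_nonneg_iff, sign_mul] at this ⊢
  rwa [← hf i, ← hs i]

/-- Locating `y'` in the decomposition of the family `a'`: a cone whose `2 (d + 1)` facet signs,
together with the orientations of the family, determine all signs against the family. -/
lemma exists_locate (hd : 2 ≤ d) {κ : Type} [Fintype κ] (a' : κ → Vec d) (y' : Vec d) :
    ∃ c : Code κ d, ∀ (a : κ → Vec d) (y : Vec d), SameOT a' a →
      (∀ i, sign (facet (vx a' c) i ⬝ᵥ vx a' c i) = sign (facet (vx a c) i ⬝ᵥ vx a c i)) →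
      (∀ i, sign (facet (vx a' c) i ⬝ᵥ y') = sign (facet (vx a c) i ⬝ᵥ y)) →
      ∀ h, sign (y' ⬝ᵥ a' h) = sign (y ⬝ᵥ a h) := by
  obtain ⟨c, hli, hin, hc⟩ := exists_code_cone hd a' y'
  refine ⟨c, fun a y hOT hs hf h => ?_⟩
  exact sign_of_cone (facet_dot_self_ne_zero hli) hin hs hf (fun i => hOT (c i) h) (hc h)

end Hop

namespace Hop
variable {d : ℕ}
open SignType (sign)

/-! ### Terms and tests -/

/-- A configuration: a vector for every index. -/
abbrev Cfg (d : ℕ) (ι : Type) := ι → Vec d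

/-- A vector-valued term in a configuration. -/
abbrev Tm (d : ℕ) (ι : Type) := Cfg d ι → Vec d

/-- A real-valued test on configurations; only its sign is ever used. -/
abbrev Test (d : ℕ) (ι : Type) := Cfg d ι → ℝ

/-- The test asking for the sign of the inner product of two terms. -/
def dotT {ι : Type} (t t' : Tm d ι) : Test d ι := fun v => t v ⬝ᵥ t' v

/-- The base test: the sign of the inner product of the vectors with indices `i` and `j`. -/
def bt {ι : Type} (i j : ι) : Test d ι := fun v => v i ⬝ᵥ v j

open Classical in
/-- The terms of nesting depth at most `l`: iterated cross products of the vectors with index in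
`U` and the coordinate vectors. -/
noncomputable def lvl {ι : Type} (U : Finset ι) : ℕ → Finset (Tm d ι)
  | 0 => U.image (fun i v => v i) ∪ Finset.univ.image fun j _ => Pi.single j 1
  | l + 1 => lvl U l ∪
      (Fintype.piFinset fun _ : Fin d => lvl U l).image fun c v => cr fun i => c i v

open Classical in
/-- The tests on the indices `U`: inner products of terms of depth at most three. -/
noncomputable def Tst {ι : Type} (U : Finset ι) : Finset (Test d ι) :=
  Finset.image₂ dotT (lvl U 3) (lvl U 3)

section
variable {ι : Type} {U : Finset ι}

lemma lvl_succ (l : ℕ) : (lvl U l : Finset (Tm d ι)) ⊆ lvl U (l + 1) := by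
  classical
  rw [lvl]; exact Finset.subset_union_left

lemma lvl_mono {l l' : ℕ} (h : l ≤ l') : (lvl U l : Finset (Tm d ι)) ⊆ lvl U l' := by
  induction h with
  | refl => exact le_rfl
  | step _ ih => exact ih.trans (lvl_succ _)

lemma lvl_mono_set {U' : Finset ι} (h : U ⊆ U') (l : ℕ) :
    (lvl U l : Finset (Tm d ι)) ⊆ lvl U' l := by
  classical
  induction l with
  | zero =>
    rw [lvl, lvl]
    exact Finset.union_subset_union (Finset.image_subset_image h) le_rfl
  | succ l ih =>
    rw [lvl, lvl]
    refine Finset.union_subset_union ih (Finset.image_subset_image ?_)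
    exact Fintype.piFinset_subset _ _ fun _ => ih

lemma Tst_mono {U' : Finset ι} (h : U ⊆ U') : (Tst U : Finset (Test d ι)) ⊆ Tst U' := by
  classical
  exact Finset.image₂_subset (lvl_mono_set h 3) (lvl_mono_set h 3)

lemma base_mem {i : ι} (hi : i ∈ U) : (fun v : Cfg d ι => v i) ∈ lvl U 0 := by
  classical
  rw [lvl, Finset.mem_union]
  exact Or.inl (Finset.mem_image_of_mem _ hi)

lemma unit_mem (j : Fin (d + 1)) : (fun _ : Cfg d ι => (Pi.single j 1 : Vec d)) ∈ lvl U 0 := by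
  classical
  rw [lvl, Finset.mem_union]
  exact Or.inr (Finset.mem_image_of_mem _ (Finset.mem_univ j))

lemma cr_mem {l : ℕ} {c : Fin d → Tm d ι} (hc : ∀ i, c i ∈ lvl U l) :
    (fun v => cr fun i => c i v) ∈ lvl U (l + 1) := by
  classical
  rw [lvl, Finset.mem_union]
  exact Or.inr (Finset.mem_image.2 ⟨c, Fintype.mem_piFinset.2 hc, rfl⟩)

lemma dotT_mem {l l' : ℕ} {t t' : Tm d ι} (ht : t ∈ lvl U l) (ht' : t' ∈ lvl U l') (hl : l ≤ 3)
    (hl' : l' ≤ 3) : dotT t t' ∈ Tst U := by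
  classical
  exact Finset.mem_image₂_of_mem (lvl_mono hl ht) (lvl_mono hl' ht')

lemma bt_mem {i j : ι} (hi : i ∈ U) (hj : j ∈ U) : (bt i j : Test d ι) ∈ Tst U :=
  dotT_mem (l := 0) (l' := 0) (base_mem hi) (base_mem hj) (by simp) (by simp)

lemma card_lvl (hd : 2 ≤ d) (U : Finset ι) (l : ℕ) :
    (lvl U l : Finset (Tm d ι)).card ≤ (U.card + d + 2) ^ (d + 1) ^ l := by
  classical
  induction l with
  | zero =>
    rw [lvl]
    refine (Finset.card_union_le _ _).trans ?_
    have h1 : (U.image fun (i : ι) (v : Cfg d ι) => v i).card ≤ U.card := Finset.card_image_le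
    have h2 : (Finset.univ.image fun (j : Fin (d + 1)) (_ : Cfg d ι) =>
      (Pi.single j 1 : Vec d)).card ≤ d + 1 := Finset.card_image_le.trans (by simp)
    simp only [pow_zero, pow_one]
    omega
  | succ l ih =>
    rw [lvl]
    refine (Finset.card_union_le _ _).trans ?_
    have h2 : ((Fintype.piFinset fun _ : Fin d => (lvl U l : Finset (Tm d ι))).image
        fun c v => cr fun i => c i v).card ≤ (lvl U l : Finset (Tm d ι)).card ^ d :=
      Finset.card_image_le.trans (by simp)
    set x := (U.card + d + 2) ^ (d + 1) ^ l with hx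
    have hx2 : 2 ≤ x := by
      rw [hx]
      calc 2 ≤ U.card + d + 2 := by omega
        _ ≤ _ := Nat.le_self_pow (by positivity) _
    have h3 : (lvl U l : Finset (Tm d ι)).card ^ d ≤ x ^ d := Nat.pow_le_pow_left ih d
    have h4 : (U.card + d + 2) ^ (d + 1) ^ (l + 1) = x ^ (d + 1) := by rw [hx, ← pow_mul, pow_succ]
    rw [h4, pow_succ]
    have h5 : x ≤ x ^ d := Nat.le_self_pow (by omega) x
    nlinarith

lemma card_Tst (hd : 2 ≤ d) (U : Finset ι) :
    (Tst U : Finset (Test d ι)).card ≤ (U.card + d + 2) ^ (2 * (d + 1) ^ 3) := by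
  classical
  refine (Finset.card_image₂_le _ _ _).trans ?_
  rw [mul_comm 2, pow_mul, sq]
  exact Nat.mul_le_mul (card_lvl hd U 3) (card_lvl hd U 3)

open MvPolynomial in
/-- The degree of a cross product of vectors of polynomials. -/
lemma totalDegree_cr {σ : Type} {D : ℕ} (c : Fin d → Fin (d + 1) → MvPolynomial σ ℝ)
    (hc : ∀ i j, (c i j).totalDegree ≤ D) (j : Fin (d + 1)) :
    (cr c j).totalDegree ≤ d * D := by
  have hz : ∀ z : ℤ, ((z : MvPolynomial σ ℝ)).totalDegree = 0 := fun z => by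
    rw [← map_intCast (C : ℝ →+* MvPolynomial σ ℝ), totalDegree_C]
  rw [cr]
  refine (totalDegree_mul _ _).trans ?_
  have h1 : ((-1 : MvPolynomial σ ℝ) ^ (j : ℕ)).totalDegree = 0 := by
    have := hz ((-1) ^ (j : ℕ))
    simpa using this
  rw [h1, zero_add, Matrix.det_apply']
  refine totalDegree_finsetSum_le fun π _ => (totalDegree_mul _ _).trans ?_
  rw [hz, zero_add]
  refine (totalDegree_finsetProd _ _).trans ?_
  refine (Finset.sum_le_sum fun i _ => hc _ _).trans ?_
  simp

open MvPolynomial in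
lemma eval_cr {σ : Type} (x : σ → ℝ) (c : Fin d → Fin (d + 1) → MvPolynomial σ ℝ)
    (j : Fin (d + 1)) : eval x (cr c j) = cr (fun i l => eval x (c i l)) j := by
  simp only [cr, map_mul, map_pow, map_neg, map_one, RingHom.map_det]
  rfl

open MvPolynomial in
/-- If the vectors with index in `U` depend affinely on parameters, then the terms on `U` depend
polynomially on the parameters. -/
lemma lvl_poly (hd : 2 ≤ d) {σ : Type} (φ : (σ → ℝ) → Cfg d ι)
    (hφ : ∀ i ∈ U, ∀ j, ∃ p : MvPolynomial σ ℝ, p.totalDegree ≤ 1 ∧ ∀ x, eval x p = φ x i j)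
    (l : ℕ) : ∀ t ∈ lvl U l, ∀ j, ∃ p : MvPolynomial σ ℝ, p.totalDegree ≤ d ^ l ∧
      ∀ x v, (∀ i ∈ U, v i = φ x i) → eval x p = t v j := by
  classical
  induction l with
  | zero =>
    intro t ht j
    rw [lvl, Finset.mem_union, Finset.mem_image, Finset.mem_image] at ht
    rcases ht with ⟨i, hi, rfl⟩ | ⟨i, -, rfl⟩
    · obtain ⟨p, h1, h2⟩ := hφ i hi j
      exact ⟨p, by simpa using h1, fun x v hv => by simp only [h2, hv i hi]⟩
    · exact ⟨C ((Pi.single i 1 : Vec d) j), by simp, fun x v _ => by simp⟩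
  | succ l ih =>
    intro t ht j
    rw [lvl, Finset.mem_union, Finset.mem_image] at ht
    rcases ht with ht | ⟨c, hc, rfl⟩
    · obtain ⟨p, h1, h2⟩ := ih t ht j
      exact ⟨p, h1.trans (Nat.pow_le_pow_right (by omega) (by omega)), h2⟩
    · rw [Fintype.mem_piFinset] at hc
      choose P hP1 hP2 using fun i => ih (c i) (hc i)
      refine ⟨cr P j, ?_, fun x v hv => ?_⟩
      · rw [pow_succ, mul_comm]; exact totalDegree_cr P hP1 j
      · rw [eval_cr]
        congr 1
        ext1 i; ext1 l
        exact hP2 i l x v hv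

open MvPolynomial in
lemma Tst_poly (hd : 2 ≤ d) {σ : Type} (φ : (σ → ℝ) → Cfg d ι)
    (hφ : ∀ i ∈ U, ∀ j, ∃ p : MvPolynomial σ ℝ, p.totalDegree ≤ 1 ∧ ∀ x, eval x p = φ x i j) :
    ∀ f ∈ Tst U, ∃ p : MvPolynomial σ ℝ, p.totalDegree ≤ 2 * d ^ 3 ∧
      ∀ x v, (∀ i ∈ U, v i = φ x i) → eval x p = f v := by
  classical
  intro f hf
  obtain ⟨t, ht, t', ht', rfl⟩ := Finset.mem_image₂.1 hf
  choose P hP1 hP2 using lvl_poly hd φ hφ 3 t ht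
  choose P' hP1' hP2' using lvl_poly hd φ hφ 3 t' ht'
  refine ⟨∑ j, P j * P' j, ?_, fun x v hv => ?_⟩
  · refine totalDegree_finsetSum_le fun j _ => (totalDegree_mul _ _).trans ?_
    have := hP1 j; have := hP1' j; omega
  · simp only [map_sum, map_mul, dotT, dotProduct]
    exact Finset.sum_congr rfl fun j _ => by rw [hP2 j x v hv, hP2' j x v hv]

/-! ### Classes of configurations -/

/-- The signs of a configuration on all tests on `U`. -/
noncomputable def sgv (U : Finset ι) (v : Cfg d ι) (p : {p : Test d ι // p ∈ Tst U}) : SignType :=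
  sign (p.1 v)

/-- The number of sign vectors of the tests on `U` occurring in `S`. -/
noncomputable def ncl (U : Finset ι) (S : Set (Cfg d ι)) : ℕ := (sgv U '' S).ncard

lemma ncl_mono {S S' : Set (Cfg d ι)} (h : S ⊆ S') : ncl U S ≤ ncl U S' :=
  Set.ncard_le_ncard (Set.image_mono h) (Set.toFinite _)

lemma ncl_pos {S : Set (Cfg d ι)} (h : S.Nonempty) : 0 < ncl U S :=
  (Set.ncard_pos (Set.toFinite _)).2 (h.image _)

lemma ncl_eq_zero {S : Set (Cfg d ι)} (h : ncl U S = 0) : S = ∅ := by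
  by_contra hS
  exact (ncl_pos (U := U) (Set.nonempty_iff_ne_empty.2 hS)).ne' h

open MvPolynomial in
/-- The number of sign vectors is exponential only in the number of vectors. -/
lemma ncl_le (hd : 2 ≤ d) (U : Finset ι) (S : Set (Cfg d ι)) :
    ncl U S ≤ (U.card + d + 2) ^ ((d + 1) * (2 * (d + 1) ^ 3 + 2 * d ^ 3 + 4) * U.card) := by
  classical
  obtain ⟨φ, hφ⟩ : ∃ φ : ({i // i ∈ U} × Fin (d + 1) → ℝ) → Cfg d ι,
      ∀ x i j, φ x i j = if h : i ∈ U then x (⟨i, h⟩, j) else 0 :=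
    ⟨fun x i j => if h : i ∈ U then x (⟨i, h⟩, j) else 0, fun _ _ _ => rfl⟩
  have h := Tst_poly (U := U) hd φ fun i hi j =>
    ⟨X (⟨i, hi⟩, j), (totalDegree_X _).le, fun x => by rw [hφ, dif_pos hi]; simp⟩
  choose! P hP1 hP2 using h
  have hw := warren (fun p : {p : Test d ι // p ∈ Tst U} => P p.1) (2 * d ^ 3)
    fun p => hP1 p.1 p.2
  have hsub : sgv U '' S ⊆ Set.range fun (x : {i // i ∈ U} × Fin (d + 1) → ℝ)
      (p : {p : Test d ι // p ∈ Tst U}) => sign (eval x (P p.1)) := by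
    rintro _ ⟨v, -, rfl⟩
    refine ⟨fun ij => v ij.1 ij.2, funext fun p => ?_⟩
    simp only [sgv]
    rw [hP2 p.1 p.2 _ v]
    intro i hi
    ext j
    rw [hφ, dif_pos hi]
  refine (Set.ncard_le_ncard hsub (Set.toFinite _)).trans (hw.trans ?_)
  simp only [Fintype.card_prod, Fintype.card_coe, Fintype.card_fin]
  set x := U.card + d + 2 with hx
  have hx2 : 2 ≤ x := by omega
  have hT := card_Tst hd U
  have h1 : 4 * (Tst U : Finset (Test d ι)).card * (2 * d ^ 3) + 1 ≤
      x ^ (2 * (d + 1) ^ 3 + 2 * d ^ 3 + 4) := by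
    have e1 : 2 * d ^ 3 ≤ x ^ (2 * d ^ 3) := Nat.lt_two_pow_self.le.trans (Nat.pow_le_pow_left hx2 _)
    have e2 : 8 ≤ x ^ 3 := by
      calc 8 = 2 ^ 3 := by norm_num
        _ ≤ _ := Nat.pow_le_pow_left hx2 3
    have e3 : 1 ≤ x ^ (2 * (d + 1) ^ 3) * x ^ (2 * d ^ 3) := Nat.one_le_iff_ne_zero.2 (by positivity)
    have e4 := Nat.mul_le_mul hT e1
    have e5 : x ^ (2 * (d + 1) ^ 3 + 2 * d ^ 3 + 4) =
      (x ^ (2 * (d + 1) ^ 3) * x ^ (2 * d ^ 3)) * (x ^ 3 * x) := by ring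
    rw [e5]
    set B := x ^ (2 * (d + 1) ^ 3) * x ^ (2 * d ^ 3) with hB
    have e6 : B * 16 ≤ B * (x ^ 3 * x) := Nat.mul_le_mul_left _ (Nat.mul_le_mul e2 hx2)
    have e7 : 4 * (Tst U : Finset (Test d ι)).card * (2 * d ^ 3) ≤ 4 * B := by
      rw [mul_assoc]; exact Nat.mul_le_mul_left 4 e4
    omega
  calc _ ≤ (x ^ (2 * (d + 1) ^ 3 + 2 * d ^ 3 + 4)) ^ (U.card * (d + 1)) := Nat.pow_le_pow_left h1 _
    _ = _ := by rw [← pow_mul]; congr 1; ring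

/-- The number of sign vectors of a vector against a family of `g` vectors. -/
lemma ncard_covectors {κ : Type} [Fintype κ] (a : κ → Vec d) :
    (Set.range fun (y : Vec d) (x : κ) => sign (a x ⬝ᵥ y)).ncard ≤
      (4 * Fintype.card κ + 1) ^ (d + 1) := by
  have h := warren (σ := Fin (d + 1)) (fun x : κ => ∑ j, MvPolynomial.C (a x j) * MvPolynomial.X j)
    1 fun x => MvPolynomial.totalDegree_finsetSum_le fun j _ =>
      (MvPolynomial.totalDegree_mul _ _).trans (by simp)
  simpa [dotProduct] using h

/-! ### Vertices and facets as terms -/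

variable {κ : Type}

/-- The `i`-th vertex of the cone with code `c` over the vectors with indices `A`. -/
def vxT (A : κ → ι) (c : Code κ d) (i : Fin (d + 1)) : Tm d ι := fun v => vx (fun x => v (A x)) c i

/-- The `i`-th facet normal of the cone with code `c` over the vectors with indices `A`. -/
def fcT (A : κ → ι) (c : Code κ d) (i : Fin (d + 1)) : Tm d ι :=
  fun v => facet (vx (fun x => v (A x)) c) i

lemma hatT_mem {A : κ → ι} (hA : ∀ x, A x ∈ U) (x : κ ⊕ Fin (d + 1)) :
    (fun v : Cfg d ι => hat (fun y => v (A y)) x) ∈ lvl U 0 := by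
  cases x with
  | inl x => exact base_mem (hA x)
  | inr j => exact unit_mem j

lemma crT_mem {A : κ → ι} (hA : ∀ x, A x ∈ U) (e : Fin d → κ ⊕ Fin (d + 1)) :
    (fun v : Cfg d ι => cr fun l => hat (fun y => v (A y)) (e l)) ∈ lvl U 1 :=
  cr_mem fun l => hatT_mem hA (e l)

lemma vxT_mem {A : κ → ι} (hA : ∀ x, A x ∈ U) (c : Code κ d) (i : Fin (d + 1)) :
    vxT A c i ∈ lvl U 1 := crT_mem hA (c i)

lemma fcT_mem {A : κ → ι} (hA : ∀ x, A x ∈ U) (c : Code κ d) (i : Fin (d + 1)) :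
    fcT A c i ∈ lvl U 2 := cr_mem fun l => vxT_mem hA c (i.succAbove l)

end
end Hop

namespace Hop
variable {d : ℕ} {ι : Type}
open SignType (sign)

/-! ### Certificates -/

/-- Two configurations have the same signs on the tests `T`. -/
def Agr (v v' : Cfg d ι) (T : Finset (Test d ι)) : Prop := ∀ p ∈ T, sign (p v) = sign (p v')

lemma Agr.mono {v v' : Cfg d ι} {T T' : Finset (Test d ι)} (h : Agr v v' T) (hT : T' ⊆ T) :
    Agr v v' T' := fun p hp => h p (hT hp)

/-- A finite set is covered by pieces of size at most `a`. -/
lemma exists_chunks (H : Finset ι) {a : ℕ} (ha : 1 ≤ a) :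
    ∃ P : Fin (H.card / a + 1) → Finset ι, (∀ g, (P g).card ≤ a ∧ P g ⊆ H) ∧
      ∀ h ∈ H, ∃ g, h ∈ P g := by
  classical
  refine ⟨fun g => (H.attach.filter fun h => (H.equivFin h : ℕ) / a = g).image (·.1), fun g => ⟨?_, ?_⟩,
    fun h hh => ?_⟩
  · refine Finset.card_image_le.trans ?_
    have : Set.MapsTo (fun h : H => (H.equivFin h : ℕ) % a)
        (H.attach.filter fun h => (H.equivFin h : ℕ) / a = g) (Finset.range a) := fun h _ => by
      simpa using Nat.mod_lt _ ha
    refine (Finset.card_le_card_of_injOn _ this ?_).trans (by simp)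
    intro x hx y hy hxy
    simp only [Finset.coe_filter, Finset.mem_attach, true_and, Set.mem_ofPred_eq] at hx hy
    have h1 := Nat.div_add_mod (H.equivFin x : ℕ) a
    have h2 := Nat.div_add_mod (H.equivFin y : ℕ) a
    simp only at hxy
    rw [hx, hxy] at h1
    rw [hy] at h2
    exact H.equivFin.injective (Fin.ext (by omega))
  · intro h hh
    obtain ⟨x, -, rfl⟩ := Finset.mem_image.1 hh
    exact x.2
  · refine ⟨⟨(H.equivFin ⟨h, hh⟩ : ℕ) / a, Nat.lt_succ_of_le (Nat.div_le_div_right ?_)⟩, ?_⟩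
    · exact (H.equivFin ⟨h, hh⟩).2.le
    · exact Finset.mem_image.2 ⟨⟨h, hh⟩, by simp, rfl⟩

/-- Given the orientations of the family `A`, the signs of a term against `A` are certified by
`2 (d + 1)` tests locating it in the decomposition of `A`. -/
lemma exists_cert_loc (hd : 2 ≤ d) (A : Finset ι) (v₀ : Cfg d ι) (y : Tm d ι) :
    ∃ Q : Finset (Test d ι), Q.card ≤ 2 * (d + 1) ∧
      (∀ U : Finset ι, A ⊆ U → y ∈ lvl U 3 → Q ⊆ Tst U) ∧
      ∀ v, SameOT (fun x : A => v₀ x) (fun x : A => v x) → Agr v v₀ Q →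
        ∀ h ∈ A, sign (y v ⬝ᵥ v h) = sign (y v₀ ⬝ᵥ v₀ h) := by
  classical
  obtain ⟨c, hc⟩ := exists_locate hd (fun x : A => v₀ x) (y v₀)
  refine ⟨(Finset.univ.image fun i => dotT (fcT (fun x : A => (x : ι)) c i)
      (vxT (fun x : A => (x : ι)) c i)) ∪
    Finset.univ.image fun i => dotT (fcT (fun x : A => (x : ι)) c i) y, ?_, fun U hU hy => ?_,
    fun v hv hQ h hh => ?_⟩
  · refine (Finset.card_union_le _ _).trans ?_
    rw [two_mul]
    exact Nat.add_le_add (Finset.card_image_le.trans (by simp)) (Finset.card_image_le.trans (by simp))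
  · intro p hp
    have hA : ∀ x : A, (x : ι) ∈ U := fun x => hU x.2
    rw [Finset.mem_union, Finset.mem_image, Finset.mem_image] at hp
    rcases hp with ⟨i, -, rfl⟩ | ⟨i, -, rfl⟩
    · exact dotT_mem (fcT_mem hA c i) (vxT_mem hA c i) (by omega) (by omega)
    · exact dotT_mem (fcT_mem hA c i) hy (by omega) (by omega)
  · refine (hc (fun x : A => v x) (y v) hv (fun i => ?_) (fun i => ?_) ⟨h, hh⟩).symm
    · exact (hQ _ (Finset.mem_union_left _ (Finset.mem_image_of_mem _ (Finset.mem_univ i)))).symm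
    · exact (hQ _ (Finset.mem_union_right _ (Finset.mem_image_of_mem _ (Finset.mem_univ i)))).symm

lemma halves_pow (hd : 2 ≤ d) {n : ℕ} (hn : 2 ≤ n) :
    8 * ((n / 2) ^ d + (n - n / 2) ^ d) ≤ 5 * n ^ d := by
  obtain ⟨e, rfl⟩ := Nat.exists_eq_add_of_le hd
  have h2 : 8 * ((n / 2) ^ 2 + (n - n / 2) ^ 2) ≤ 5 * n ^ 2 := by
    obtain ⟨q, h | h⟩ : ∃ q, n = 2 * q ∨ n = 2 * q + 1 := ⟨n / 2, by omega⟩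
    · have : n / 2 = q := by omega
      rw [this, h]
      have : 2 * q - q = q := by omega
      rw [this]; nlinarith
    · have : n / 2 = q := by omega
      rw [this, h]
      have : 2 * q + 1 - q = q + 1 := by omega
      rw [this]
      have : 1 ≤ q := by omega
      nlinarith
  have e1 : (n / 2) ^ e ≤ n ^ e := Nat.pow_le_pow_left (by omega) e
  have e2 : (n - n / 2) ^ e ≤ n ^ e := Nat.pow_le_pow_left (by omega) e
  calc 8 * ((n / 2) ^ (2 + e) + (n - n / 2) ^ (2 + e))
      = 8 * ((n / 2) ^ 2 * (n / 2) ^ e + (n - n / 2) ^ 2 * (n - n / 2) ^ e) := by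
        rw [pow_add, pow_add]
    _ ≤ 8 * ((n / 2) ^ 2 * n ^ e + (n - n / 2) ^ 2 * n ^ e) := by gcongr
    _ = 8 * ((n / 2) ^ 2 + (n - n / 2) ^ 2) * n ^ e := by ring
    _ ≤ 5 * n ^ 2 * n ^ e := by gcongr
    _ = _ := by ring

/-- All orientations of a family are certified by `O(|A| ^ d)` tests: halve the family, and locate
every cross product with respect to both halves. -/
lemma exists_cert_OT (hd : 2 ≤ d) : ∃ C : ℕ, ∀ (ι : Type) (v₀ : Cfg d ι) (A : Finset ι),
    ∃ Q : Finset (Test d ι), Q ⊆ Tst A ∧ Q.card ≤ C * A.card ^ d ∧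
      ∀ v, Agr v v₀ Q → SameOT (fun x : A => v₀ x) (fun x : A => v x) := by
  classical
  refine ⟨8 * (4 * (d + 1) * (d + 2) ^ d), fun ι v₀ => ?_⟩
  have key : ∀ n : ℕ, ∀ A : Finset ι, A.card = n → ∃ Q : Finset (Test d ι), Q ⊆ Tst A ∧
      Q.card ≤ 8 * (4 * (d + 1) * (d + 2) ^ d) * n ^ d ∧
      ∀ v, Agr v v₀ Q → SameOT (fun x : A => v₀ x) (fun x : A => v x) := by
    intro n
    induction n using Nat.strong_induction_on with
    | _ n ih =>
    intro A hA
    have hcard : Fintype.card (Fin d → A ⊕ Fin (d + 1)) = (n + (d + 1)) ^ d := by simp [hA]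
    rcases Nat.lt_or_ge n 2 with hn | hn
    · refine ⟨Finset.univ.image fun eh : (Fin d → A ⊕ Fin (d + 1)) × A =>
        dotT (fun v => cr fun l => hat (fun y : A => v y) (eh.1 l)) (fun v => v eh.2), ?_, ?_, ?_⟩
      · intro p hp
        obtain ⟨⟨e, h⟩, -, rfl⟩ := Finset.mem_image.1 hp
        exact dotT_mem (crT_mem (A := fun x : A => (x : ι)) (fun x => x.2) e) (base_mem h.2)
          (by omega) (by omega)
      · refine Finset.card_image_le.trans ?_
        rw [Finset.card_univ, Fintype.card_prod, hcard, Fintype.card_coe, hA]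
        interval_cases n
        · simp
        · rw [mul_one, one_pow, mul_one, show 1 + (d + 1) = d + 2 by omega]
          nlinarith [Nat.zero_le ((d + 2) ^ d), Nat.zero_le (d * (d + 2) ^ d)]
      · intro v hv e h
        exact (hv _ (Finset.mem_image_of_mem _ (Finset.mem_univ (e, h)))).symm
    · obtain ⟨A₁, hA₁, hc₁⟩ := Finset.exists_subset_card_eq (show n / 2 ≤ A.card by omega)
      have hc₂ : (A \ A₁).card = n - n / 2 := by
        rw [Finset.card_sdiff_of_subset hA₁]; omega
      obtain ⟨Q₁, hQ₁, hQc₁, hQ₁'⟩ := ih (n / 2) (by omega) A₁ hc₁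
      obtain ⟨Q₂, hQ₂, hQc₂, hQ₂'⟩ := ih (n - n / 2) (by omega) (A \ A₁) hc₂
      choose L₁ hL₁ hLs₁ hL₁' using fun e : Fin d → A ⊕ Fin (d + 1) =>
        exists_cert_loc hd A₁ v₀ fun v => cr fun l => hat (fun y : A => v y) (e l)
      choose L₂ hL₂ hLs₂ hL₂' using fun e : Fin d → A ⊕ Fin (d + 1) =>
        exists_cert_loc hd (A \ A₁) v₀ fun v => cr fun l => hat (fun y : A => v y) (e l)
      have hmem : ∀ e : Fin d → A ⊕ Fin (d + 1),
          (fun v : Cfg d ι => cr fun l => hat (fun y : A => v y) (e l)) ∈ lvl A 3 := fun e =>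
        lvl_mono (by omega) (crT_mem (A := fun x : A => (x : ι)) (fun x => x.2) e)
      refine ⟨(Q₁ ∪ Q₂) ∪ Finset.univ.biUnion fun e => L₁ e ∪ L₂ e, ?_, ?_, ?_⟩
      · refine Finset.union_subset (Finset.union_subset (hQ₁.trans (Tst_mono hA₁))
          (hQ₂.trans (Tst_mono Finset.sdiff_subset))) (Finset.biUnion_subset.2 fun e _ =>
          Finset.union_subset (hLs₁ e A hA₁ (hmem e)) (hLs₂ e A Finset.sdiff_subset (hmem e)))
      · have h1 : (Finset.univ.biUnion fun e => L₁ e ∪ L₂ e).card ≤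
            (n + (d + 1)) ^ d * (4 * (d + 1)) := by
          rw [← hcard, ← Finset.card_univ]
          refine Finset.card_biUnion_le_card_mul _ _ _ fun e _ => ?_
          refine (Finset.card_union_le _ _).trans ?_
          have := hL₁ e; have := hL₂ e; omega
        have h2 : (n + (d + 1)) ^ d ≤ (d + 2) ^ d * n ^ d := by
          rw [← mul_pow]
          exact Nat.pow_le_pow_left (by nlinarith) d
        have h3 := halves_pow hd hn
        have h4 := Finset.card_union_le (Q₁ ∪ Q₂) (Finset.univ.biUnion fun e => L₁ e ∪ L₂ e)
        have h5 := Finset.card_union_le Q₁ Q₂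
        set K := 4 * (d + 1) * (d + 2) ^ d with hK
        have h6 : (n + (d + 1)) ^ d * (4 * (d + 1)) ≤ K * n ^ d := by
          calc _ ≤ (d + 2) ^ d * n ^ d * (4 * (d + 1)) := by gcongr
            _ = _ := by rw [hK]; ring
        have h7 : K * (8 * ((n / 2) ^ d + (n - n / 2) ^ d)) ≤ K * (5 * n ^ d) :=
          Nat.mul_le_mul_left K h3
        have h8 : 8 * K * (n / 2) ^ d + 8 * K * (n - n / 2) ^ d =
          K * (8 * ((n / 2) ^ d + (n - n / 2) ^ d)) := by ring
        have h9 : 8 * K * n ^ d = K * (5 * n ^ d) + 3 * (K * n ^ d) := by ring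
        omega
      · intro v hv e h
        have hv₁ := hQ₁' v (hv.mono (Finset.subset_union_left.trans Finset.subset_union_left))
        have hv₂ := hQ₂' v (hv.mono (Finset.subset_union_right.trans Finset.subset_union_left))
        have hsub : L₁ e ∪ L₂ e ⊆ (Q₁ ∪ Q₂) ∪ Finset.univ.biUnion fun e => L₁ e ∪ L₂ e :=
          (Finset.subset_biUnion_of_mem (fun e => L₁ e ∪ L₂ e) (Finset.mem_univ e)).trans
            Finset.subset_union_right
        by_cases hh : (h : ι) ∈ A₁
        · exact (hL₁' e v hv₁ (hv.mono (Finset.subset_union_left.trans hsub)) h hh).symm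
        · exact (hL₂' e v hv₂ (hv.mono (Finset.subset_union_right.trans hsub)) h
            (Finset.mem_sdiff.2 ⟨h.2, hh⟩)).symm
  exact fun A => key _ A rfl

/-- The signs of the terms `V` against the vectors `H` are certified by splitting `H` into groups of
size `a`, certifying the orientations of each group, and locating each term in each group. -/
lemma exists_cert_prod (hd : 2 ≤ d) : ∃ C : ℕ, ∀ (ι : Type) (v₀ : Cfg d ι) (V : Finset (Tm d ι))
    (H : Finset ι) (a : ℕ), 1 ≤ a → ∃ Q : Finset (Test d ι),
      (∀ U : Finset ι, H ⊆ U → V ⊆ lvl U 3 → Q ⊆ Tst U) ∧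
      Q.card ≤ (H.card / a + 1) * (C * a ^ d + 2 * (d + 1) * V.card) ∧
      ∀ v, Agr v v₀ Q → ∀ t ∈ V, ∀ h ∈ H, sign (t v ⬝ᵥ v h) = sign (t v₀ ⬝ᵥ v₀ h) := by
  classical
  obtain ⟨C, hC⟩ := exists_cert_OT hd
  refine ⟨C, fun ι v₀ V H a ha => ?_⟩
  obtain ⟨P, hP, hP'⟩ := exists_chunks H ha
  choose Q hQ hQc hQ' using fun g => hC ι v₀ (P g)
  choose L hL hLs hL' using fun g => exists_cert_loc hd (P g) v₀
  refine ⟨Finset.univ.biUnion fun g => Q g ∪ V.biUnion (L g), fun U hU hV => ?_, ?_, ?_⟩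
  · refine Finset.biUnion_subset.2 fun g _ => Finset.union_subset
      ((hQ g).trans (Tst_mono ((hP g).2.trans hU))) (Finset.biUnion_subset.2 fun t ht =>
        hLs g t U ((hP g).2.trans hU) (hV ht))
  · refine (Finset.card_biUnion_le_card_mul _ _ (C * a ^ d + 2 * (d + 1) * V.card)
      fun g _ => ?_).trans (by simp)
    refine (Finset.card_union_le _ _).trans (Nat.add_le_add ((hQc g).trans ?_) ?_)
    · exact Nat.mul_le_mul_left C (Nat.pow_le_pow_left (hP g).1 d)
    · rw [mul_comm]; exact Finset.card_biUnion_le_card_mul _ _ _ fun t _ => hL g t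
  · intro v hv t ht h hh
    obtain ⟨g, hg⟩ := hP' h hh
    have hsub : Q g ∪ V.biUnion (L g) ⊆ Finset.univ.biUnion fun g => Q g ∪ V.biUnion (L g) :=
      Finset.subset_biUnion_of_mem (fun g => Q g ∪ V.biUnion (L g)) (Finset.mem_univ g)
    refine hL' g t v (hQ' g v (hv.mono (Finset.subset_union_left.trans hsub))) (hv.mono ?_) h hg
    exact (Finset.subset_biUnion_of_mem (L g) ht).trans (Finset.subset_union_right.trans hsub)

end Hop

namespace Hop
set_option linter.unusedSectionVars false
variable {d : ℕ} {ι : Type} [Fintype ι]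
open SignType (sign)

/-! ### Decision procedures with amortized cost -/

/-- The configurations of `S` on which the test `p` has sign `s`. -/
def br (S : Set (Cfg d ι)) (p : Test d ι) (s : SignType) : Set (Cfg d ι) :=
  S ∩ {v | sign (p v) = s}

lemma br_subset {S : Set (Cfg d ι)} {p : Test d ι} {s : SignType} : br S p s ⊆ S :=
  Set.inter_subset_left

/-- `Can Ψ G c S`: starting from the knowledge that the configuration lies in `S`, there is a
decision tree all of whose leaves `S'` satisfy `G` and have depth at most `c + Ψ S - Ψ S'`. -/
inductive Can (Ψ : Set (Cfg d ι) → ℝ) (G : Set (Cfg d ι) → Prop) : ℝ → Set (Cfg d ι) → Prop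
  | leaf {c : ℝ} {S : Set (Cfg d ι)} : 0 ≤ c → G S → Can Ψ G c S
  | node {c : ℝ} {S : Set (Cfg d ι)} (p : Test d ι) : p ∈ Tst Finset.univ →
      (∀ s, Can Ψ G (c - 1 + (Ψ S - Ψ (br S p s))) (br S p s)) → Can Ψ G c S

/-- The zero potential. -/
def noPot : Set (Cfg d ι) → ℝ := fun _ => 0

variable {Ψ Ψ₁ : Set (Cfg d ι) → ℝ} {G H : Set (Cfg d ι) → Prop} {S : Set (Cfg d ι)} {c c' e : ℝ}

lemma Can.mono (h : Can Ψ G c S) (hc : c ≤ c') : Can Ψ G c' S := by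
  induction h generalizing c' with
  | leaf h0 hG => exact .leaf (h0.trans hc) hG
  | node p hp _ ih => exact .node p hp fun s => ih s (by linarith)

lemma Can.sub (h : Can Ψ G c S) : Can Ψ (fun S' => G S' ∧ S' ⊆ S) c S := by
  have : ∀ {T : Set (Cfg d ι)}, S ⊆ T → Can Ψ (fun S' => G S' ∧ S' ⊆ T) c S := by
    induction h with
    | leaf h0 hG => exact fun hT => .leaf h0 ⟨hG, hT⟩
    | node p hp _ ih => exact fun hT => .node p hp fun s => ih s (br_subset.trans hT)
  exact this le_rfl

/-- Sequential composition, allowing for a change of the potential. -/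
lemma Can.bind_pot (h : Can Ψ₁ G c S)
    (hH : ∀ S' ⊆ S, G S' → Can Ψ H (e + (Ψ S - Ψ S') - (Ψ₁ S - Ψ₁ S')) S') :
    Can Ψ H (c + e) S := by
  induction h generalizing e with
  | @leaf c S h0 hG => exact (hH S le_rfl hG).mono (by linarith)
  | @node c S p hp _ ih =>
    refine .node p hp fun s => ?_
    refine (ih s (e := e + (Ψ S - Ψ (br S p s)) - (Ψ₁ S - Ψ₁ (br S p s))) fun S' hS' hG => ?_).mono
      (by linarith)
    exact (hH S' (hS'.trans br_subset) hG).mono (by linarith)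

lemma Can.bind (h : Can Ψ G c S) (hH : ∀ S' ⊆ S, G S' → Can Ψ H e S') : Can Ψ H (c + e) S :=
  h.bind_pot fun S' hS' hG => (hH S' hS' hG).mono (by linarith)

lemma Can.imp (h : Can Ψ G c S) (hH : ∀ S' ⊆ S, G S' → H S') : Can Ψ H c S := by
  have := h.bind (e := 0) (H := H) fun S' hS' hG => .leaf le_rfl (hH S' hS' hG)
  simpa using this

lemma Can.of_noPot (h : Can noPot G c S) (hΨ : ∀ S' ⊆ S, Ψ S' ≤ Ψ S) : Can Ψ G c S := by
  have := h.bind_pot (Ψ := Ψ) (e := 0) (H := G) fun S' hS' hG =>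
    .leaf (by simp only [noPot]; linarith [hΨ S' hS']) hG
  simpa using this

lemma Can.to_noPot (h : Can Ψ G c S) (hΨ : ∀ S', 0 ≤ Ψ S') : Can noPot G (c + Ψ S) S :=
  h.bind_pot fun S' _ hG => .leaf (by simp only [noPot]; linarith [hΨ S']) hG

/-- The sign of the test `p` is constant on `S`. -/
def Known (p : Test d ι) (S : Set (Cfg d ι)) : Prop := ∀ v ∈ S, ∀ w ∈ S, sign (p v) = sign (p w)

lemma Known.mono {p : Test d ι} {S S' : Set (Cfg d ι)} (h : Known p S) (hS : S' ⊆ S) : Known p S' :=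
  fun v hv w hw => h v (hS hv) w (hS hw)

/-- Performing independent tasks one after another. -/
lemma Can.forall {κ : Type} (s : Finset κ) {P : κ → Set (Cfg d ι) → Prop} {c : κ → ℝ}
    (hP : ∀ g ∈ s, ∀ S S', S' ⊆ S → P g S → P g S')
    (h : ∀ g ∈ s, ∀ S' ⊆ S, Can Ψ (P g) (c g) S') :
    Can Ψ (fun S' => ∀ g ∈ s, P g S') (∑ g ∈ s, c g) S := by
  classical
  induction s using Finset.induction_on generalizing S with
  | empty => exact .leaf (by simp) (by simp)
  | insert a s ha ih =>
    rw [Finset.sum_insert ha]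
    refine (h a (Finset.mem_insert_self a s) S le_rfl).bind fun S' hS' hPa => ?_
    refine (ih (S := S') (fun g hg => hP g (Finset.mem_insert_of_mem hg)) fun g hg T hT =>
      h g (Finset.mem_insert_of_mem hg) T (hT.trans hS')).imp fun S'' hS'' hPs g hg => ?_
    rcases Finset.mem_insert.1 hg with rfl | hg
    · exact hP g (Finset.mem_insert_self g s) S' S'' hS'' hPa
    · exact hPs g hg

/-- Querying a set of tests. -/
lemma Can.query (Q : Finset (Test d ι)) (hQ : Q ⊆ Tst Finset.univ) :
    Can noPot (fun S' => ∀ p ∈ Q, Known p S') (Q.card : ℝ) S := by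
  have := Can.forall (Ψ := noPot) (S := S) Q (P := fun p S' => Known p S') (c := fun _ => 1)
    (fun g _ S S' hS h => h.mono hS) fun p hp S' _ => .node p (hQ hp) fun s =>
      .leaf (by simp [noPot]) fun v hv w hw => by rw [hv.2, hw.2]
  simpa using this

/-! ### Amortization by majority voting -/

/-- The potential `W log (number of classes)`. -/
noncomputable def pot (U : Finset ι) (W : ℝ) (S : Set (Cfg d ι)) : ℝ := W * Real.log (ncl U S)

lemma pot_mono {U : Finset ι} {W : ℝ} (hW : 0 ≤ W) {S S' : Set (Cfg d ι)} (h : S' ⊆ S) :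
    pot U W S' ≤ pot U W S := by
  refine mul_le_mul_of_nonneg_left ?_ hW
  rcases Nat.eq_zero_or_pos (ncl U S') with h0 | h0
  · rw [h0]; simp only [Nat.cast_zero, Real.log_zero]; exact Real.log_natCast_nonneg _
  · exact Real.log_le_log (by exact_mod_cast h0) (by exact_mod_cast ncl_mono h)

lemma pot_nonneg {U : Finset ι} {W : ℝ} (hW : 0 ≤ W) (S : Set (Cfg d ι)) : 0 ≤ pot U W S :=
  mul_nonneg hW (Real.log_natCast_nonneg _)

/-- A decrease of a positive count by the factor `1 - δ` decreases its logarithm by `δ`. -/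
lemma log_gain {N N' : ℕ} (hN' : 0 < N') {δ : ℝ} (h : (N' : ℝ) ≤ (1 - δ) * N) :
    δ ≤ Real.log N - Real.log N' := by
  have h1 : (0 : ℝ) < N' := by exact_mod_cast hN'
  have h2 : (0 : ℝ) < N := by
    rcases Nat.eq_zero_or_pos N with h0 | h0
    · rw [h0] at h; simp at h; omega
    · exact_mod_cast h0
  have h3 := Real.log_le_sub_one_of_pos (div_pos h1 h2)
  rw [Real.log_div h1.ne' h2.ne'] at h3
  have h4 : (N' : ℝ) / N ≤ 1 - δ := by rwa [div_le_iff₀ h2]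
  linarith

open Classical in
/-- If every test of `T` has a sign taken by all but a small fraction of the sign vectors in `Y`,
then few sign vectors deviate somewhere on `T`. -/
lemma card_deviate {κ : Type} [Fintype κ] (Y : Finset (κ → SignType)) (T : Finset κ)
    (s : κ → SignType) {M : ℕ} (h : ∀ x ∈ T, M * (Y.filter fun z => z x ≠ s x).card ≤ Y.card) :
    M * (Y.filter fun z => ∃ x ∈ T, z x ≠ s x).card ≤ T.card * Y.card := by
  have h1 : (Y.filter fun z => ∃ x ∈ T, z x ≠ s x) ⊆ T.biUnion fun x => Y.filter fun z => z x ≠ s x := by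
    intro z hz
    obtain ⟨hz, x, hx, hx'⟩ := Finset.mem_filter.1 hz
    exact Finset.mem_biUnion.2 ⟨x, hx, Finset.mem_filter.2 ⟨hz, hx'⟩⟩
  calc _ ≤ M * ∑ x ∈ T, (Y.filter fun z => z x ≠ s x).card :=
        Nat.mul_le_mul_left M ((Finset.card_le_card h1).trans Finset.card_biUnion_le)
    _ = ∑ x ∈ T, M * (Y.filter fun z => z x ≠ s x).card := Finset.mul_sum _ _ _
    _ ≤ ∑ x ∈ T, Y.card := Finset.sum_le_sum h
    _ = _ := by simp

open Classical in
/-- The sign vectors occurring in `S`, as a finite set. -/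
noncomputable def clF (U : Finset ι) (S : Set (Cfg d ι)) :
    Finset ({p : Test d ι // p ∈ Tst U} → SignType) := (Set.toFinite (sgv U '' S)).toFinset

lemma mem_clF {U : Finset ι} {S : Set (Cfg d ι)} {z : {p : Test d ι // p ∈ Tst U} → SignType} :
    z ∈ clF U S ↔ ∃ v ∈ S, sgv U v = z := by simp [clF]

lemma card_clF (U : Finset ι) (S : Set (Cfg d ι)) : (clF U S).card = ncl U S :=
  (Set.ncard_eq_toFinset_card _ _).symm

/-- Guess and verify. Suppose that for every configuration `v₀` a procedure of cost `c` reaches the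
goal, or refutes that the signs on `T` are those of `v₀`. Then the goal is reached with amortized
cost `c`: guess the majority signs on `T`, so that a refutation eliminates most classes. -/
theorem gv {U : Finset ι} {T : Finset (Test d ι)} (hT : T ⊆ Tst U) {L : ℕ} (hL : T.card ≤ L)
    (hL1 : 1 ≤ L) (hG : G ∅) {W : ℝ} (hc : 0 ≤ c) (hWL : 4 * (L : ℝ) ≤ W) (hWc : c ≤ W)
    (htry : ∀ v₀, ∀ S' ⊆ S, Can noPot (fun S'' => G S'' ∨ ∀ v ∈ S'', ¬ Agr v v₀ T) c S') :
    Can (pot U W) G c S := by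
  classical
  have hL0 : (1 : ℝ) ≤ L := by exact_mod_cast hL1
  have hW0 : 0 ≤ W := by linarith
  obtain ⟨N, hN⟩ : ∃ N, ncl U S = N := ⟨_, rfl⟩
  induction N using Nat.strong_induction_on generalizing S with
  | _ N ih =>
  rcases S.eq_empty_or_nonempty with rfl | hS
  · exact .leaf hc hG
  have hNpos : 0 < N := hN ▸ ncl_pos hS
  have hbr : ∀ p (hp : p ∈ Tst U) s, ncl U (br S p s) =
      ((clF U S).filter fun z => z ⟨p, hp⟩ = s).card := by
    intro p hp s
    rw [← card_clF]
    congr 1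
    ext z
    rw [Finset.mem_filter, mem_clF, mem_clF]
    constructor
    · rintro ⟨v, hv, rfl⟩
      exact ⟨⟨v, hv.1, rfl⟩, hv.2⟩
    · rintro ⟨⟨v, hv, rfl⟩, h⟩
      exact ⟨v, ⟨hv, h⟩, rfl⟩
  by_cases hcase : ∃ p ∈ T, ∀ s, 4 * L * ncl U (br S p s) ≤ (4 * L - 1) * N
  · obtain ⟨p, hp, hps⟩ := hcase
    have hlt : ∀ s, ncl U (br S p s) < N := by
      intro s
      by_contra hcon
      push Not at hcon
      have h1 := hps s
      have h2 : 4 * L * N ≤ 4 * L * ncl U (br S p s) := Nat.mul_le_mul_left _ hcon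
      have h3 : (4 * L - 1) * N + N = 4 * L * N := by
        rw [← Nat.succ_mul]; congr 1; omega
      omega
    -- some branch is nonempty, and it does not contain all classes
    have hN2 : 2 ≤ N := by
      obtain ⟨v, hv⟩ := hS
      have h1 : 0 < ncl U (br S p (sign (p v))) := ncl_pos ⟨v, hv, rfl⟩
      have := hlt (sign (p v))
      omega
    refine .node p (Tst_mono (Finset.subset_univ U) (hT hp)) fun s => ?_
    rcases (br S p s).eq_empty_or_nonempty with h0 | h0
    · rw [h0]
      refine .leaf ?_ hG
      have h1 : Real.log 2 ≤ Real.log N := Real.log_le_log (by norm_num) (by exact_mod_cast hN2)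
      have h2 := Real.log_two_gt_d9
      have h3 : pot U W (∅ : Set (Cfg d ι)) = 0 := by simp [pot, ncl]
      have h4 : pot U W S = W * Real.log N := by rw [pot, hN]
      rw [h3, h4]
      nlinarith
    · refine (ih _ (hlt s) (fun v₀ S' hS' => htry v₀ S' (hS'.trans br_subset)) rfl).mono ?_
      have hδ : (1 / (4 * L) : ℝ) ≤ Real.log N - Real.log (ncl U (br S p s)) := by
        refine log_gain (ncl_pos h0) ?_
        have h1 := hps s
        have h2 : (4 * (L : ℝ)) * ncl U (br S p s) ≤ (4 * L - 1) * N := by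
          have : ((4 * L - 1 : ℕ) : ℝ) = 4 * L - 1 := by
            rw [Nat.cast_sub (by omega)]; simp
          rw [← this]; exact_mod_cast h1
        have h3 : (1 - 1 / (4 * L) : ℝ) * N = (4 * L - 1) * N / (4 * L) := by field_simp
        rw [h3, le_div_iff₀ (by positivity)]
        linarith
      have h5 : (1 : ℝ) ≤ W * (1 / (4 * L)) := by
        rw [mul_one_div, le_div_iff₀ (by positivity)]; linarith
      have h6 := mul_le_mul_of_nonneg_left hδ hW0
      simp only [pot, hN]
      linarith
  · push Not at hcase
    have hs : ∀ x : {p : Test d ι // p ∈ Tst U}, ∃ s, x.1 ∈ T →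
        (4 * L - 1) * N < 4 * L * ncl U (br S x.1 s) := by
      intro x
      by_cases hx : x.1 ∈ T
      · obtain ⟨s, h⟩ := hcase x.1 hx; exact ⟨s, fun _ => h⟩
      · exact ⟨0, fun h => absurd h hx⟩
    choose s hs using hs
    obtain ⟨T', hT'⟩ : ∃ T' : Finset {p : Test d ι // p ∈ Tst U}, ∀ x, x ∈ T' ↔ x.1 ∈ T :=
      ⟨Finset.univ.filter fun x => x.1 ∈ T, by simp⟩
    have hTc : T'.card ≤ L := by
      refine le_trans ?_ hL
      exact Finset.card_le_card_of_injOn (·.1) (fun x hx => (hT' x).1 hx)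
        (Subtype.val_injective.injOn)
    have hdev := card_deviate (clF U S) T' s (M := 4 * L) (by
      intro x hx
      have h1 := hs x ((hT' x).1 hx)
      rw [hbr x.1 x.2] at h1
      have h2 := Finset.card_filter_add_card_filter_not (s := clF U S) (fun z => z x = s x)
      rw [card_clF, hN] at h2
      rw [card_clF, hN]
      have h3 : (4 * L - 1) * N + N = 4 * L * N := by
        rw [← Nat.succ_mul]; congr 1; omega
      have h4 : 4 * L * ((clF U S).filter fun z => z x = s x).card +
        4 * L * ((clF U S).filter fun z => ¬ z x = s x).card = 4 * L * N := by
          rw [← mul_add, h2]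
      have h5 : (4 * L - 1) * N < 4 * L * ((clF U S).filter fun z => z x = s x).card := h1
      change 4 * L * ((clF U S).filter fun z => ¬ z x = s x).card ≤ N
      omega)
    rw [card_clF, hN] at hdev
    have hdev4 : 4 * ((clF U S).filter fun z => ∃ x ∈ T', z x ≠ s x).card ≤ N := by
      have : L * (4 * ((clF U S).filter fun z => ∃ x ∈ T', z x ≠ s x).card) ≤ L * N := by
        calc _ = 4 * L * ((clF U S).filter fun z => ∃ x ∈ T', z x ≠ s x).card := by ring
          _ ≤ T'.card * N := hdev
          _ ≤ _ := Nat.mul_le_mul_right N hTc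
      exact Nat.le_of_mul_le_mul_left this hL1
    obtain ⟨v₀, hv₀⟩ : ∃ v₀ : Cfg d ι, ∀ x ∈ T', sgv U v₀ x = s x := by
      by_contra hcon
      push Not at hcon
      have : ((clF U S).filter fun z => ∃ x ∈ T', z x ≠ s x) = clF U S := by
        refine Finset.filter_true_of_mem fun z hz => ?_
        obtain ⟨v, -, rfl⟩ := mem_clF.1 hz
        exact hcon v
      rw [this, card_clF, hN] at hdev4
      omega
    have := (htry v₀ S le_rfl).bind_pot (Ψ := pot U W) (H := G) (e := 0) fun S' hS' hleaf => by
      have hgain := pot_mono (U := U) hW0 hS'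
      rcases hleaf with hGS | href
      · exact .leaf (by simp only [noPot]; linarith) hGS
      rcases S'.eq_empty_or_nonempty with h0 | h0
      · exact .leaf (by simp only [noPot]; linarith) (h0 ▸ hG)
      have hle : 4 * ncl U S' ≤ N := by
        refine le_trans (Nat.mul_le_mul_left 4 ?_) hdev4
        rw [← card_clF]
        refine Finset.card_le_card fun z hz => ?_
        obtain ⟨v, hv, rfl⟩ := mem_clF.1 hz
        refine Finset.mem_filter.2 ⟨mem_clF.2 ⟨v, hS' hv, rfl⟩, ?_⟩
        have h1 := href v hv
        simp only [Agr, not_forall] at h1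
        obtain ⟨p, hp, hpv⟩ := h1
        refine ⟨⟨p, hT hp⟩, (hT' _).2 hp, fun h => hpv ?_⟩
        rw [← hv₀ _ ((hT' _).2 hp)] at h
        exact h
      have hpos := ncl_pos (U := U) h0
      refine (ih _ (by omega) (fun v₀ S'' hS'' => htry v₀ S'' (hS''.trans hS')) rfl).mono ?_
      have h1 : Real.log 4 + Real.log (ncl U S') ≤ Real.log N := by
        rw [← Real.log_mul (by norm_num) (by positivity)]
        exact Real.log_le_log (by positivity) (by exact_mod_cast hle)
      have h2 : 1 ≤ Real.log 4 := by
        have := Real.log_two_gt_d9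
        rw [show (4 : ℝ) = 2 ^ 2 by norm_num, Real.log_pow]
        push_cast; linarith
      simp only [pot, hN, noPot]
      nlinarith
    simpa using this

end Hop

namespace Hop
set_option linter.unusedSectionVars false
variable {d : ℕ} {ι : Type} [Fintype ι]
open SignType (sign)

/-! ### Point location -/

lemma convex_sign (g : Vec d) (s : SignType) : Convex ℝ {y : Vec d | sign (g ⬝ᵥ y) = s} := by
  have hlin : IsLinearMap ℝ fun y : Vec d => g ⬝ᵥ y :=
    ⟨fun x y => dotProduct_add _ _ _, fun c x => by simp⟩
  cases s with
  | zero =>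
    have : {y : Vec d | sign (g ⬝ᵥ y) = SignType.zero} = {y | g ⬝ᵥ y = 0} := by
      ext y; exact sign_eq_zero_iff
    rw [this]; exact convex_hyperplane hlin 0
  | neg =>
    have : {y : Vec d | sign (g ⬝ᵥ y) = SignType.neg} = {y | g ⬝ᵥ y < 0} := by
      ext y; exact sign_eq_neg_one_iff
    rw [this]; exact convex_halfSpace_lt hlin 0
  | pos =>
    have : {y : Vec d | sign (g ⬝ᵥ y) = SignType.pos} = {y | 0 < g ⬝ᵥ y} := by
      ext y; exact sign_eq_one_iff
    rw [this]; exact convex_halfSpace_gt hlin 0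

/-- If each sign `s x` is the sign of all but a fraction `1 / (d + 3)` of a set of realizable sign
vectors, then the sign vector `s` itself is realizable (Helly's theorem). -/
lemma exists_majority {κ : Type} [Fintype κ] (a : κ → Vec d) (Y : Finset (κ → SignType))
    (hY : ∀ z ∈ Y, ∃ y, ∀ x, sign (a x ⬝ᵥ y) = z x) (hne : Y.Nonempty) (s : κ → SignType)
    (h : ∀ x, (d + 3) * (Finset.card (Finset.filter (fun z => z x ≠ s x) Y)) ≤ Y.card) :
    ∃ y, ∀ x, sign (a x ⬝ᵥ y) = s x := by
  classical
  have hh := Convex.helly_theorem' (𝕜 := ℝ) (s := Finset.univ)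
    (F := fun x : κ => {y : Vec d | sign (a x ⬝ᵥ y) = s x}) (fun x _ => convex_sign _ _) (by
      intro I _ hI
      have hI' : I.card ≤ d + 2 := by
        simpa [Module.finrank_fin_fun] using hI
      have hdev := card_deviate Y I s (M := d + 3) fun x _ => by convert h x
      obtain ⟨z, hz, hz'⟩ : ∃ z ∈ Y, ∀ x ∈ I, z x = s x := by
        by_contra hcon
        push Not at hcon
        rw [Finset.filter_true_of_mem fun z hz => hcon z hz] at hdev
        have := hne.card_pos
        nlinarith
      obtain ⟨y, hy⟩ := hY z hz
      refine ⟨y, ?_⟩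
      simp only [Set.mem_iInter]
      exact fun x hx => (hy x).trans (hz' x hx))
  obtain ⟨y, hy⟩ := hh
  simp only [Set.mem_iInter] at hy
  exact ⟨y, fun x => hy x (Finset.mem_univ x)⟩

/-- Locating the vector `y` among the vectors `F` at a cost logarithmic in their number, knowing the
orientations of `F` (those of `v₀`). Every vector `y₀` selects a few members of `F`; the
result is some `y₀` for which the signs of `y` at the selected members are those of `y₀`. -/
theorem locate (hd : 2 ≤ d) {κ : Type} [Fintype κ] (F : κ → Tm d ι) (y : Tm d ι) (v₀ : Cfg d ι)
    {q : ℕ} (hq : 1 ≤ q) (sel : Vec d → Fin q → κ) (hF : ∀ x, dotT (F x) y ∈ Tst Finset.univ)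
    (S : Set (Cfg d ι)) :
    Can noPot (fun S' => (∃ y₀, ∀ i, ∀ v ∈ S', sign (F (sel y₀ i) v ⬝ᵥ y v) =
        sign (F (sel y₀ i) v₀ ⬝ᵥ y₀)) ∨
      ∀ v ∈ S', ¬ SameOT (fun x => F x v₀) (fun x => F x v))
      (q + q * (d + 3) * ((d + 1) * Real.log (4 * Fintype.card κ + 1))) S := by
  classical
  have hq1 : (1 : ℝ) ≤ q := by exact_mod_cast hq
  have key : ∀ n : ℕ, ∀ (S : Set (Cfg d ι)) (Y : Finset (κ → SignType)), Y.card = n →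
      (∀ z ∈ Y, ∃ w, ∀ x, sign (F x v₀ ⬝ᵥ w) = z x) →
      (∀ v ∈ S, SameOT (fun x => F x v₀) (fun x => F x v) → (fun x => sign (F x v ⬝ᵥ y v)) ∈ Y) →
      Can noPot (fun S' => (∃ y₀, ∀ i, ∀ v ∈ S', sign (F (sel y₀ i) v ⬝ᵥ y v) =
          sign (F (sel y₀ i) v₀ ⬝ᵥ y₀)) ∨
        ∀ v ∈ S', ¬ SameOT (fun x => F x v₀) (fun x => F x v))
        (q + q * (d + 3) * Real.log n) S := by
    intro n
    induction n using Nat.strong_induction_on with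
    | _ n ih =>
    intro S Y hYn hY hSY
    have hlog : 0 ≤ Real.log n := Real.log_natCast_nonneg n
    rcases Y.eq_empty_or_nonempty with rfl | hne
    · refine .leaf (by positivity) (Or.inr fun v hv hot => ?_)
      simpa using hSY v hv hot
    have hn0 : 0 < n := hYn ▸ hne.card_pos
    by_cases hcase : ∃ x, ∀ s, (d + 3) * (Y.filter fun z => z x = s).card ≤ (d + 2) * n
    · obtain ⟨x, hx⟩ := hcase
      refine .node _ (hF x) fun s => ?_
      have hlt : (Y.filter fun z => z x = s).card < n := by
        have := hx s; nlinarith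
      have hS' : ∀ v ∈ br S (dotT (F x) y) s, SameOT (fun x => F x v₀) (fun x => F x v) →
          (fun x => sign (F x v ⬝ᵥ y v)) ∈ Y.filter fun z => z x = s := fun v hv hot =>
        Finset.mem_filter.2 ⟨hSY v hv.1 hot, hv.2⟩
      refine (ih _ hlt _ _ rfl (fun z hz => hY z (Finset.mem_filter.1 hz).1) hS').mono ?_
      rcases Nat.eq_zero_or_pos (Y.filter fun z => z x = s).card with h0 | h0
      · -- an empty branch: at least two sign vectors remained before the query
        have hn2 : 2 ≤ n := by
          obtain ⟨z, hz⟩ := hne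
          have h1 : 0 < (Y.filter fun z' => z' x = z x).card :=
            Finset.card_pos.2 ⟨z, Finset.mem_filter.2 ⟨hz, rfl⟩⟩
          have := hx (z x)
          by_contra hcon
          have hn1 : n = 1 := by omega
          subst hn1
          nlinarith
        have h1 : Real.log 2 ≤ Real.log n := Real.log_le_log (by norm_num) (by exact_mod_cast hn2)
        have h2 := Real.log_two_gt_d9
        rw [h0]
        simp only [Nat.cast_zero, Real.log_zero, noPot, mul_zero]
        have h3 : (3 : ℝ) ≤ q * (d + 3) := by
          have : (0 : ℝ) ≤ d := Nat.cast_nonneg d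
          nlinarith
        nlinarith
      · have hg : (1 / (d + 3) : ℝ) ≤ Real.log n - Real.log (Y.filter fun z => z x = s).card := by
          refine log_gain h0 ?_
          have h1 : ((d + 3 : ℕ) : ℝ) * (Y.filter fun z => z x = s).card ≤ ((d + 2 : ℕ) : ℝ) * n := by
            exact_mod_cast hx s
          push_cast at h1
          have h3 : (1 - 1 / (d + 3) : ℝ) * n = (d + 2) * n / (d + 3) := by field_simp; ring
          rw [h3, le_div_iff₀ (by positivity)]
          linarith
        have h2 : (q : ℝ) * (d + 3) * (1 / (d + 3)) = q := by field_simp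
        have h4 : (q : ℝ) * (d + 3) * (1 / (d + 3)) ≤
            q * (d + 3) * (Real.log n - Real.log (Y.filter fun z => z x = s).card) :=
          mul_le_mul_of_nonneg_left hg (by positivity)
        simp only [noPot]
        nlinarith
    · push Not at hcase
      choose s hs using hcase
      have hs' : ∀ x, (d + 3) * (Y.filter fun z => z x ≠ s x).card ≤ n := by
        intro x
        have h2 := Finset.card_filter_add_card_filter_not (s := Y) (fun z => z x = s x)
        have h1 := hs x
        rw [hYn] at h2
        have h3 : (d + 3) * (Y.filter fun z => z x = s x).card +
          (d + 3) * (Y.filter fun z => ¬ z x = s x).card = (d + 3) * n := by rw [← mul_add, h2]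
        have h4 : (d + 3) * n = (d + 2) * n + n := by ring
        change (d + 3) * (Y.filter fun z => ¬ z x = s x).card ≤ n
        omega
      obtain ⟨y₀, hy₀⟩ := exists_majority (fun x => F x v₀) Y hY hne s
        (fun x => by rw [hYn]; convert hs' x)
      have hquery := Can.query (S := S) (Finset.univ.image fun i => dotT (F (sel y₀ i)) y) (by
        intro p hp
        obtain ⟨i, -, rfl⟩ := Finset.mem_image.1 hp
        exact hF _)
      have hcard : ((Finset.univ.image fun i => dotT (F (sel y₀ i)) y).card : ℝ) ≤ q := by
        have : (Finset.univ.image fun i => dotT (F (sel y₀ i)) y).card ≤ q :=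
          Finset.card_image_le.trans (by simp)
        exact_mod_cast this
      refine ((hquery.mono hcard).bind (e := q * (d + 3) * Real.log n) fun S' hS' hk => ?_)
      rcases S'.eq_empty_or_nonempty with rfl | ⟨v₁, hv₁⟩
      · exact .leaf (by positivity) (Or.inr (by simp))
      have hkn : ∀ i, Known (dotT (F (sel y₀ i)) y) S' := fun i =>
        hk _ (Finset.mem_image_of_mem _ (Finset.mem_univ i))
      by_cases hall : ∀ i, sign (F (sel y₀ i) v₁ ⬝ᵥ y v₁) = sign (F (sel y₀ i) v₀ ⬝ᵥ y₀)
      · exact .leaf (by positivity) (Or.inl ⟨y₀, fun i v hv => (hkn i v hv v₁ hv₁).trans (hall i)⟩)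
      · push Not at hall
        obtain ⟨i, hi⟩ := hall
        have hS'' : ∀ v ∈ S', SameOT (fun x => F x v₀) (fun x => F x v) →
            (fun x => sign (F x v ⬝ᵥ y v)) ∈ Y.filter fun z => z (sel y₀ i) ≠ s (sel y₀ i) := by
          intro v hv hot
          refine Finset.mem_filter.2 ⟨hSY v (hS' hv) hot, ?_⟩
          rw [← hy₀]
          exact fun h => hi ((hkn i v₁ hv₁ v hv).trans h)
        have hle := hs' (sel y₀ i)
        have hlt : (Y.filter fun z => z (sel y₀ i) ≠ s (sel y₀ i)).card < n := by nlinarith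
        rcases Nat.eq_zero_or_pos (Y.filter fun z => z (sel y₀ i) ≠ s (sel y₀ i)).card with h0 | h0
        · refine .leaf (by positivity) (Or.inr fun v hv hot => ?_)
          have := hS'' v hv hot
          rw [Finset.card_eq_zero.1 h0] at this
          simp at this
        · refine (ih _ hlt _ _ rfl (fun z hz => hY z (Finset.mem_filter.1 hz).1) hS'').mono ?_
          have hg : (1 / 2 : ℝ) ≤
              Real.log n - Real.log (Y.filter fun z => z (sel y₀ i) ≠ s (sel y₀ i)).card := by
            refine log_gain h0 ?_
            have : 2 * (Y.filter fun z => z (sel y₀ i) ≠ s (sel y₀ i)).card ≤ n := by nlinarith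
            have : (2 : ℝ) * (Y.filter fun z => z (sel y₀ i) ≠ s (sel y₀ i)).card ≤ n := by
              exact_mod_cast this
            linarith
          have h4 : (q : ℝ) * (d + 3) * (1 / 2) ≤ q * (d + 3) *
              (Real.log n - Real.log (Y.filter fun z => z (sel y₀ i) ≠ s (sel y₀ i)).card) :=
            mul_le_mul_of_nonneg_left hg (by positivity)
          have : (0 : ℝ) ≤ d := Nat.cast_nonneg d
          nlinarith
  have hfin : (Set.range fun (w : Vec d) (x : κ) => sign (F x v₀ ⬝ᵥ w)).Finite := Set.toFinite _
  have hcardY : hfin.toFinset.card ≤ (4 * Fintype.card κ + 1) ^ (d + 1) := by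
    rw [← Set.ncard_eq_toFinset_card _ hfin]; exact ncard_covectors fun x => F x v₀
  refine (key _ S hfin.toFinset rfl (fun z hz => ?_) (fun v _ hot => ?_)).mono ?_
  · obtain ⟨w, rfl⟩ := hfin.mem_toFinset.1 hz
    exact ⟨w, fun _ => rfl⟩
  · obtain ⟨w, hw⟩ := hot.symm.covector hd (y v)
    exact hfin.mem_toFinset.2 ⟨w, funext fun x => (hw x).symm⟩
  · gcongr
    rcases Nat.eq_zero_or_pos hfin.toFinset.card with h0 | h0
    · rw [h0]
      simp only [Nat.cast_zero, Real.log_zero]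
      have : 0 ≤ Real.log (4 * (Fintype.card κ : ℝ) + 1) :=
        Real.log_nonneg (by linarith [Nat.cast_nonneg (α := ℝ) (Fintype.card κ)])
      positivity
    · have h1 : (hfin.toFinset.card : ℝ) ≤ (4 * (Fintype.card κ : ℝ) + 1) ^ (d + 1) := by
        exact_mod_cast hcardY
      refine (Real.log_le_log (by exact_mod_cast h0) h1).trans ?_
      rw [Real.log_pow]; push_cast; rfl

end Hop

namespace Hop
set_option linter.unusedSectionVars false
variable {d : ℕ} {ι : Type} [Fintype ι]
open SignType (sign)

/-! ### Grouping vectors by the cells of a cutting -/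

/-- The facet normals of all cones of a family of pairs of cones. -/
def fam {κ : Type} (A : κ → ι) (Ξ : Finset (Code κ d × Code κ d))
    (x : Ξ × (Bool × Fin (d + 1))) : Tm d ι :=
  fcT A (if x.2.1 then x.1.1.1 else x.1.1.2) x.2.2

lemma fam_mem {κ : Type} {A : κ → ι} {U : Finset ι} (hA : ∀ x, A x ∈ U)
    (Ξ : Finset (Code κ d × Code κ d)) (x : Ξ × (Bool × Fin (d + 1))) : fam A Ξ x ∈ lvl U 2 :=
  fcT_mem hA _ _

/-- The orientations of the facet normals are among the tests. -/
lemma fam_agr {κ : Type} {A : κ → ι} {U : Finset ι} (hA : ∀ x, A x ∈ U)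
    {Ξ : Finset (Code κ d × Code κ d)} {v v₀ : Cfg d ι} (h : Agr v v₀ (Tst U)) :
    SameOT (fun x => fam A Ξ x v₀) (fun x => fam A Ξ x v) := by
  intro e x
  have hmem : (fun w : Cfg d ι => cr fun l => hat (fun x => fam A Ξ x w) (e l)) ∈ lvl U 3 := by
    refine cr_mem (l := 2) (c := fun l w => hat (fun x => fam A Ξ x w) (e l)) fun l => ?_
    cases e l with
    | inl x => exact fam_mem hA Ξ x
    | inr j => exact lvl_mono (by omega) (unit_mem j)
  exact (h _ (dotT_mem hmem (fam_mem hA Ξ x) (by omega) (by omega))).symm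

/-- The cost of locating one vector in a family of `g` pairs of cones. -/
noncomputable def locCost (d g : ℕ) : ℝ :=
  (2 * (d + 1) : ℕ) + (2 * (d + 1) : ℕ) * (d + 3) *
    ((d + 1) * Real.log (4 * (g * (2 * (d + 1)) : ℕ) + 1))

lemma locCost_nonneg (d g : ℕ) : 0 ≤ locCost d g := by
  have : 0 ≤ Real.log (4 * (g * (2 * (d + 1)) : ℕ) + 1) := Real.log_nonneg (by
    have : (0 : ℝ) ≤ (g * (2 * (d + 1)) : ℕ) := Nat.cast_nonneg _
    linarith)
  unfold locCost
  positivity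

/-- Locating the vectors `I` in a family of pairs of cones covering the space. Unless the
orientations of the facet normals turn out to differ from those of `v₀`, each vector of `I` is
assigned a pair of cones, and its signs against the vectors of `J` that do not conflict with both
cones become known. -/
theorem group_locate (hd : 2 ≤ d) {κ : Type} [Fintype κ] (A : κ → ι) (v₀ : Cfg d ι)
    (Ξ : Finset (Code κ d × Code κ d))
    (hLI : ∀ o ∈ Ξ, LinearIndependent ℝ (vx (fun x => v₀ (A x)) o.1) ∧
      LinearIndependent ℝ (vx (fun x => v₀ (A x)) o.2))
    (hcov : ∀ y, ∃ o ∈ Ξ, InCone (vx (fun x => v₀ (A x)) o.1) y ∧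
      InCone (vx (fun x => v₀ (A x)) o.2) y)
    (I J : Finset ι) (S : Set (Cfg d ι))
    (hself : ∀ v ∈ S, ∀ o ∈ Ξ, ∀ c, c = o.1 ∨ c = o.2 → ∀ i,
      sign (fcT A c i v ⬝ᵥ vxT A c i v) = sign (fcT A c i v₀ ⬝ᵥ vxT A c i v₀))
    (hJ : ∀ v ∈ S, ∀ o ∈ Ξ, ∀ c, c = o.1 ∨ c = o.2 → ∀ i, ∀ h ∈ J,
      sign (vxT A c i v ⬝ᵥ v h) = sign (vxT A c i v₀ ⬝ᵥ v₀ h)) :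
    Can noPot (fun S' => (∀ y ∈ I, ∃ o ∈ Ξ, ∀ h ∈ J, ¬ (Conflict (vx (fun x => v₀ (A x)) o.1) (v₀ h) ∧
        Conflict (vx (fun x => v₀ (A x)) o.2) (v₀ h)) → Known (bt y h) S') ∨
      ∀ v ∈ S', ¬ SameOT (fun x => fam A Ξ x v₀) (fun x => fam A Ξ x v))
      (I.card * locCost d Ξ.card) S := by
  classical
  choose oc hoc hoc1 hoc2 using hcov
  have hcard : Fintype.card (Bool × Fin (d + 1)) = 2 * (d + 1) := by simp
  have hall := Can.forall (Ψ := noPot) (S := S) I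
    (P := fun y S' => S' ⊆ S ∧ ((∃ o ∈ Ξ, ∀ h ∈ J, ¬ (Conflict (vx (fun x => v₀ (A x)) o.1) (v₀ h) ∧
        Conflict (vx (fun x => v₀ (A x)) o.2) (v₀ h)) → Known (bt y h) S') ∨
      ∀ v ∈ S', ¬ SameOT (fun x => fam A Ξ x v₀) (fun x => fam A Ξ x v)))
    (c := fun _ => locCost d Ξ.card) ?_ ?_
  · rw [Finset.sum_const, nsmul_eq_mul] at hall
    refine hall.imp fun S' hS' h => ?_
    by_cases hr : ∀ v ∈ S', ¬ SameOT (fun x => fam A Ξ x v₀) (fun x => fam A Ξ x v)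
    · exact Or.inr hr
    · exact Or.inl fun y hy => (h y hy).2.resolve_right hr
  · rintro y - S S' hS ⟨hs, h⟩
    refine ⟨hS.trans hs, ?_⟩
    rcases h with ⟨o, ho, h⟩ | h
    · exact Or.inl ⟨o, ho, fun j hj hc => (h j hj hc).mono hS⟩
    · exact Or.inr fun v hv => h v (hS hv)
  · intro y _ S' hS'
    have hloc := locate hd (fam A Ξ) (fun v => v y) v₀ (q := 2 * (d + 1)) (by omega)
      (fun y₀ i => (⟨oc y₀, hoc y₀⟩, (Fintype.equivFinOfCardEq hcard).symm i))
      (fun x => dotT_mem (fam_mem (fun _ => Finset.mem_univ _) Ξ x)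
        (base_mem (Finset.mem_univ y)) (by omega) (by omega)) S'
    have hc : Fintype.card (Ξ × (Bool × Fin (d + 1))) = Ξ.card * (2 * (d + 1)) := by
      rw [Fintype.card_prod, hcard, Fintype.card_coe]
    rw [hc] at hloc
    refine hloc.sub.imp fun S'' _ ⟨h, hS''⟩ => ⟨hS''.trans hS', ?_⟩
    rcases h with ⟨y₀, hy₀⟩ | h
    · refine Or.inl ⟨oc y₀, hoc y₀, fun h hh hcon => ?_⟩
      have hy' : ∀ b i, ∀ v ∈ S'', sign (fam A Ξ (⟨oc y₀, hoc y₀⟩, (b, i)) v ⬝ᵥ v y) =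
          sign (fam A Ξ (⟨oc y₀, hoc y₀⟩, (b, i)) v₀ ⬝ᵥ y₀) := fun b i v hv => by
        have := hy₀ (Fintype.equivFinOfCardEq hcard (b, i)) v hv
        simpa using this
      have hsign : ∀ v ∈ S'', sign (y₀ ⬝ᵥ v₀ h) = sign (v y ⬝ᵥ v h) := by
        intro v hv
        have hvS := hS' (hS'' hv)
        rcases not_and_or.1 hcon with hc1 | hc2
        · refine sign_of_cone (z' := vx (fun x => v (A x)) (oc y₀).1)
            (fun i => facet_dot_self_ne_zero (hLI _ (hoc y₀)).1 i) (hoc1 y₀)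
            (fun i => (hself v hvS _ (hoc y₀) _ (Or.inl rfl) i).symm) (fun i => ?_)
            (fun i => (hJ v hvS _ (hoc y₀) _ (Or.inl rfl) i h hh).symm) hc1
          exact (hy' true i v hv).symm
        · refine sign_of_cone (z' := vx (fun x => v (A x)) (oc y₀).2)
            (fun i => facet_dot_self_ne_zero (hLI _ (hoc y₀)).2 i) (hoc2 y₀)
            (fun i => (hself v hvS _ (hoc y₀) _ (Or.inr rfl) i).symm) (fun i => ?_)
            (fun i => (hJ v hvS _ (hoc y₀) _ (Or.inr rfl) i h hh).symm) hc2
          exact (hy' false i v hv).symm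
      exact fun v hv w hw => (hsign v hv).symm.trans (hsign w hw)
    · exact Or.inr h

/-! ### Reductions and solutions -/

/-- The pairs in `I × J` are known, apart from those `(i, j)` with `j` in a set of size at most `N'`
assigned to `i`; at most `G` such sets occur. -/
def Red (I J : Finset ι) (G N' : ℕ) (S : Set (Cfg d ι)) : Prop :=
  ∃ Γ : Finset (Finset ι), Γ.card ≤ G ∧ (∀ B ∈ Γ, B.card ≤ N' ∧ B ⊆ J) ∧
    ∀ i ∈ I, ∃ B ∈ Γ, ∀ j ∈ J, j ∉ B → Known (bt i j) S

/-- All pairs in `I × J` are known. -/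
def Sol (I J : Finset ι) (S : Set (Cfg d ι)) : Prop := ∀ i ∈ I, ∀ j ∈ J, Known (bt i j) S

lemma Known.empty (p : Test d ι) : Known p (∅ : Set (Cfg d ι)) := fun v hv => absurd hv (by simp)

lemma Known.swap {i j : ι} {S : Set (Cfg d ι)} (h : Known (bt i j) S) : Known (bt j i) S := by
  intro v hv w hw
  simpa [bt, dotProduct_comm] using h v hv w hw

lemma Sol.mono {I J : Finset ι} {S S' : Set (Cfg d ι)} (h : Sol I J S) (hS : S' ⊆ S) : Sol I J S' :=
  fun i hi j hj => (h i hi j hj).mono hS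

lemma Sol.swap {I J : Finset ι} {S : Set (Cfg d ι)} (h : Sol I J S) : Sol J I S :=
  fun j hj i hi => (h i hi j hj).swap

lemma Red.mono {I J : Finset ι} {G N' : ℕ} {S S' : Set (Cfg d ι)} (h : Red I J G N' S) (hS : S' ⊆ S) :
    Red I J G N' S' := by
  obtain ⟨Γ, h1, h2, h3⟩ := h
  refine ⟨Γ, h1, h2, fun i hi => ?_⟩
  obtain ⟨B, hB, h⟩ := h3 i hi
  exact ⟨B, hB, fun j hj hjB => (h j hj hjB).mono hS⟩

lemma Red.weaken {I J : Finset ι} {G N' G₁ N₁ : ℕ} {S : Set (Cfg d ι)} (h : Red I J G N' S)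
    (hG : G ≤ G₁) (hN : N' ≤ N₁) : Red I J G₁ N₁ S := by
  obtain ⟨Γ, h1, h2, h3⟩ := h
  exact ⟨Γ, h1.trans hG, fun B hB => ⟨(h2 B hB).1.trans hN, (h2 B hB).2⟩, h3⟩

lemma Red.empty {I J : Finset ι} {G N' : ℕ} (hG : 1 ≤ G) : Red I J G N' (∅ : Set (Cfg d ι)) :=
  ⟨{∅}, by simpa using hG, by simp, fun i _ => ⟨∅, by simp, fun j _ _ => Known.empty _⟩⟩

variable {Ψ : Set (Cfg d ι) → ℝ}

/-- Composition of reductions. -/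
lemma Red.comp {I J : Finset ι} {G N' G₂ N₂ : ℕ} {S : Set (Cfg d ι)} (h : Red I J G N' S)
    {α β : ℝ} (hα : 0 ≤ α)
    (hred : ∀ I' J', J' ⊆ J → I' ⊆ I → J'.card ≤ N' → ∀ S' ⊆ S,
      Can Ψ (Red I' J' G₂ N₂) (α + β * I'.card) S') :
    Can Ψ (Red I J (G * G₂) N₂) (G * α + β * I.card) S := by
  classical
  obtain ⟨Γ, h1, h2, h3⟩ := h
  choose! γ hγ hγ' using h3
  have hall := Can.forall (Ψ := Ψ) (S := S) Γ
    (P := fun B S' => Red (I.filter fun i => γ i = B) B G₂ N₂ S')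
    (c := fun B => α + β * (I.filter fun i => γ i = B).card)
    (fun B _ S S' hS h => h.mono hS)
    (fun B hB S' hS' => hred _ _ (h2 B hB).2 (Finset.filter_subset _ _) (h2 B hB).1 S' hS')
  have hsum : ∑ B ∈ Γ, (α + β * (I.filter fun i => γ i = B).card) = Γ.card * α + β * I.card := by
    rw [Finset.sum_add_distrib, Finset.sum_const, nsmul_eq_mul, ← Finset.mul_sum, ← Nat.cast_sum,
      ← Finset.card_eq_sum_card_fiberwise (fun i hi => hγ i hi)]
  rw [hsum] at hall
  have hG : (Γ.card : ℝ) ≤ G := by exact_mod_cast h1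
  refine (hall.mono (by gcongr)).imp fun S' hS' h => ?_
  choose! Γ' hΓ1 hΓ2 hΓ3 using h
  refine ⟨Γ.biUnion Γ', ?_, fun B hB => ?_, fun i hi => ?_⟩
  · exact (Finset.card_biUnion_le_card_mul _ _ _ hΓ1).trans (Nat.mul_le_mul_right _ h1)
  · obtain ⟨B', hB', hB⟩ := Finset.mem_biUnion.1 hB
    exact ⟨(hΓ2 B' hB' B hB).1, (hΓ2 B' hB' B hB).2.trans (h2 B' hB').2⟩
  · obtain ⟨B, hB, hk⟩ := hΓ3 (γ i) (hγ i hi) i (Finset.mem_filter.2 ⟨hi, rfl⟩)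
    refine ⟨B, Finset.mem_biUnion.2 ⟨_, hγ i hi, hB⟩, fun j hj hjB => ?_⟩
    by_cases hjγ : j ∈ γ i
    · exact hk j hjγ hjB
    · exact (hγ' i hi j hj hjγ).mono hS'

/-- Solving the subproblems of a reduction, after cutting their point sets into pieces of size at
most `M'`. -/
lemma Red.solve {I J : Finset ι} {G N' M' : ℕ} {S : Set (Cfg d ι)} (h : Red I J G N' S)
    (hM : 1 ≤ M') {c : ℝ} (hc : 0 ≤ c)
    (hsol : ∀ I' J', J' ⊆ J → I' ⊆ I → J'.card ≤ N' → I'.card ≤ M' → ∀ S' ⊆ S,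
      Can Ψ (Sol I' J') c S') :
    Can Ψ (Sol I J) ((I.card / M' + G) * c) S := by
  classical
  obtain ⟨Γ, h1, h2, h3⟩ := h
  choose! γ hγ hγ' using h3
  have hM0 : (0 : ℝ) < M' := by exact_mod_cast hM
  have hall := Can.forall (Ψ := Ψ) (S := S) Γ
    (P := fun B S' => Sol (I.filter fun i => γ i = B) B S')
    (c := fun B => ((I.filter fun i => γ i = B).card / M' + 1) * c)
    (fun B _ S S' hS h => h.mono hS) ?_
  · have hsum : ∑ B ∈ Γ, (((I.filter fun i => γ i = B).card / M' + 1) * c : ℝ) =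
        (I.card / M' + Γ.card) * c := by
      rw [← Finset.sum_mul, Finset.sum_add_distrib, Finset.sum_const, nsmul_eq_mul, mul_one,
        ← Finset.sum_div, ← Nat.cast_sum,
        ← Finset.card_eq_sum_card_fiberwise (fun i hi => hγ i hi)]
    rw [hsum] at hall
    have hG : (Γ.card : ℝ) ≤ G := by exact_mod_cast h1
    refine (hall.mono (by gcongr)).imp fun S' hS' h i hi j hj => ?_
    by_cases hjγ : j ∈ γ i
    · exact h (γ i) (hγ i hi) i (Finset.mem_filter.2 ⟨hi, rfl⟩) j hjγ
    · exact (hγ' i hi j hj hjγ).mono hS'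
  · intro B hB S' hS'
    obtain ⟨P, hP, hP'⟩ := exists_chunks (I.filter fun i => γ i = B) hM
    have hch := Can.forall (Ψ := Ψ) (S := S') Finset.univ (P := fun g S'' => Sol (P g) B S'')
      (c := fun _ => c) (fun g _ S S' hS h => h.mono hS) fun g _ S'' hS'' =>
        hsol _ _ (h2 B hB).2 ((hP g).2.trans (Finset.filter_subset _ _)) (h2 B hB).1 (hP g).1 S''
          (hS''.trans hS')
    rw [Finset.sum_const, nsmul_eq_mul, Finset.card_univ, Fintype.card_fin] at hch
    refine (hch.mono ?_).imp fun S'' _ h i hi j hj => ?_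
    · push_cast
      gcongr
      exact Nat.cast_div_le
    · obtain ⟨g, hg⟩ := hP' i hi
      exact h g (Finset.mem_univ g) i hg j hj

/-- The trivial reduction. -/
lemma Red.refl (I J : Finset ι) (S : Set (Cfg d ι)) : Red I J 1 J.card S :=
  ⟨{J}, by simp, by simp, fun i _ => ⟨J, by simp, fun j hj h => absurd hj h⟩⟩

/-- Brute force. -/
lemma Sol.brute (I J : Finset ι) (S : Set (Cfg d ι)) :
    Can noPot (Sol I J) (I.card * J.card : ℝ) S := by
  classical
  have hq := Can.query (S := S) ((I ×ˢ J).image fun ij => (bt ij.1 ij.2 : Test d ι)) (by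
    intro p hp
    obtain ⟨ij, -, rfl⟩ := Finset.mem_image.1 hp
    exact bt_mem (Finset.mem_univ _) (Finset.mem_univ _))
  refine (hq.mono ?_).imp fun S' _ h i hi j hj =>
    h _ (Finset.mem_image.2 ⟨(i, j), Finset.mem_product.2 ⟨hi, hj⟩, rfl⟩)
  have : ((I ×ˢ J).image fun ij => (bt ij.1 ij.2 : Test d ι)).card ≤ I.card * J.card :=
    Finset.card_image_le.trans (Finset.card_product _ _).le
  exact_mod_cast this

end Hop

namespace Hop
set_option linter.unusedSectionVars false
variable {d : ℕ} {ι : Type} [Fintype ι]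
open SignType (sign)

/-! ### Reduction and solution by guessing -/

open Classical in
/-- A grouping by the cells of a cutting with few conflicts is a reduction. -/
lemma Red.of_cells {κ : Type} {A : κ → ι} {v₀ : Cfg d ι} {Ξ : Finset (Code κ d × Code κ d)}
    {I J : Finset ι} {S : Set (Cfg d ι)} {G N' : ℕ} (hG : Ξ.card ≤ G)
    (hN : ∀ o ∈ Ξ, (J.filter fun h => Conflict (vx (fun x => v₀ (A x)) o.1) (v₀ h) ∧
        Conflict (vx (fun x => v₀ (A x)) o.2) (v₀ h)).card ≤ N')
    (h : ∀ y ∈ I, ∃ o ∈ Ξ, ∀ h ∈ J, ¬ (Conflict (vx (fun x => v₀ (A x)) o.1) (v₀ h) ∧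
        Conflict (vx (fun x => v₀ (A x)) o.2) (v₀ h)) → Known (bt y h) S) : Red I J G N' S := by
  refine ⟨Ξ.image fun o => J.filter fun h => Conflict (vx (fun x => v₀ (A x)) o.1) (v₀ h) ∧
        Conflict (vx (fun x => v₀ (A x)) o.2) (v₀ h), Finset.card_image_le.trans hG, fun B hB => ?_,
    fun i hi => ?_⟩
  · obtain ⟨o, ho, rfl⟩ := Finset.mem_image.1 hB
    exact ⟨hN o ho, Finset.filter_subset _ _⟩
  · obtain ⟨o, ho, hk⟩ := h i hi
    refine ⟨_, Finset.mem_image_of_mem _ ho, fun j hj hjB => hk j hj fun hc => hjB ?_⟩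
    exact Finset.mem_filter.2 ⟨hj, hc⟩

lemma locCost_le (d C : ℕ) : ∃ K : ℝ, 0 ≤ K ∧ ∀ g a : ℕ, 1 ≤ a → g ≤ C * a ^ d →
    locCost d g ≤ K * (Real.log a + 1) := by
  set K₀ : ℝ := Real.log (8 * C * (d + 1) + 1) with hK₀
  have hC0 : (0 : ℝ) ≤ C := Nat.cast_nonneg C
  have hd0 : (0 : ℝ) ≤ d := Nat.cast_nonneg d
  have hK0 : 0 ≤ K₀ := Real.log_nonneg (by nlinarith [mul_nonneg hC0 hd0])
  refine ⟨(2 * (d + 1)) + (2 * (d + 1)) * (d + 3) * (d + 1) * (K₀ + d), by positivity,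
    fun g a ha hg => ?_⟩
  have ha1 : (1 : ℝ) ≤ a := by exact_mod_cast ha
  have hla : 0 ≤ Real.log a := Real.log_nonneg ha1
  have hg' : (g : ℝ) ≤ C * (a : ℝ) ^ d := by exact_mod_cast hg
  have h1 : Real.log (4 * (g * (2 * (d + 1)) : ℕ) + 1) ≤ K₀ + d * Real.log a := by
    rw [hK₀, ← Real.log_pow, ← Real.log_mul (by positivity) (by positivity)]
    refine Real.log_le_log (by positivity) ?_
    push_cast
    have h2 : (1 : ℝ) ≤ (a : ℝ) ^ d := one_le_pow₀ ha1
    nlinarith [mul_le_mul_of_nonneg_right hg' (show (0 : ℝ) ≤ 8 * (d + 1) by positivity)]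
  have h3 : K₀ + d * Real.log a ≤ (K₀ + d) * (Real.log a + 1) := by
    nlinarith [mul_nonneg hK0 hla]
  unfold locCost
  push_cast at h1 ⊢
  have hq : (0 : ℝ) ≤ 2 * (d + 1) * (d + 3) * (d + 1) := by positivity
  have h4 := mul_le_mul_of_nonneg_left (h1.trans h3) hq
  have h5 : (0 : ℝ) ≤ 2 * (d + 1) * Real.log a := by positivity
  nlinarith

/-- The reduction by guessing a cutting of `J` and verifying it. -/
theorem stage2 (hd : 2 ≤ d) : ∃ C : ℕ, 1 ≤ C ∧ ∀ (ι : Type) [Fintype ι] (U I J : Finset ι), J ⊆ U →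
    ∀ (a : ℕ), 1 ≤ a → ∀ (W : ℝ) (S : Set (Cfg d ι)),
      4 * ((J.card : ℝ) + d + 2) ^ (2 * (d + 1) ^ 3) ≤ W →
      C * (J.card / a + 1) * a ^ d + C * (Real.log a + 1) * I.card ≤ W →
      Can (pot U W) (Red I J (C * a ^ d) (J.card / a))
        (C * (J.card / a + 1) * a ^ d + C * (Real.log a + 1) * I.card) S := by
  classical
  obtain ⟨C₀, hC₀⟩ := cutting_vec hd
  obtain ⟨C₁, hC₁⟩ := exists_cert_prod hd
  obtain ⟨K, hK0, hK⟩ := locCost_le d C₀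
  obtain ⟨C, hC⟩ : ∃ C : ℕ, C = C₀ + (C₁ + 4 * (d + 1) * (d + 1) * C₀ + 2 * (d + 1) * C₀) + ⌈K⌉₊ + 1 :=
    ⟨_, rfl⟩
  refine ⟨C, by omega, fun ι _ U I J hJU a ha W S hW1 hW2 => ?_⟩
  have ha1 : (1 : ℝ) ≤ a := by exact_mod_cast ha
  have hla : 0 ≤ Real.log a := Real.log_nonneg ha1
  have hGpos : 1 ≤ C * a ^ d := Nat.one_le_iff_ne_zero.2 (by
    have : C ≠ 0 := by omega
    positivity)
  refine gv (T := Tst J) (Tst_mono hJU) (L := (J.card + d + 2) ^ (2 * (d + 1) ^ 3)) (card_Tst hd J)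
    (Nat.one_le_iff_ne_zero.2 (by positivity)) (Red.empty hGpos) (by positivity)
    (by push_cast; exact hW1) hW2 fun v₀ S' _ => ?_
  obtain ⟨Ξ, hΞ, hLI, hcov, hcon⟩ := hC₀ J (fun x : J => v₀ x) a ha
  have hA : ∀ x : J, (x : ι) ∈ J := fun x => x.2
  -- all vertices of the cutting
  obtain ⟨V, hV⟩ : ∃ V : Finset (Tm d ι), V = (Ξ ×ˢ (Finset.univ : Finset (Bool × Fin (d + 1)))).image
      fun x => vxT (fun x : J => (x : ι)) (if x.2.1 then x.1.1 else x.1.2) x.2.2 := ⟨_, rfl⟩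
  have hVc : V.card ≤ Ξ.card * (2 * (d + 1)) := by
    rw [hV]; refine Finset.card_image_le.trans ?_
    rw [Finset.card_product]; simp
  have hVm : V ⊆ lvl J 3 := by
    intro t ht
    rw [hV] at ht
    obtain ⟨x, -, rfl⟩ := Finset.mem_image.1 ht
    exact lvl_mono (by omega) (vxT_mem hA _ _)
  obtain ⟨Q₁, hQ₁, hQ₁c, hQ₁'⟩ := hC₁ ι v₀ V J a ha
  obtain ⟨Q₂, hQ₂⟩ : ∃ Q : Finset (Test d ι),
      Q = (Ξ ×ˢ (Finset.univ : Finset (Bool × Fin (d + 1)))).image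
        fun x => dotT (fcT (fun x : J => (x : ι)) (if x.2.1 then x.1.1 else x.1.2) x.2.2)
          (vxT (fun x : J => (x : ι)) (if x.2.1 then x.1.1 else x.1.2) x.2.2) := ⟨_, rfl⟩
  have hQ₂c : Q₂.card ≤ Ξ.card * (2 * (d + 1)) := by
    rw [hQ₂]; refine Finset.card_image_le.trans ?_
    rw [Finset.card_product]; simp
  have hQ : Q₁ ∪ Q₂ ⊆ Tst J := by
    refine Finset.union_subset (hQ₁ J le_rfl hVm) fun p hp => ?_
    rw [hQ₂] at hp
    obtain ⟨x, -, rfl⟩ := Finset.mem_image.1 hp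
    exact dotT_mem (fcT_mem hA _ _) (vxT_mem hA _ _) (by omega) (by omega)
  have hcost : ((Q₁ ∪ Q₂).card : ℝ) + I.card * locCost d Ξ.card ≤
      C * (J.card / a + 1) * a ^ d + C * (Real.log a + 1) * I.card := by
    have h1 : (Q₁ ∪ Q₂).card ≤ C * (J.card / a + 1) * a ^ d := by
      refine (Finset.card_union_le _ _).trans ?_
      have e1 : (J.card / a + 1) * (C₁ * a ^ d + 2 * (d + 1) * V.card) ≤
          (J.card / a + 1) * (C₁ * a ^ d + 2 * (d + 1) * (C₀ * a ^ d * (2 * (d + 1)))) := by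
        gcongr
        exact hVc.trans (Nat.mul_le_mul_right _ hΞ)
      have e2 : Q₂.card ≤ (J.card / a + 1) * (C₀ * a ^ d * (2 * (d + 1))) := by
        refine (hQ₂c.trans (Nat.mul_le_mul_right _ hΞ)).trans ?_
        exact Nat.le_mul_of_pos_left _ (Nat.succ_pos _)
      calc Q₁.card + Q₂.card ≤ (J.card / a + 1) * (C₁ * a ^ d + 2 * (d + 1) *
            (C₀ * a ^ d * (2 * (d + 1)))) + (J.card / a + 1) * (C₀ * a ^ d * (2 * (d + 1))) :=
            Nat.add_le_add (hQ₁c.trans e1) e2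
        _ = (C₁ + 4 * (d + 1) * (d + 1) * C₀ + 2 * (d + 1) * C₀) * (J.card / a + 1) * a ^ d := by ring
        _ ≤ _ := by
          gcongr
          omega
    have h2 : ((Q₁ ∪ Q₂).card : ℝ) ≤ C * (J.card / a + 1) * a ^ d := by
      have : ((Q₁ ∪ Q₂).card : ℝ) ≤ ((C * (J.card / a + 1) * a ^ d : ℕ) : ℝ) := by exact_mod_cast h1
      refine this.trans ?_
      push_cast
      gcongr
      exact Nat.cast_div_le
    have h3 : locCost d Ξ.card ≤ C * (Real.log a + 1) := by
      refine (hK _ _ ha hΞ).trans (mul_le_mul_of_nonneg_right ?_ (by positivity))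
      refine (Nat.le_ceil K).trans ?_
      exact_mod_cast (by omega : ⌈K⌉₊ ≤ C)
    have h4 := mul_le_mul_of_nonneg_left h3 (Nat.cast_nonneg (α := ℝ) I.card)
    linarith
  refine Can.mono ?_ hcost
  refine (Can.query _ (hQ.trans (Tst_mono (Finset.subset_univ _)))).bind fun S'' _ hk => ?_
  have hlc : (0 : ℝ) ≤ I.card * locCost d Ξ.card :=
    mul_nonneg (Nat.cast_nonneg _) (locCost_nonneg _ _)
  by_cases hagr : ∀ v ∈ S'', Agr v v₀ (Q₁ ∪ Q₂)
  · refine (group_locate hd (fun x : J => (x : ι)) v₀ Ξ hLI hcov I J S'' ?_ ?_).imp fun R _ hR => ?_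
    · intro v hv o ho c hc i
      refine hagr v hv (dotT (fcT (fun x : J => (x : ι)) c i) (vxT (fun x : J => (x : ι)) c i))
        (Finset.mem_union_right _ ?_)
      rw [hQ₂]
      rcases hc with rfl | rfl
      · exact Finset.mem_image.2 ⟨(o, (true, i)), by simp [ho], rfl⟩
      · exact Finset.mem_image.2 ⟨(o, (false, i)), by simp [ho], rfl⟩
    · intro v hv o ho c hc i h hh
      refine hQ₁' v ((hagr v hv).mono Finset.subset_union_left) _ ?_ h hh
      rw [hV]
      rcases hc with rfl | rfl
      · exact Finset.mem_image.2 ⟨(o, (true, i)), by simp [ho], rfl⟩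
      · exact Finset.mem_image.2 ⟨(o, (false, i)), by simp [ho], rfl⟩
    · rcases hR with hR | hR
      · refine Or.inl (Red.of_cells (hΞ.trans (Nat.mul_le_mul_right _ (by omega))) (fun o ho => ?_) hR)
        rw [Nat.le_div_iff_mul_le ha]
        have h1 := hcon o ho
        rw [Fintype.card_coe] at h1
        refine le_trans (Nat.mul_le_mul_right a ?_) h1
        rw [Set.ncard_eq_toFinset_card']
        refine Finset.card_le_card_of_surjOn (fun x : J => (x : ι)) ?_
        intro h hh
        simp only [Finset.coe_filter, Set.mem_ofPred_eq] at hh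
        exact ⟨⟨h, hh.1⟩, by simpa using hh.2, rfl⟩
      · exact Or.inr fun v hv hv' => hR v hv (fam_agr hA hv')
  · refine .leaf hlc (Or.inr ?_)
    push Not at hagr
    obtain ⟨v₁, hv₁, hn⟩ := hagr
    intro v hv hv'
    exact hn fun p hp => (hk p hp v₁ hv₁ v hv).trans (hv' p (hQ hp))

/-- Solving a problem with few vectors in `I` by guessing and verifying all signs. -/
theorem smallSol (hd : 2 ≤ d) : ∃ C : ℕ, 1 ≤ C ∧ ∀ (ι : Type) [Fintype ι] (U I J : Finset ι),
    I ⊆ U → J ⊆ U → ∀ (ρ : ℕ), I.card ≤ ρ → J.card ≤ ρ ^ d → ∀ (W : ℝ) (S : Set (Cfg d ι)),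
      4 * ((I.card : ℝ) + J.card + d + 2) ^ (2 * (d + 1) ^ 3) ≤ W → (C * ρ ^ d : ℝ) ≤ W →
      Can (pot U W) (Sol I J) (C * ρ ^ d) S := by
  classical
  obtain ⟨C₀, hC₀⟩ := exists_cert_OT hd
  refine ⟨C₀ + 2 * (d + 1), by omega, fun ι _ U I J hIU hJU ρ hI hJ W S hW1 hW2 => ?_⟩
  have hcard : (I ∪ J).card + d + 2 ≤ I.card + J.card + d + 2 := by
    have := Finset.card_union_le I J; omega
  refine gv (T := Tst (I ∪ J)) (Tst_mono (Finset.union_subset hIU hJU))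
    (L := (I.card + J.card + d + 2) ^ (2 * (d + 1) ^ 3))
    ((card_Tst hd _).trans (Nat.pow_le_pow_left hcard _))
    (Nat.one_le_iff_ne_zero.2 (by positivity)) (fun i _ j _ => Known.empty _) (by positivity)
    (by push_cast; exact hW1) hW2 fun v₀ S' _ => ?_
  obtain ⟨Q₁, hQ₁, hQ₁c, hQ₁'⟩ := hC₀ ι v₀ I
  choose L hLc hLs hL using fun h : ι => exists_cert_loc hd I v₀ fun v => v h
  have hQ : Q₁ ∪ J.biUnion L ⊆ Tst (I ∪ J) := by
    refine Finset.union_subset (hQ₁.trans (Tst_mono Finset.subset_union_left))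
      (Finset.biUnion_subset.2 fun h hh => hLs h _ Finset.subset_union_left ?_)
    exact lvl_mono (by omega) (base_mem (Finset.mem_union_right _ hh))
  have hcost : ((Q₁ ∪ J.biUnion L).card : ℝ) ≤ (C₀ + 2 * (d + 1) : ℕ) * ρ ^ d := by
    have h1 : (Q₁ ∪ J.biUnion L).card ≤ (C₀ + 2 * (d + 1)) * ρ ^ d := by
      refine (Finset.card_union_le _ _).trans ?_
      have e1 : Q₁.card ≤ C₀ * ρ ^ d := hQ₁c.trans (by gcongr)
      have e2 : (J.biUnion L).card ≤ ρ ^ d * (2 * (d + 1)) :=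
        (Finset.card_biUnion_le_card_mul _ _ _ fun h _ => hLc h).trans (by gcongr)
      calc _ ≤ _ := Nat.add_le_add e1 e2
        _ = _ := by ring
    exact_mod_cast h1
  refine ((Can.query _ (hQ.trans (Tst_mono (Finset.subset_univ _)))).mono hcost).imp
    fun S'' _ hk => ?_
  by_cases hagr : ∀ v ∈ S'', Agr v v₀ (Q₁ ∪ J.biUnion L)
  · refine Or.inl fun i hi j hj => Known.swap ?_
    have h1 : ∀ v ∈ S'', sign (v j ⬝ᵥ v i) = sign (v₀ j ⬝ᵥ v₀ i) := fun v hv =>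
      hL j v (hQ₁' v ((hagr v hv).mono Finset.subset_union_left)) ((hagr v hv).mono
        ((Finset.subset_biUnion_of_mem L hj).trans Finset.subset_union_right)) i hi
    exact fun v hv w hw => (h1 v hv).trans (h1 w hw).symm
  · refine Or.inr ?_
    push Not at hagr
    obtain ⟨v₁, hv₁, hn⟩ := hagr
    intro v hv hv'
    exact hn fun p hp => (hk p hp v₁ hv₁ v hv).trans (hv' p (hQ hp))

end Hop

namespace Hop
set_option linter.unusedSectionVars false
variable {d : ℕ} {ι : Type} [Fintype ι]
open SignType (sign)

/-! ### Approximations -/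

/-- The range of a pair of cones: the vectors that conflict with both. -/
def Rg (Y : Bool × Fin (d + 1) → Vec d) (h : Vec d) : Prop :=
  Conflict (fun i => Y (true, i)) h ∧ Conflict (fun i => Y (false, i)) h

lemma Rg_congr {Y Y' : Bool × Fin (d + 1) → Vec d} {h h' : Vec d}
    (H : ∀ x, sign (h ⬝ᵥ Y x) = sign (h' ⬝ᵥ Y' x)) : Rg Y h ↔ Rg Y' h' := by
  have hn : ∀ x, Y x ⬝ᵥ h < 0 ↔ Y' x ⬝ᵥ h' < 0 := fun x => by
    rw [← sign_eq_neg_one_iff, ← sign_eq_neg_one_iff, dotProduct_comm, H, dotProduct_comm]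
  have hp : ∀ x, 0 < Y x ⬝ᵥ h ↔ 0 < Y' x ⬝ᵥ h' := fun x => by
    rw [← sign_eq_one_iff, ← sign_eq_one_iff, dotProduct_comm, H, dotProduct_comm]
  simp only [Rg, Conflict, hn, hp]

open Classical in
/-- The number of sets cut out of a family of vectors by ranges. -/
lemma exists_ranges {κ : Type} [Fintype κ] (a : κ → Vec d) :
    ∃ F : Finset (κ → Prop), F.card ≤ ((4 * Fintype.card κ + 1) ^ (d + 1)) ^ (2 * (d + 1)) ∧
      ∀ Y, (fun x => Rg Y (a x)) ∈ F := by
  have hfin : (Set.range fun (y : Vec d) (x : κ) => sign (a x ⬝ᵥ y)).Finite := Set.toFinite _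
  refine ⟨(Fintype.piFinset fun _ : Bool × Fin (d + 1) => hfin.toFinset).image
    fun g x => ((∃ i, g (true, i) x = -1) ∧ ∃ i, g (true, i) x = 1) ∧
      (∃ i, g (false, i) x = -1) ∧ ∃ i, g (false, i) x = 1, ?_, fun Y => ?_⟩
  · refine Finset.card_image_le.trans ?_
    rw [Fintype.card_piFinset, Finset.prod_const, Finset.card_univ, Fintype.card_prod,
      Fintype.card_bool, Fintype.card_fin, ← Set.ncard_eq_toFinset_card _ hfin]
    exact Nat.pow_le_pow_left (ncard_covectors a) _
  · refine Finset.mem_image.2 ⟨fun z x => sign (a x ⬝ᵥ Y z), Fintype.mem_piFinset.2 fun z =>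
      hfin.mem_toFinset.2 ⟨Y z, rfl⟩, funext fun x => ?_⟩
    simp only [sign_eq_neg_one_iff, sign_eq_one_iff, Rg, Conflict, dotProduct_comm (a x)]

/-- The exponential moment of a random signed sum. -/
lemma sum_exp_signs {s : ℕ} (δ : Fin s → ℝ) (hδ : ∀ i, |δ i| ≤ 1) (t : ℝ) :
    ∑ ε : Fin s → Bool, Real.exp (t * ∑ i, (if ε i then δ i else - δ i)) ≤
      2 ^ s * Real.exp (s * t ^ 2 / 2) := by
  have h1 : ∀ ε : Fin s → Bool, Real.exp (t * ∑ i, (if ε i then δ i else - δ i)) =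
      ∏ i, Real.exp (t * (if ε i then δ i else - δ i)) := fun ε => by
    rw [Finset.mul_sum, Real.exp_sum]
  simp only [h1]
  have h2 := Finset.prod_univ_sum (fun _ : Fin s => (Finset.univ : Finset Bool))
    (fun i b => Real.exp (t * (if b then δ i else - δ i)))
  rw [Fintype.piFinset_univ] at h2
  rw [← h2]
  calc _ ≤ ∏ _i : Fin s, (2 * Real.exp (t ^ 2 / 2)) := by
        refine Finset.prod_le_prod (fun i _ => by positivity) fun i _ => ?_
        have h3 : ∑ b : Bool, Real.exp (t * (if b then δ i else - δ i)) = 2 * Real.cosh (t * δ i) := by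
          rw [Real.cosh_eq]; simp; ring
        rw [h3]
        refine mul_le_mul_of_nonneg_left ((Real.cosh_le_exp_half_sq _).trans ?_) (by norm_num)
        refine Real.exp_le_exp.2 ?_
        have : δ i ^ 2 ≤ 1 := by
          have := hδ i
          rw [abs_le] at this
          nlinarith
        rw [mul_pow]
        nlinarith [sq_nonneg t]
    _ = _ := by
        rw [Finset.prod_const, Finset.card_univ, Fintype.card_fin, mul_pow, ← Real.exp_nat_mul]
        congr 2; ring

open Classical in
/-- Out of `s` pairs of vectors, one vector of each pair can be selected such that every range
contains about half of its members. -/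
lemma exists_halving {s : ℕ} (a : Fin s × Bool → Vec d) {η : ℝ} (hη : 0 ≤ η)
    (h : 2 * (((8 * s + 1 : ℕ) : ℝ) ^ (d + 1)) ^ (2 * (d + 1)) ≤ Real.exp (s * η ^ 2 / 2)) :
    ∃ ε : Fin s → Bool, ∀ Y, |2 * ((Finset.univ.filter fun i => Rg Y (a (i, ε i))).card : ℝ) -
      (Finset.univ.filter fun i => Rg Y (a (i, true))).card -
      (Finset.univ.filter fun i => Rg Y (a (i, false))).card| ≤ η * s := by
  obtain ⟨F, hF, hF'⟩ := exists_ranges a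
  have hcard : Fintype.card (Fin s × Bool) = s * 2 := by simp
  rw [hcard] at hF
  have hFr : 2 * (F.card : ℝ) ≤ Real.exp (s * η ^ 2 / 2) := by
    refine le_trans ?_ h
    have : F.card ≤ ((8 * s + 1) ^ (d + 1)) ^ (2 * (d + 1)) := by
      refine hF.trans (le_of_eq ?_); congr 2; ring
    have : (F.card : ℝ) ≤ (((8 * s + 1 : ℕ) : ℝ) ^ (d + 1)) ^ (2 * (d + 1)) := by exact_mod_cast this
    linarith
  obtain ⟨δ, hδ⟩ : ∃ δ : (Fin s × Bool → Prop) → Fin s → ℝ, ∀ f i,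
      δ f i = (if f (i, true) then 1 else 0) - (if f (i, false) then 1 else 0) := ⟨_, fun _ _ => rfl⟩
  have hδ1 : ∀ f i, |δ f i| ≤ 1 := fun f i => by
    rw [hδ]; split_ifs <;> norm_num
  have key : ∃ ε : Fin s → Bool, ∀ f ∈ F, |∑ i, (if ε i then δ f i else - δ f i)| ≤ η * s := by
    by_contra hcon
    push Not at hcon
    have hlow : (2 : ℝ) ^ s * Real.exp (s * η ^ 2) < ∑ ε : Fin s → Bool, ∑ f ∈ F,
        (Real.exp (η * ∑ i, (if ε i then δ f i else - δ f i)) +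
          Real.exp (-η * ∑ i, (if ε i then δ f i else - δ f i))) := by
      have h2 : (2 : ℝ) ^ s * Real.exp (s * η ^ 2) =
          ∑ ε : Fin s → Bool, Real.exp (s * η ^ 2) := by simp
      rw [h2]
      refine Finset.sum_lt_sum_of_nonempty ⟨fun _ => true, Finset.mem_univ _⟩ fun ε _ => ?_
      obtain ⟨f, hf, hlt⟩ := hcon ε
      have h3 : Real.exp (η * ∑ i, (if ε i then δ f i else - δ f i)) +
          Real.exp (-η * ∑ i, (if ε i then δ f i else - δ f i)) ≤ _ :=
        Finset.single_le_sum (f := fun f => Real.exp (η * ∑ i, (if ε i then δ f i else - δ f i)) +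
          Real.exp (-η * ∑ i, (if ε i then δ f i else - δ f i))) (fun f _ => by positivity) hf
      refine lt_of_lt_of_le ?_ h3
      rcases lt_abs.1 hlt with hp | hm
      · have : Real.exp (s * η ^ 2) ≤ Real.exp (η * ∑ i, (if ε i then δ f i else - δ f i)) :=
          Real.exp_le_exp.2 (by nlinarith)
        linarith [Real.exp_pos (-η * ∑ i, (if ε i then δ f i else - δ f i))]
      · have : Real.exp (s * η ^ 2) ≤ Real.exp (-η * ∑ i, (if ε i then δ f i else - δ f i)) :=
          Real.exp_le_exp.2 (by nlinarith)
        linarith [Real.exp_pos (η * ∑ i, (if ε i then δ f i else - δ f i))]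
    rw [Finset.sum_comm] at hlow
    have hup : ∀ f ∈ F, ∑ ε : Fin s → Bool, (Real.exp (η * ∑ i, (if ε i then δ f i else - δ f i)) +
          Real.exp (-η * ∑ i, (if ε i then δ f i else - δ f i))) ≤
        2 * (2 ^ s * Real.exp (s * η ^ 2 / 2)) := fun f _ => by
      rw [Finset.sum_add_distrib]
      have e1 := sum_exp_signs (δ f) (hδ1 f) η
      have e2 := sum_exp_signs (δ f) (hδ1 f) (-η)
      rw [neg_sq] at e2
      linarith
    have hsum := Finset.sum_le_sum hup
    rw [Finset.sum_const, nsmul_eq_mul] at hsum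
    have h5 : Real.exp (s * η ^ 2) = Real.exp (s * η ^ 2 / 2) * Real.exp (s * η ^ 2 / 2) := by
      rw [← Real.exp_add]; congr 1; ring
    rw [h5] at hlow
    have h6 : (0 : ℝ) < 2 ^ s * Real.exp (s * η ^ 2 / 2) := by positivity
    nlinarith [mul_le_mul_of_nonneg_right hFr h6.le]
  obtain ⟨ε, hε⟩ := key
  refine ⟨ε, fun Y => ?_⟩
  have h1 := hε _ (hF' Y)
  have h2 : ∑ i, (if ε i then δ (fun x => Rg Y (a x)) i else - δ (fun x => Rg Y (a x)) i) =
      2 * ((Finset.univ.filter fun i => Rg Y (a (i, ε i))).card : ℝ) -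
      (Finset.univ.filter fun i => Rg Y (a (i, true))).card -
      (Finset.univ.filter fun i => Rg Y (a (i, false))).card := by
    simp only [Finset.card_filter, Nat.cast_sum, Finset.mul_sum, ← Finset.sum_sub_distrib]
    refine Finset.sum_congr rfl fun i _ => ?_
    rw [hδ]
    cases ε i <;> by_cases h1 : Rg Y (a (i, true)) <;> by_cases h2 : Rg Y (a (i, false)) <;>
      simp [h1, h2] <;> norm_num
  rw [← h2]
  exact h1

open Classical in
/-- The family `A` of size `s` approximates the `2 ^ j` vectors `f p, f (p + 1), …` with relative
error `e` with respect to ranges. -/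
def Apx (f : ℕ → ι) {s : ℕ} (A : Fin s → ι) (p j : ℕ) (e : ℝ) (v : Cfg d ι) : Prop :=
  ∀ Y, |2 ^ j * ((Finset.univ.filter fun i => Rg Y (v (A i))).card : ℝ) -
    s * (((Finset.range (2 ^ j)).filter fun t => Rg Y (v (f (p + t)))).card : ℝ)| ≤ e * (2 ^ j * s)

open Classical in
lemma Apx.merge {f : ℕ → ι} {s : ℕ} {A₁ A₂ A : Fin s → ι} {p j : ℕ} {e η : ℝ} (hη : 0 ≤ η)
    {v : Cfg d ι}
    (h₁ : Apx f A₁ p j e v) (h₂ : Apx f A₂ (p + 2 ^ j) j e v)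
    (h : ∀ Y, |2 * ((Finset.univ.filter fun i => Rg Y (v (A i))).card : ℝ) -
      (Finset.univ.filter fun i => Rg Y (v (A₁ i))).card -
      (Finset.univ.filter fun i => Rg Y (v (A₂ i))).card| ≤ η * s) :
    Apx f A p (j + 1) (e + η) v := by
  intro Y
  have e1 := h₁ Y
  have e2 := h₂ Y
  have e3 := h Y
  have hsplit : ((Finset.range (2 ^ (j + 1))).filter fun t => Rg Y (v (f (p + t)))).card =
      ((Finset.range (2 ^ j)).filter fun t => Rg Y (v (f (p + t)))).card +
      ((Finset.range (2 ^ j)).filter fun t => Rg Y (v (f (p + 2 ^ j + t)))).card := by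
    rw [pow_succ, mul_two]
    simp only [Finset.card_filter]
    rw [Finset.sum_range_add]
    simp only [add_assoc]
  have hsplit' : (((Finset.range (2 ^ (j + 1))).filter fun t => Rg Y (v (f (p + t)))).card : ℝ) =
      ((Finset.range (2 ^ j)).filter fun t => Rg Y (v (f (p + t)))).card +
      ((Finset.range (2 ^ j)).filter fun t => Rg Y (v (f (p + 2 ^ j + t)))).card := by
    exact_mod_cast hsplit
  rw [hsplit']
  have hx : (0 : ℝ) < 2 ^ j := by positivity
  have hs : (0 : ℝ) ≤ s := Nat.cast_nonneg s
  rw [abs_le] at e1 e2 e3 ⊢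
  rw [pow_succ]
  have e4 := mul_le_mul_of_nonneg_left e3.1 hx.le
  have e5 := mul_le_mul_of_nonneg_left e3.2 hx.le
  have e6 : 0 ≤ η * (2 ^ j * s) := by positivity
  constructor <;> nlinarith

end Hop

namespace Hop
set_option linter.unusedSectionVars false
variable {d : ℕ} {ι : Type} [Fintype ι]
open SignType (sign)

open Classical in
/-- The tests for the orientations of a family. -/
noncomputable def otT {κ : Type} [Fintype κ] (A : κ → ι) : Finset (Test d ι) :=
  Finset.univ.image fun eh : (Fin d → κ ⊕ Fin (d + 1)) × κ =>
    dotT (fun v => cr fun l => hat (fun y => v (A y)) (eh.1 l)) (fun v => v (A eh.2))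

lemma otT_subset {κ : Type} [Fintype κ] (A : κ → ι) :
    (otT A : Finset (Test d ι)) ⊆ Tst Finset.univ := by
  classical
  intro p hp
  obtain ⟨⟨e, h⟩, -, rfl⟩ := Finset.mem_image.1 hp
  exact dotT_mem (crT_mem (fun x => Finset.mem_univ _) e) (base_mem (Finset.mem_univ _))
    (by omega) (by omega)

lemma card_otT {κ : Type} [Fintype κ] (A : κ → ι) :
    (otT A : Finset (Test d ι)).card ≤ (Fintype.card κ + (d + 1)) ^ d * Fintype.card κ := by
  classical
  exact Finset.card_image_le.trans (by simp)

lemma sameOT_of_known {κ : Type} [Fintype κ] {A : κ → ι} {S : Set (Cfg d ι)}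
    (h : ∀ p ∈ (otT A : Finset (Test d ι)), Known p S) {v w : Cfg d ι} (hv : v ∈ S) (hw : w ∈ S) :
    SameOT (fun x => v (A x)) (fun x => w (A x)) := by
  classical
  intro e x
  exact h _ (Finset.mem_image_of_mem _ (Finset.mem_univ (e, x))) v hv w hw

/-- Computing an approximation of `2 ^ j` vectors by repeatedly halving unions of approximations. -/
lemma exists_apx (hd : 2 ≤ d) {s : ℕ} {η : ℝ} (hη : 0 ≤ η)
    (h : 2 * (((8 * s + 1 : ℕ) : ℝ) ^ (d + 1)) ^ (2 * (d + 1)) ≤ Real.exp (s * η ^ 2 / 2))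
    (f : ℕ → ι) (J : Finset ι) (hf : ∀ t, f t ∈ J) (j : ℕ) : ∀ (p : ℕ) (S : Set (Cfg d ι)),
    Can noPot (fun S' => ∃ A : Fin s → ι, (∀ i, A i ∈ J) ∧ ∀ v ∈ S', Apx f A p j (j * η) v)
      ((2 ^ j - 1) * ((2 * s + (d + 1)) ^ d * (2 * s) : ℕ)) S := by
  classical
  induction j with
  | zero =>
    intro p S
    refine .leaf (by simp) ⟨fun _ => f p, fun _ => hf p, fun v _ Y => ?_⟩
    by_cases hR : Rg Y (v (f p)) <;> simp [hR, Finset.filter_singleton]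
  | succ j ih =>
    intro p S
    have h1 := (ih p S).bind (e := ((2 : ℝ) ^ j - 1) * ((2 * s + (d + 1)) ^ d * (2 * s) : ℕ) +
      ((2 * s + (d + 1)) ^ d * (2 * s) : ℕ)) (H := fun S' => ∃ A : Fin s → ι, (∀ i, A i ∈ J) ∧
        ∀ v ∈ S', Apx f A p (j + 1) ((j + 1 : ℕ) * η) v) ?_
    · refine h1.mono (le_of_eq ?_)
      rw [pow_succ]; ring
    rintro S₁ hS₁ ⟨A₁, hA₁, hA₁'⟩
    refine (ih (p + 2 ^ j) S₁).bind ?_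
    rintro S₂ hS₂ ⟨A₂, hA₂, hA₂'⟩
    obtain ⟨B, hB1, hB2⟩ : ∃ B : Fin s × Bool → ι, (∀ i, B (i, true) = A₁ i) ∧
        ∀ i, B (i, false) = A₂ i :=
      ⟨fun x => if x.2 then A₁ x.1 else A₂ x.1, fun _ => rfl, fun _ => rfl⟩
    have hBJ : ∀ x, B x ∈ J := by
      rintro ⟨i, b⟩
      cases b
      · rw [hB2]; exact hA₂ i
      · rw [hB1]; exact hA₁ i
    have hc : (otT B : Finset (Test d ι)).card ≤ (2 * s + (d + 1)) ^ d * (2 * s) := by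
      refine (card_otT B).trans (le_of_eq ?_)
      simp only [Fintype.card_prod, Fintype.card_fin, Fintype.card_bool, mul_comm s 2]
    refine ((Can.query _ (otT_subset B)).mono (by exact_mod_cast hc)).imp fun S₃ hS₃ hk => ?_
    rcases S₃.eq_empty_or_nonempty with rfl | ⟨v₀, hv₀⟩
    · exact ⟨A₁, hA₁, by simp⟩
    obtain ⟨ε, hε⟩ := exists_halving (fun x => v₀ (B x)) hη h
    refine ⟨fun i => B (i, ε i), fun i => hBJ _, fun v hv => ?_⟩
    have hmerge := Apx.merge (A := fun i => B (i, ε i)) hη (hA₁' v (hS₂ (hS₃ hv)))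
      (hA₂' v (hS₃ hv)) fun Y => by
        choose Y' hY' using fun x => (sameOT_of_known hk hv hv₀).covector hd (Y x)
        have hcongr : ∀ x, Rg Y (v (B x)) ↔ Rg Y' (v₀ (B x)) := fun x =>
          Rg_congr fun z => hY' z x
        have := hε Y'
        simp only [← hcongr] at this
        simpa only [hB1, hB2] using this
    convert hmerge using 1
    push_cast; ring

lemma exists_expBound (m P : ℕ) : ∃ K : ℕ, 1 ≤ K ∧ ∀ r : ℕ, 1 ≤ r →
    2 * ((8 * (K * r ^ 5) + 1 : ℕ) : ℝ) ^ m ≤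
      Real.exp ((K * r ^ 5 : ℕ) * (1 / (4 * P * r ^ 2)) ^ 2 / 2) ∨ P = 0 := by
  rcases Nat.eq_zero_or_pos P with rfl | hP
  · exact ⟨1, le_rfl, fun _ _ => Or.inr rfl⟩
  have hPr : (1 : ℝ) ≤ P := by exact_mod_cast hP
  have ht := (Real.tendsto_exp_div_pow_atTop (5 * m)).eventually_ge_atTop
    (2 * 9 ^ m * (32 * P ^ 2) ^ (5 * m))
  obtain ⟨x₀, hx₀⟩ := Filter.eventually_atTop.1 ht
  obtain ⟨K, hK⟩ := exists_nat_ge (max 1 (32 * P ^ 2 * x₀))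
  have hK1 : (1 : ℝ) ≤ K := (le_max_left _ _).trans hK
  refine ⟨K, by exact_mod_cast hK1, fun r hr => Or.inl ?_⟩
  have hr1 : (1 : ℝ) ≤ r := by exact_mod_cast hr
  obtain ⟨y, hy⟩ : ∃ y : ℝ, y = K * r / (32 * P ^ 2) := ⟨_, rfl⟩
  have hyK : (K : ℝ) * r = 32 * P ^ 2 * y := by rw [hy]; field_simp
  have hyx : x₀ ≤ y := by
    rw [hy, le_div_iff₀ (by positivity)]
    have := (le_max_right _ _).trans hK
    nlinarith
  have hypos : 0 < y := by rw [hy]; positivity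
  have h1 := hx₀ y hyx
  rw [le_div_iff₀ (by positivity)] at h1
  have he : ((K * r ^ 5 : ℕ) : ℝ) * (1 / (4 * P * r ^ 2)) ^ 2 / 2 = y := by
    rw [hy]; push_cast; field_simp; ring
  rw [he]
  refine le_trans ?_ h1
  have hKr : (1 : ℝ) ≤ K * r := one_le_mul_of_one_le_of_one_le hK1 hr1
  have h2 : ((8 * (K * r ^ 5) + 1 : ℕ) : ℝ) ≤ 9 * (K * r) ^ 5 := by
    push_cast
    have e1 : (K : ℝ) * r ^ 5 ≤ (K * r) ^ 5 := by
      rw [mul_pow]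
      exact mul_le_mul_of_nonneg_right (le_self_pow₀ hK1 (by norm_num)) (by positivity)
    have e2 : (1 : ℝ) ≤ (K * r) ^ 5 := one_le_pow₀ hKr
    linarith
  calc 2 * ((8 * (K * r ^ 5) + 1 : ℕ) : ℝ) ^ m ≤ 2 * (9 * (K * r) ^ 5) ^ m := by gcongr
    _ = _ := by
      rw [hyK]
      generalize (32 * (P : ℝ) ^ 2) = Z
      rw [mul_pow 9]; ring

/-- One reduction step: an approximation of `J` is computed and cut. -/
theorem step (hd : 2 ≤ d) : ∃ e : ℕ, ∀ P, 1 ≤ P → ∃ C : ℕ, 1 ≤ C ∧ ∀ (ι : Type) [Fintype ι]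
    (I J : Finset ι) (b r : ℕ), 1 ≤ b → b ≤ r → J.card ≤ 2 ^ (P * r) → ∀ S : Set (Cfg d ι),
      Can noPot (Red I J (C * b ^ d) (J.card / b))
        (C * J.card * r ^ e + C * (Real.log b + 1) * I.card) S := by
  classical
  obtain ⟨C₀, hC₀⟩ := cutting_vec hd
  obtain ⟨K₁, hK₁0, hK₁⟩ := locCost_le d (C₀ * 4 ^ d)
  obtain ⟨E, hE⟩ : ∃ E : ℕ, E = 2 * (d + 1) ^ 3 := ⟨_, rfl⟩
  have hEd : d + 1 ≤ E := by
    rw [hE]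
    have := Nat.le_self_pow (show 3 ≠ 0 by norm_num) (d + 1)
    omega
  refine ⟨5 * E, fun P hP => ?_⟩
  obtain ⟨K, hK1, hK⟩ := exists_expBound ((d + 1) * (2 * (d + 1))) P
  obtain ⟨C, hC⟩ : ∃ C : ℕ, C = C₀ * 4 ^ d + 4 * (2 * (K + d + 2)) ^ E + ⌈K₁⌉₊ + 1 := ⟨_, rfl⟩
  refine ⟨C, by omega, fun ι _ I J b r hb hbr hJ S => ?_⟩
  have hr : 1 ≤ r := hb.trans hbr
  have hlb : 0 ≤ Real.log b := Real.log_natCast_nonneg b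
  have hGpos : 1 ≤ C * b ^ d := Nat.one_le_iff_ne_zero.2 (by
    have : C ≠ 0 := by omega
    positivity)
  rcases J.eq_empty_or_nonempty with rfl | ⟨h₀, hh₀⟩
  · exact .leaf (by positivity) ⟨{∅}, by simpa using hGpos, by simp, fun i _ => ⟨∅, by simp⟩⟩
  have hJpos : 1 ≤ J.card := Finset.card_pos.2 ⟨h₀, hh₀⟩
  obtain ⟨s, hs⟩ : ∃ s, s = K * r ^ 5 := ⟨_, rfl⟩
  obtain ⟨η, hη⟩ : ∃ η : ℝ, η = 1 / (4 * P * r ^ 2) := ⟨_, rfl⟩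
  have hs1 : 1 ≤ s := by rw [hs]; exact Nat.one_le_iff_ne_zero.2 (by positivity)
  have hη0 : 0 ≤ η := by rw [hη]; positivity
  have hexp : 2 * (((8 * s + 1 : ℕ) : ℝ) ^ (d + 1)) ^ (2 * (d + 1)) ≤ Real.exp (s * η ^ 2 / 2) := by
    rw [← pow_mul, hs, hη]
    exact (hK r hr).resolve_right (by omega)
  -- the list of the members of `J`, padded to a power of two
  obtain ⟨f, hfJ, hf⟩ : ∃ f : ℕ → ι, (∀ t, f t ∈ J) ∧ ∀ h ∈ J, ∃ t < J.card, f t = h := by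
    refine ⟨fun t => if ht : t < J.card then (J.equivFin.symm ⟨t, ht⟩ : ι) else h₀, fun t => ?_,
      fun h hh => ⟨J.equivFin ⟨h, hh⟩, (J.equivFin ⟨h, hh⟩).2, by simp⟩⟩
    dsimp only
    split_ifs
    · exact Subtype.coe_prop _
    · exact hh₀
  obtain ⟨j, hj⟩ : ∃ j, j = Nat.clog 2 J.card := ⟨_, rfl⟩
  have hj1 : J.card ≤ 2 ^ j := hj ▸ Nat.le_pow_clog (by norm_num) _
  have hj2 : 2 ^ j ≤ 2 * J.card := by
    rcases Nat.lt_or_ge 1 J.card with h1 | h1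
    · have := Nat.pow_pred_clog_lt_self (b := 2) (by norm_num) h1
      rw [← hj] at this
      have hj0 : 0 < j := by rw [hj]; exact Nat.clog_pos (by norm_num) h1
      obtain ⟨i, rfl⟩ := Nat.exists_eq_succ_of_ne_zero hj0.ne'
      simp only [Nat.succ_eq_add_one, Nat.pred_eq_sub_one, Nat.add_sub_cancel] at this
      rw [Nat.succ_eq_add_one, pow_succ]; omega
    · have : j = 0 := by rw [hj]; exact Nat.clog_of_right_le_one h1 2
      rw [this]; omega
  have hj3 : j ≤ P * r := by rw [hj]; exact Nat.clog_le_of_le_pow hJ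
  have hjη : (j : ℝ) * η ≤ 1 / (4 * b) := by
    have e1 : (j : ℝ) ≤ P * r := by exact_mod_cast hj3
    have hb0 : (0 : ℝ) < b := by exact_mod_cast hb
    have hbr' : (b : ℝ) ≤ r := by exact_mod_cast hbr
    have hr0 : (0 : ℝ) < r := by exact_mod_cast hr
    have hP0 : (0 : ℝ) < P := by exact_mod_cast hP
    calc (j : ℝ) * η ≤ (P * r) * (1 / (4 * P * r ^ 2)) := by rw [hη]; gcongr
      _ = 1 / (4 * r) := by field_simp
      _ ≤ _ := by gcongr
  obtain ⟨x, hx⟩ : ∃ x, x = 2 * (s + d + 2) := ⟨_, rfl⟩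
  have hx1 : 1 ≤ x := by omega
  have hxr : x ≤ 2 * (K + d + 2) * r ^ 5 := by
    have : 1 ≤ r ^ 5 := Nat.one_le_iff_ne_zero.2 (by positivity)
    rw [hx, hs]
    nlinarith
  -- the costs of the three phases preceding the location
  have hcost : ((2 ^ j - 1) * ((2 * s + (d + 1)) ^ d * (2 * s) : ℕ) +
      (((s + (d + 1)) ^ d * J.card : ℕ) + ((s + d + 2) ^ E : ℕ)) : ℝ) ≤ C * J.card * r ^ (5 * E) := by
    have e0 : x ^ (d + 1) ≤ x ^ E := Nat.pow_le_pow_right hx1 hEd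
    have e1 : 2 ^ j * ((2 * s + (d + 1)) ^ d * (2 * s)) ≤ 2 * J.card * x ^ E := by
      refine Nat.mul_le_mul hj2 (le_trans ?_ e0)
      rw [pow_succ]
      exact Nat.mul_le_mul (Nat.pow_le_pow_left (by omega) _) (by omega)
    have e2 : (s + (d + 1)) ^ d * J.card ≤ J.card * x ^ E := by
      rw [mul_comm]
      refine Nat.mul_le_mul_left _ (le_trans ?_ e0)
      exact (Nat.pow_le_pow_left (by omega) _).trans (Nat.pow_le_pow_right hx1 (by omega))
    have e3 : (s + d + 2) ^ E ≤ J.card * x ^ E :=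
      (Nat.pow_le_pow_left (by omega) _).trans (Nat.le_mul_of_pos_left _ hJpos)
    have e4 : 4 * J.card * x ^ E ≤ C * J.card * r ^ (5 * E) := by
      calc 4 * J.card * x ^ E ≤ 4 * J.card * (2 * (K + d + 2) * r ^ 5) ^ E := by gcongr
        _ = 4 * (2 * (K + d + 2)) ^ E * J.card * r ^ (5 * E) := by rw [mul_pow, ← pow_mul]; ring
        _ ≤ _ := by gcongr; omega
    have e5 : 2 ^ j * ((2 * s + (d + 1)) ^ d * (2 * s)) + ((s + (d + 1)) ^ d * J.card +
      (s + d + 2) ^ E) ≤ C * J.card * r ^ (5 * E) := by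
      refine le_trans ?_ e4
      calc _ ≤ 2 * J.card * x ^ E + (J.card * x ^ E + J.card * x ^ E) :=
            Nat.add_le_add e1 (Nat.add_le_add e2 e3)
        _ = _ := by ring
    have e6 : ((2 ^ j * ((2 * s + (d + 1)) ^ d * (2 * s)) + ((s + (d + 1)) ^ d * J.card +
      (s + d + 2) ^ E) : ℕ) : ℝ) ≤ ((C * J.card * r ^ (5 * E) : ℕ) : ℝ) := by exact_mod_cast e5
    have e7 : (0 : ℝ) ≤ ((2 * s + (d + 1)) ^ d * (2 * s) : ℕ) := Nat.cast_nonneg _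
    rw [Nat.cast_add, Nat.cast_mul (2 ^ j), Nat.cast_add, Nat.cast_pow 2 j] at e6
    have e8 : ((C * J.card * r ^ (5 * E) : ℕ) : ℝ) = C * J.card * r ^ (5 * E) := by push_cast; rfl
    rw [e8] at e6
    push_cast at e6 e7 ⊢
    linarith
  refine Can.mono (c := ((2 ^ j - 1) * ((2 * s + (d + 1)) ^ d * (2 * s) : ℕ) +
      (((s + (d + 1)) ^ d * J.card : ℕ) + ((s + d + 2) ^ E : ℕ)) : ℝ) +
      C * (Real.log b + 1) * I.card) ?_ (by linarith)
  rw [add_assoc]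
  refine (exists_apx hd hη0 hexp f J hfJ j 0 S).bind ?_
  rintro S₁ - ⟨A, hAJ, hA⟩
  rw [add_assoc]
  obtain ⟨Q₁, hQ₁⟩ : ∃ Q : Finset (Test d ι), Q = (Finset.univ ×ˢ J).image
      fun eh : (Fin d → Fin s ⊕ Fin (d + 1)) × ι =>
        dotT (fun v => cr fun l => hat (fun y => v (A y)) (eh.1 l)) (fun v => v eh.2) := ⟨_, rfl⟩
  have hQ₁c : Q₁.card ≤ (s + (d + 1)) ^ d * J.card := by
    rw [hQ₁]; exact Finset.card_image_le.trans (by simp [Finset.card_product])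
  have hQ₁s : Q₁ ⊆ Tst Finset.univ := by
    intro p hp
    rw [hQ₁] at hp
    obtain ⟨⟨e, h⟩, -, rfl⟩ := Finset.mem_image.1 hp
    exact dotT_mem (crT_mem (fun x => Finset.mem_univ _) e) (base_mem (Finset.mem_univ _))
      (by omega) (by omega)
  refine ((Can.query _ hQ₁s).mono (by exact_mod_cast hQ₁c)).bind fun S₂ hS₂ hk₁ => ?_
  have hQ₂c : (Tst (Finset.univ.image A) : Finset (Test d ι)).card ≤ (s + d + 2) ^ E := by
    rw [hE]
    refine (card_Tst hd _).trans (Nat.pow_le_pow_left ?_ _)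
    have : (Finset.univ.image A).card ≤ s := Finset.card_image_le.trans (by simp)
    omega
  refine ((Can.query _ (Tst_mono (Finset.subset_univ _))).mono
    (by exact_mod_cast hQ₂c)).bind fun S₃ hS₃ hk₂ => ?_
  rcases S₃.eq_empty_or_nonempty with rfl | ⟨v₀, hv₀⟩
  · exact .leaf (by positivity) (Red.empty hGpos)
  obtain ⟨Ξ, hΞ, hLI, hcov, hcon⟩ := hC₀ (Fin s) (fun x => v₀ (A x)) (4 * b) (by omega)
  have hAm : ∀ x, A x ∈ Finset.univ.image A := fun x => Finset.mem_image_of_mem _ (Finset.mem_univ x)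
  have hΞ' : Ξ.card ≤ C₀ * 4 ^ d * b ^ d := by rw [mul_pow, ← mul_assoc] at hΞ; exact hΞ
  have hgl := group_locate hd A v₀ Ξ hLI hcov I J S₃ (by
      intro v hv o _ c _ i
      exact hk₂ _ (dotT_mem (fcT_mem hAm c i) (vxT_mem hAm c i) (by omega) (by omega)) v hv v₀ hv₀)
    (by
      intro v hv o _ c _ i h hh
      refine hk₁ (dotT (vxT A c i) fun v => v h) ?_ v (hS₃ hv) v₀ (hS₃ hv₀)
      rw [hQ₁]
      exact Finset.mem_image.2 ⟨(c i, h), by simp [hh], rfl⟩)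
  refine (hgl.mono ?_).imp fun R hRS hR => ?_
  · have h3 : locCost d Ξ.card ≤ C * (Real.log b + 1) := by
      refine (hK₁ _ _ hb hΞ').trans (mul_le_mul_of_nonneg_right ?_ (by positivity))
      refine (Nat.le_ceil K₁).trans ?_
      exact_mod_cast (by omega : ⌈K₁⌉₊ ≤ C)
    rw [mul_comm]
    exact mul_le_mul_of_nonneg_right h3 (Nat.cast_nonneg _)
  · rcases hR with hR | hR
    · refine Red.of_cells (hΞ'.trans (Nat.mul_le_mul_right _ (by omega))) (fun o ho => ?_) hR
      obtain ⟨Y, hY1, hY2⟩ : ∃ Y : Bool × Fin (d + 1) → Vec d,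
          (fun i => Y (true, i)) = vx (fun x => v₀ (A x)) o.1 ∧
          (fun i => Y (false, i)) = vx (fun x => v₀ (A x)) o.2 :=
        ⟨fun z => vx (fun x => v₀ (A x)) (if z.1 then o.1 else o.2) z.2, rfl, rfl⟩
      have hap := hA v₀ (hS₂ (hS₃ hv₀)) Y
      have hcn := hcon o ho
      rw [Fintype.card_fin, Set.ncard_eq_toFinset_card'] at hcn
      have hA1 : (Finset.univ.filter fun i => Rg Y (v₀ (A i))).card * (4 * b) ≤ s := by
        convert hcn using 3
        ext i
        simp only [Finset.mem_filter, Finset.mem_univ, true_and, Set.mem_toFinset,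
          Set.mem_ofPred_eq, Rg, hY1, hY2]
      have hJc : (J.filter fun h => Conflict (vx (fun x => v₀ (A x)) o.1) (v₀ h) ∧
          Conflict (vx (fun x => v₀ (A x)) o.2) (v₀ h)).card ≤
          ((Finset.range (2 ^ j)).filter fun t => Rg Y (v₀ (f (0 + t)))).card := by
        refine Finset.card_le_card_of_surjOn f fun h hh => ?_
        simp only [Finset.coe_filter, Set.mem_ofPred_eq] at hh
        obtain ⟨t, ht, rfl⟩ := hf h hh.1
        refine ⟨t, ?_, rfl⟩
        simp only [Finset.coe_filter, Set.mem_ofPred_eq, Finset.mem_range, zero_add, Rg, hY1, hY2]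
        exact ⟨ht.trans_le hj1, hh.2⟩
      refine hJc.trans ?_
      rw [Nat.le_div_iff_mul_le hb]
      set cA := (Finset.univ.filter fun i => Rg Y (v₀ (A i))).card
      set cB := ((Finset.range (2 ^ j)).filter fun t => Rg Y (v₀ (f (0 + t)))).card
      have hb0 : (0 : ℝ) < b := by exact_mod_cast hb
      have hs0 : (0 : ℝ) < s := by exact_mod_cast hs1
      have hA1' : (cA : ℝ) * (4 * b) ≤ s := by exact_mod_cast hA1
      have hj2' : (2 : ℝ) ^ j ≤ 2 * J.card := by exact_mod_cast hj2
      have hη' : (j : ℝ) * η * (4 * b) ≤ 1 := by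
        rwa [le_div_iff₀ (by positivity)] at hjη
      have h2j : (0 : ℝ) < 2 ^ j := by positivity
      have h1 := (abs_le.1 hap).1
      -- multiply by `4 b`, and insert the bounds on the sample and on the error
      have h2 : (s : ℝ) * cB * (4 * b) ≤ 2 ^ j * s + 2 ^ j * s := by
        have e1 : (s : ℝ) * cB ≤ 2 ^ j * cA + j * η * (2 ^ j * s) := by linarith
        have e2 := mul_le_mul_of_nonneg_right e1 (show (0 : ℝ) ≤ 4 * b by positivity)
        have e3 := mul_le_mul_of_nonneg_left hA1' h2j.le
        have e4 := mul_le_mul_of_nonneg_right hη' (show (0 : ℝ) ≤ 2 ^ j * s by positivity)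
        linarith
      have h3 : (cB : ℝ) * b ≤ J.card := by
        have e1 : (s : ℝ) * (cB * b * 4) ≤ s * (4 * J.card) := by nlinarith
        have := le_of_mul_le_mul_left e1 hs0
        linarith
      exact_mod_cast h3
    · have : R = ∅ := by
        by_contra hne
        obtain ⟨v, hv⟩ := Set.nonempty_iff_ne_empty.2 hne
        refine hR v hv (fam_agr hAm fun p hp => ?_)
        exact hk₂ p hp v (hRS hv) v₀ hv₀
      rw [this]
      exact Red.empty hGpos

end Hop

namespace Hop
set_option linter.unusedSectionVars false
variable {d : ℕ} {ι : Type} [Fintype ι]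
open SignType (sign)

/-- A reduction of the size of `J` by a factor `b`, polynomial in `r`, is possible, at a cost that
exceeds the number of subproblems times their size by a factor `r ^ e` only. -/
def MultiBound (d e : ℕ) : Prop := ∀ P Q : ℕ, 1 ≤ P → ∃ C : ℕ, 1 ≤ C ∧
    ∀ (ι : Type) [Fintype ι] (I J : Finset ι) (b r : ℕ), 1 ≤ b → 1 ≤ r → b ≤ r ^ Q →
      J.card ≤ 2 ^ (P * r) → ∀ S : Set (Cfg d ι),
      Can noPot (Red I J (C * b ^ d) (J.card / b))
        (C * J.card * b ^ (d - 1) * r ^ e + C * (Real.log b + 1) * I.card) S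

/-- Iterated reduction: the exponent of `r` in the cost does not depend on the number `Q` of
iterations. -/
theorem multi (hd : 2 ≤ d) : ∃ e : ℕ, MultiBound d e := by
  obtain ⟨e, he⟩ := step hd
  obtain ⟨k, rfl⟩ : ∃ k, d = k + 1 := ⟨d - 1, by omega⟩
  refine ⟨e, fun P Q hP => ?_⟩
  obtain ⟨C₁, hC₁, hstep⟩ := he P hP
  simp only [Nat.add_sub_cancel]
  have hsimple : ∀ (ι : Type) [Fintype ι] (I J : Finset ι) (b r : ℕ), 1 ≤ b → b ≤ r →
      J.card ≤ 2 ^ (P * r) → ∀ S : Set (Cfg (k + 1) ι), ∀ C : ℕ, C₁ ≤ C →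
      Can noPot (Red I J (C * b ^ (k + 1)) (J.card / b))
        (C * J.card * b ^ k * r ^ e + C * (Real.log b + 1) * I.card) S := by
    intro ι _ I J b r hb hbr hJ S C hC
    have hlb : 0 ≤ Real.log b := Real.log_natCast_nonneg b
    have hb1 : (1 : ℝ) ≤ (b : ℝ) ^ k := one_le_pow₀ (by exact_mod_cast hb)
    have hCr : (C₁ : ℝ) ≤ C := by exact_mod_cast hC
    refine ((hstep ι I J b r hb hbr hJ S).mono ?_).imp fun S' _ h =>
      h.weaken (Nat.mul_le_mul_right _ hC) le_rfl
    have h1 : (C₁ : ℝ) * J.card * r ^ e ≤ C * J.card * b ^ k * r ^ e := by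
      have : (C₁ : ℝ) * J.card * 1 * r ^ e ≤ C * J.card * b ^ k * r ^ e := by gcongr
      linarith
    have h2 : (C₁ : ℝ) * (Real.log b + 1) * I.card ≤ C * (Real.log b + 1) * I.card := by gcongr
    linarith
  induction Q with
  | zero =>
    refine ⟨C₁, hC₁, fun ι _ I J b r hb hr hbr hJ S => ?_⟩
    rw [pow_zero] at hbr
    exact hsimple ι I J b r hb (hbr.trans hr) hJ S C₁ le_rfl
  | succ Q ih =>
    obtain ⟨C₂, hC₂, ih⟩ := ih
    have hCC : C₁ + C₂ ≤ 2 * (C₁ * C₂) := by nlinarith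
    have hC2k : 2 * (C₁ * C₂) ≤ 2 ^ (k + 1) * (C₁ * C₂) :=
      Nat.mul_le_mul_right _ (Nat.le_self_pow (by omega) 2)
    obtain ⟨C, hC⟩ : ∃ C, C = 2 * (2 ^ (k + 1) * (C₁ * C₂)) := ⟨_, rfl⟩
    refine ⟨C, by omega, fun ι _ I J b r hb hr hbr hJ S => ?_⟩
    rcases le_or_gt b r with hbr' | hbr'
    · exact hsimple ι I J b r hb hbr' hJ S C (by omega)
    -- write `b ≤ r * b'` with `r * b' ≤ 2 * b`
    obtain ⟨b', hb'⟩ : ∃ b', b' = (b - 1) / r + 1 := ⟨_, rfl⟩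
    have hb'1 : b ≤ r * b' := by
      have := Nat.lt_mul_div_succ (b - 1) (show 0 < r by omega)
      rw [hb']; omega
    have hb'2 : r * b' ≤ 2 * b := by
      have := Nat.mul_div_le (b - 1) r
      rw [hb', Nat.mul_add, Nat.mul_one]; linarith [Nat.sub_le b 1]
    have hb'3 : b' ≤ r ^ Q := by
      rw [hb']
      refine Nat.succ_le_of_lt (Nat.div_lt_of_lt_mul ?_)
      rw [pow_succ, mul_comm] at hbr
      exact lt_of_lt_of_le (Nat.sub_lt hb one_pos) hbr
    have hb'b : b' ≤ b := by
      have : (b - 1) / r ≤ b - 1 := Nat.div_le_self _ _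
      omega
    have hb'pos : 1 ≤ b' := hb' ▸ Nat.le_add_left _ _
    have hlb : Real.log b' ≤ Real.log b :=
      Real.log_le_log (by exact_mod_cast hb'pos) (by exact_mod_cast hb'b)
    have hlr : Real.log r ≤ Real.log b :=
      Real.log_le_log (by exact_mod_cast hr) (by exact_mod_cast hbr'.le)
    have hlb0 : 0 ≤ Real.log b := Real.log_natCast_nonneg b
    have hlr0 : 0 ≤ Real.log r := Real.log_natCast_nonneg r
    have hlb'0 : 0 ≤ Real.log b' := Real.log_natCast_nonneg b'
    obtain ⟨α, hα⟩ : ∃ α : ℝ, α = C₂ * (J.card / r : ℕ) * b' ^ k * r ^ e := ⟨_, rfl⟩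
    have hα0 : 0 ≤ α := by rw [hα]; positivity
    have hmain := (hstep ι I J r r hr le_rfl hJ S).bind (H := Red I J (C * b ^ (k + 1)) (J.card / b))
      (e := (C₁ * r ^ (k + 1) : ℕ) * α + C₂ * (Real.log b' + 1) * I.card) fun S' hS' hR => by
        refine (hR.comp (G₂ := C₂ * b' ^ (k + 1)) (N₂ := J.card / b) hα0 ?_).imp fun S'' _ h => ?_
        · intro I' J' hJ' hI' hc S'' hS''
          refine ((ih ι I' J' b' r hb'pos hr hb'3 ((Finset.card_le_card hJ').trans hJ) S'').mono
            ?_).imp fun S₃ _ h => h.weaken le_rfl ?_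
          · have hc' : (J'.card : ℝ) ≤ (J.card / r : ℕ) := by exact_mod_cast hc
            rw [hα]; gcongr
          · refine (Nat.div_le_div_right hc).trans ?_
            rw [Nat.div_div_eq_div_mul]
            exact Nat.div_le_div_left hb'1 (by omega)
        · refine h.weaken ?_ le_rfl
          calc C₁ * r ^ (k + 1) * (C₂ * b' ^ (k + 1)) = C₁ * C₂ * (r * b') ^ (k + 1) := by
                rw [mul_pow]; ring
            _ ≤ C₁ * C₂ * (2 * b) ^ (k + 1) := by gcongr
            _ = 2 ^ (k + 1) * (C₁ * C₂) * b ^ (k + 1) := by rw [mul_pow]; ring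
            _ ≤ _ := Nat.mul_le_mul_right _ (by omega)
    refine hmain.mono ?_
    have hr0 : (0 : ℝ) < r := by exact_mod_cast hr
    have hdiv : (((J.card / r : ℕ) : ℝ)) * r ≤ J.card := by
      exact_mod_cast Nat.div_mul_le_self _ _
    have h1 : ((C₁ * r ^ (k + 1) : ℕ) : ℝ) * α ≤
        (2 ^ (k + 1) * (C₁ * C₂) : ℕ) * J.card * b ^ k * r ^ e := by
      have h2 : ((r : ℝ) * b') ^ k ≤ (2 * b) ^ k := by
        exact pow_le_pow_left₀ (by positivity) (by exact_mod_cast hb'2) k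
      calc ((C₁ * r ^ (k + 1) : ℕ) : ℝ) * α
          = C₁ * C₂ * (((J.card / r : ℕ) : ℝ) * r) * (r * b') ^ k * r ^ e := by
            rw [hα]; push_cast; rw [mul_pow]; ring
        _ ≤ C₁ * C₂ * J.card * (2 * b) ^ k * r ^ e := by gcongr
        _ = (2 ^ k * (C₁ * C₂) : ℕ) * J.card * b ^ k * r ^ e := by
            push_cast; rw [mul_pow]; ring
        _ ≤ _ := by
            gcongr
            · norm_num
            · omega
    have h2 : (C₁ : ℝ) * J.card * r ^ e ≤ (2 ^ (k + 1) * (C₁ * C₂) : ℕ) * J.card * b ^ k * r ^ e := by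
      have hb1 : (1 : ℝ) ≤ (b : ℝ) ^ k := one_le_pow₀ (by exact_mod_cast hb)
      have hc : (C₁ : ℝ) ≤ (2 ^ (k + 1) * (C₁ * C₂) : ℕ) := by
        exact_mod_cast (by omega : C₁ ≤ 2 ^ (k + 1) * (C₁ * C₂))
      have : (C₁ : ℝ) * J.card * 1 * r ^ e ≤
        (2 ^ (k + 1) * (C₁ * C₂) : ℕ) * J.card * b ^ k * r ^ e := by gcongr
      linarith
    have h3 : (C₁ : ℝ) * (Real.log r + 1) * I.card + C₂ * (Real.log b' + 1) * I.card ≤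
        C * (Real.log b + 1) * I.card := by
      have hc : (C₁ : ℝ) + C₂ ≤ C := by exact_mod_cast (by omega : C₁ + C₂ ≤ C)
      calc (C₁ : ℝ) * (Real.log r + 1) * I.card + C₂ * (Real.log b' + 1) * I.card
          ≤ C₁ * (Real.log b + 1) * I.card + C₂ * (Real.log b + 1) * I.card := by gcongr
        _ = (C₁ + C₂) * (Real.log b + 1) * I.card := by ring
        _ ≤ _ := by gcongr
    have h4 : (C : ℝ) * J.card * b ^ k * r ^ e = 2 *
        ((2 ^ (k + 1) * (C₁ * C₂) : ℕ) * J.card * b ^ k * r ^ e) := by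
      rw [hC]; push_cast; ring
    linarith

/-- The potential is of order `W N log N` if `U` has at most `N` elements. -/
lemma pot_le (hd : 2 ≤ d) : ∃ K : ℕ, 1 ≤ K ∧ ∀ (ι : Type) [Fintype ι] (U : Finset ι) (W : ℝ)
    (S : Set (Cfg d ι)) (N : ℕ), 0 ≤ W → U.card ≤ N →
      pot U W S ≤ W * (K * N * Real.log (N + d + 2)) := by
  refine ⟨(d + 1) * (2 * (d + 1) ^ 3 + 2 * d ^ 3 + 4), Nat.one_le_iff_ne_zero.2 (by positivity),
    fun ι _ U W S N hW hN => mul_le_mul_of_nonneg_left ?_ hW⟩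
  have hNr : (U.card : ℝ) ≤ N := by exact_mod_cast hN
  have hpos : (0 : ℝ) < (U.card : ℝ) + d + 2 := by positivity
  have hl : Real.log ((U.card : ℝ) + d + 2) ≤ Real.log (N + d + 2) :=
    Real.log_le_log hpos (by linarith)
  have hl0 : 0 ≤ Real.log ((U.card : ℝ) + d + 2) := by
    have := Real.log_natCast_nonneg (U.card + d + 2)
    exact_mod_cast this
  have h1 : Real.log (ncl U S) ≤
      Real.log (((U.card + d + 2) ^ ((d + 1) * (2 * (d + 1) ^ 3 + 2 * d ^ 3 + 4) * U.card) : ℕ) : ℝ) := by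
    rcases Nat.eq_zero_or_pos (ncl U S) with h0 | h0
    · rw [h0, Nat.cast_zero, Real.log_zero]; exact Real.log_natCast_nonneg _
    · exact Real.log_le_log (by exact_mod_cast h0) (by exact_mod_cast ncl_le hd U S)
  refine h1.trans ?_
  rw [Nat.cast_pow, Real.log_pow]
  rw [Nat.cast_mul]
  have h2 : ((U.card + d + 2 : ℕ) : ℝ) = U.card + d + 2 := by push_cast; ring
  rw [h2]
  gcongr

end Hop

namespace Hop
set_option linter.unusedSectionVars false
variable {d : ℕ} {ι : Type} [Fintype ι]
open SignType (sign)

/-! ### Balanced problems -/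

lemma log_add_one_le {x : ℕ} (hx : 1 ≤ x) : Real.log x + 1 ≤ x := by
  have := Real.log_le_sub_one_of_pos (show (0 : ℝ) < x by exact_mod_cast hx)
  linarith

/-- Small balanced problems, solved with optimal amortized cost. -/
theorem base (hd : 2 ≤ d) : ∃ C w : ℕ, 1 ≤ C ∧ ∀ (ι : Type) [Fintype ι] (U I J : Finset ι),
    I ⊆ U → J ⊆ U → ∀ ρ : ℕ, 1 ≤ ρ → I.card ≤ ρ ^ (d + 1) → J.card ≤ ρ ^ (d + 1) →
    ∀ (W : ℝ) (S : Set (Cfg d ι)), (C * ρ ^ w : ℝ) ≤ W →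
      Can (pot U W) (Sol I J) (C * ρ ^ (2 * d)) S := by
  obtain ⟨C₁, hC₁, hst⟩ := stage2 hd
  obtain ⟨C₂, hC₂, hsm⟩ := smallSol hd
  obtain ⟨B, hB⟩ : ∃ B, B = 2 * (d + 1) ^ 3 := ⟨_, rfl⟩
  have hB2 : 2 ≤ B := by
    have : 1 ≤ (d + 1) ^ 3 := Nat.one_le_iff_ne_zero.2 (by positivity)
    omega
  rw [← hB] at hst hsm
  obtain ⟨C, hC⟩ : ∃ C, C = 4 * (d + 4) ^ B + 3 * C₁ + (1 + C₁) * C₂ := ⟨_, rfl⟩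
  refine ⟨C, (d + 1) * B, by omega, fun ι _ U I J hI hJ ρ hρ hIc hJc W S hW => ?_⟩
  have hρ1 : (1 : ℝ) ≤ ρ := by exact_mod_cast hρ
  have hρ0 : (0 : ℝ) < ρ := by linarith
  have hIr : (I.card : ℝ) ≤ ρ ^ (d + 1) := by exact_mod_cast hIc
  have hJr : (J.card : ℝ) ≤ ρ ^ (d + 1) := by exact_mod_cast hJc
  have hCr : (C : ℝ) = 4 * (d + 4) ^ B + 3 * C₁ + (1 + C₁) * C₂ := by rw [hC]; push_cast; ring
  have h4 : (0 : ℝ) ≤ 4 * (d + 4) ^ B := by positivity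
  have hCC : (0 : ℝ) ≤ (1 + C₁) * C₂ := by positivity
  have hC₁0 : (0 : ℝ) ≤ C₁ := Nat.cast_nonneg _
  have hw1 : (1 : ℝ) ≤ ρ ^ ((d + 1) * B) := one_le_pow₀ hρ1
  have h2dw : (ρ : ℝ) ^ (2 * d) ≤ ρ ^ ((d + 1) * B) := pow_le_pow_right₀ hρ1 (by nlinarith)
  have hsize : ∀ x y : ℕ, x ≤ ρ ^ (d + 1) → y ≤ ρ ^ (d + 1) →
      4 * ((x : ℝ) + y + d + 2) ^ B ≤ W := by
    intro x y hx hy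
    have hx' : (x : ℝ) ≤ ρ ^ (d + 1) := by exact_mod_cast hx
    have hy' : (y : ℝ) ≤ ρ ^ (d + 1) := by exact_mod_cast hy
    have h1 : (1 : ℝ) ≤ ρ ^ (d + 1) := one_le_pow₀ hρ1
    calc 4 * ((x : ℝ) + y + d + 2) ^ B ≤ 4 * ((d + 4) * ρ ^ (d + 1)) ^ B := by
          gcongr
          nlinarith
      _ = 4 * (d + 4) ^ B * ρ ^ ((d + 1) * B) := by rw [mul_pow, ← pow_mul]; ring
      _ ≤ C * ρ ^ ((d + 1) * B) := by
          gcongr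
          rw [hCr]; linarith
      _ ≤ W := hW
  have hcost : (C₁ : ℝ) * (J.card / ρ + 1) * ρ ^ d + C₁ * (Real.log ρ + 1) * I.card ≤
      3 * C₁ * ρ ^ (2 * d) := by
    have e1 : (J.card : ℝ) / ρ ≤ ρ ^ d := by rw [div_le_iff₀ hρ0, ← pow_succ]; exact hJr
    have e2 : (1 : ℝ) ≤ ρ ^ d := one_le_pow₀ hρ1
    have e3 := log_add_one_le hρ
    have e4 : (ρ : ℝ) * ρ ^ (d + 1) ≤ ρ ^ (2 * d) := by
      rw [← pow_succ']; exact pow_le_pow_right₀ hρ1 (by omega)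
    have e5 : (ρ : ℝ) ^ (2 * d) = ρ ^ d * ρ ^ d := by rw [two_mul, pow_add]
    calc (C₁ : ℝ) * (J.card / ρ + 1) * ρ ^ d + C₁ * (Real.log ρ + 1) * I.card
        ≤ C₁ * (ρ ^ d + ρ ^ d) * ρ ^ d + C₁ * ρ * ρ ^ (d + 1) := by gcongr
      _ = 2 * C₁ * ρ ^ (2 * d) + C₁ * (ρ * ρ ^ (d + 1)) := by rw [e5]; ring
      _ ≤ 2 * C₁ * ρ ^ (2 * d) + C₁ * ρ ^ (2 * d) := by gcongr
      _ = _ := by ring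
  have h3CW : 3 * (C₁ : ℝ) * ρ ^ (2 * d) ≤ W := by
    refine le_trans ?_ hW
    gcongr
    rw [hCr]; linarith
  have hCan := (hst ι U I J hJ ρ hρ W S (by simpa using hsize 0 J.card (by simp) hJc)
    (hcost.trans h3CW)).mono hcost
  refine (hCan.bind (e := (1 + C₁) * C₂ * ρ ^ (2 * d)) fun S' hS' hR => ?_).mono ?_
  · refine (hR.solve (M' := ρ) hρ (c := C₂ * ρ ^ d) (by positivity) ?_).mono ?_
    · intro I' J' hJ' hI' hJ'c hI'c S'' hS''
      have hJ'd : J'.card ≤ ρ ^ d := by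
        refine hJ'c.trans ((Nat.div_le_div_right hJc).trans (le_of_eq ?_))
        rw [pow_succ, Nat.mul_div_cancel _ hρ]
      refine hsm ι U I' J' (hI'.trans hI) (hJ'.trans hJ) ρ hI'c hJ'd W S'' ?_ ?_
      · exact hsize _ _ ((Finset.card_le_card hI').trans hIc) ((Finset.card_le_card hJ').trans hJc)
      · refine le_trans ?_ hW
        have : (ρ : ℝ) ^ d ≤ ρ ^ ((d + 1) * B) := pow_le_pow_right₀ hρ1 (by nlinarith)
        gcongr
        rw [hC, add_mul, one_mul]; omega
    · have e1 : (I.card : ℝ) / ρ ≤ ρ ^ d := by rw [div_le_iff₀ hρ0, ← pow_succ]; exact hIr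
      calc ((I.card : ℝ) / ρ + (C₁ * ρ ^ d : ℕ)) * (C₂ * ρ ^ d)
          ≤ (ρ ^ d + C₁ * ρ ^ d) * (C₂ * ρ ^ d) := by
            push_cast; gcongr
        _ = _ := by rw [two_mul, pow_add]; ring
  · have h0 : (0 : ℝ) ≤ ρ ^ (2 * d) := by positivity
    rw [hCr]; nlinarith

/-- A rounded root. -/
lemma exists_root {k : ℕ} (hk : 1 ≤ k) {N : ℕ} (hN : 1 ≤ N) :
    ∃ r, 2 ≤ r ∧ N ≤ r ^ k ∧ r ^ k ≤ 2 ^ k * N := by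
  classical
  have hex : ∃ r, 2 ≤ r ∧ N ≤ r ^ k :=
    ⟨N + 2, by omega, (Nat.le_self_pow (by omega) N).trans (Nat.pow_le_pow_left (by omega) k)⟩
  obtain ⟨h1, h2⟩ := Nat.find_spec hex
  refine ⟨Nat.find hex, h1, h2, ?_⟩
  rcases h1.eq_or_lt with h | h
  · rw [← h]; exact Nat.le_mul_of_pos_right _ hN
  · have h3 := Nat.find_min hex (m := Nat.find hex - 1) (by omega)
    have h4 : (Nat.find hex - 1) ^ k < N := by
      by_contra hc
      exact h3 ⟨by omega, not_lt.1 hc⟩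
    calc (Nat.find hex) ^ k ≤ (2 * (Nat.find hex - 1)) ^ k := Nat.pow_le_pow_left (by omega) k
      _ = 2 ^ k * (Nat.find hex - 1) ^ k := mul_pow _ _ _
      _ ≤ _ := Nat.mul_le_mul_left _ h4.le

end Hop

namespace Hop
set_option linter.unusedSectionVars false
variable {d : ℕ} {ι : Type} [Fintype ι]
open SignType (sign)

set_option maxHeartbeats 1000000 in
/-- Balanced problems whose size is a power of `r`. Two reductions, one on each side, leave problems
of size polynomial in `r`; the total potential needed for solving them is of lower order. -/
theorem bal_pow (hd : 2 ≤ d) : ∃ C k : ℕ, 1 ≤ k ∧ ∀ (ι : Type) [Fintype ι] (I J : Finset ι) (r : ℕ),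
    1 ≤ r → I.card ≤ r ^ ((d + 1) * k) → J.card ≤ r ^ ((d + 1) * k) → ∀ S : Set (Cfg d ι),
      Can noPot (Sol I J) (C * (r : ℝ) ^ (2 * d * k)) S := by
  classical
  obtain ⟨e, hmul⟩ := multi hd
  obtain ⟨C₃, w, hC₃, hbase⟩ := base hd
  obtain ⟨K, hK, hpot⟩ := pot_le hd
  obtain ⟨E, hE⟩ : ∃ E, E = e + 1 := ⟨_, rfl⟩
  obtain ⟨Q, hQ⟩ : ∃ Q, Q = E * w + 2 := ⟨_, rfl⟩
  obtain ⟨P, hP⟩ : ∃ P, P = (d + 1) * (Q + E) := ⟨_, rfl⟩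
  have hP1 : 1 ≤ P := by rw [hP]; exact Nat.mul_pos (by omega) (by omega)
  obtain ⟨C₁, hC₁, hmul⟩ := hmul P Q hP1
  obtain ⟨D, hD⟩ : ∃ D, D = C₁ * (Q + 2) + (1 + C₁) * C₃ := ⟨_, rfl⟩
  refine ⟨C₁ * (Q + 2) + (1 + C₁) * D + 2 * C₃ * K * (d + 4 + P), Q + E, by omega,
    fun ι _ I J r hr hI hJ S => ?_⟩
  obtain ⟨b, hb⟩ : ∃ b, b = r ^ Q := ⟨_, rfl⟩
  obtain ⟨ρ, hρ⟩ : ∃ ρ, ρ = r ^ E := ⟨_, rfl⟩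
  have hb1 : 1 ≤ b := by rw [hb]; exact Nat.one_le_pow _ _ hr
  have hρ1 : 1 ≤ ρ := by rw [hρ]; exact Nat.one_le_pow _ _ hr
  have hN0 : r ^ ((d + 1) * (Q + E)) = (b * ρ) ^ (d + 1) := by
    rw [hb, hρ, ← pow_add, ← pow_mul]; congr 1; ring
  have h2P : r ^ ((d + 1) * (Q + E)) ≤ 2 ^ (P * r) := by
    rw [← hP, mul_comm P r, pow_mul]
    exact Nat.pow_le_pow_left (Nat.lt_two_pow_self).le _
  have hI2 := hI.trans h2P
  have hJ2 := hJ.trans h2P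
  rw [hN0] at hI hJ
  have hgoal : (r : ℝ) ^ (2 * d * (Q + E)) = ((b : ℝ) * ρ) ^ (2 * d) := by
    rw [hb, hρ]; push_cast; rw [← pow_add, ← pow_mul]; congr 1; ring
  rw [hgoal]
  have hr1' : (1 : ℝ) ≤ r := by exact_mod_cast hr
  have hb1' : (1 : ℝ) ≤ b := by exact_mod_cast hb1
  have hρ1' : (1 : ℝ) ≤ ρ := by exact_mod_cast hρ1
  have hb0 : (0 : ℝ) < b := by linarith
  have hρ0 : (0 : ℝ) < ρ := by linarith
  have hIr : (I.card : ℝ) ≤ (b * ρ) ^ (d + 1) := by exact_mod_cast hI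
  have hJr : (J.card : ℝ) ≤ (b * ρ) ^ (d + 1) := by exact_mod_cast hJ
  have hreρ : (r : ℝ) ^ e ≤ ρ := by
    rw [hρ]; push_cast; exact pow_le_pow_right₀ hr1' (by omega)
  have hrρ : (r : ℝ) ≤ ρ := by
    rw [hρ]; push_cast; exact le_self_pow₀ hr1' (by omega)
  have hlogr : Real.log r ≤ r := by linarith [log_add_one_le hr]
  have hlog0 : 0 ≤ Real.log r := Real.log_natCast_nonneg r
  have hlb0 : 0 ≤ Real.log b := Real.log_natCast_nonneg b
  have hL : Real.log b + 1 ≤ (Q + 1) * ρ := by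
    have : Real.log b = Q * Real.log r := by rw [hb, Nat.cast_pow, Real.log_pow]
    rw [this]
    have : (Q : ℝ) * Real.log r ≤ Q * ρ := by gcongr; linarith
    linarith
  have hρρ : (ρ : ℝ) ^ (d + 1) * ρ ≤ ρ ^ (2 * d) := by
    rw [← pow_succ]; exact pow_le_pow_right₀ hρ1' (by omega)
  have hbb : (b : ℝ) ^ (d + 1) ≤ b ^ (2 * d) := pow_le_pow_right₀ hb1' (by omega)
  have hbbb : (b : ℝ) ^ (d + 1) * b ≤ b ^ (2 * d) := by
    rw [← pow_succ]; exact pow_le_pow_right₀ hb1' (by omega)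
  have hρρ' : (ρ : ℝ) ^ (d + 1) ≤ ρ ^ (2 * d) := pow_le_pow_right₀ hρ1' (by omega)
  have hbd : (b : ℝ) ^ (d - 1) * b = b ^ d := pow_sub_one_mul (by omega) _
  have hρwr : (ρ : ℝ) ^ w * r ≤ b := by
    rw [hρ, hb]; push_cast; rw [← pow_mul, ← pow_succ]
    exact pow_le_pow_right₀ hr1' (by omega)
  obtain ⟨W, hW⟩ : ∃ W : ℝ, W = C₃ * ρ ^ w := ⟨_, rfl⟩
  have hW0 : 0 ≤ W := by rw [hW]; positivity
  -- the subproblems after the first reduction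
  have hinner : ∀ I' J', J' ⊆ J → I' ⊆ I → J'.card ≤ b ^ d * ρ ^ (d + 1) → I'.card ≤ b * ρ ^ (d + 1) →
      ∀ S' : Set (Cfg d ι), Can (pot (I ∪ J) W) (Sol I' J') (D * (b ^ d * ρ ^ (2 * d))) S' := by
    intro I' J' hJ' hI' hJc hIc S'
    have hJc' : (J'.card : ℝ) ≤ b ^ d * ρ ^ (d + 1) := by exact_mod_cast hJc
    have hIc' : (I'.card : ℝ) ≤ b * ρ ^ (d + 1) := by exact_mod_cast hIc
    have hm := (hmul ι J' I' b r hb1 hr hb.le ((Finset.card_le_card hI').trans hI2) S').of_noPot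
      (Ψ := pot (I ∪ J) W) fun S'' h => pot_mono hW0 h
    have hmc : (C₁ : ℝ) * I'.card * b ^ (d - 1) * r ^ e + C₁ * (Real.log b + 1) * J'.card ≤
        C₁ * (Q + 2) * (b ^ d * ρ ^ (2 * d)) := by
      calc (C₁ : ℝ) * I'.card * b ^ (d - 1) * r ^ e + C₁ * (Real.log b + 1) * J'.card
          ≤ C₁ * (b * ρ ^ (d + 1)) * b ^ (d - 1) * ρ +
            C₁ * ((Q + 1) * ρ) * (b ^ d * ρ ^ (d + 1)) := by gcongr
        _ = C₁ * (Q + 2) * (b ^ d * (ρ ^ (d + 1) * ρ)) := by rw [← hbd]; ring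
        _ ≤ _ := by gcongr
    refine ((hm.mono hmc).bind (e := (1 + C₁) * C₃ * (b ^ d * ρ ^ (2 * d))) fun S₁ _ hR => ?_).mono
      (le_of_eq (by rw [hD]; push_cast; ring))
    refine ((hR.solve (M' := ρ ^ (d + 1)) (Nat.one_le_pow _ _ hρ1) (c := C₃ * ρ ^ (2 * d))
      (by positivity) ?_).mono ?_).imp fun S₂ _ h => h.swap
    · intro J₁ I₁ hI₁ hJ₁ hI₁c hJ₁c S₂ _
      refine hbase ι (I ∪ J) J₁ I₁ ((hJ₁.trans hJ').trans Finset.subset_union_right)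
        ((hI₁.trans hI').trans Finset.subset_union_left) ρ hρ1 hJ₁c (hI₁c.trans ?_) W S₂ hW.ge
      refine (Nat.div_le_div_right hIc).trans (le_of_eq ?_)
      rw [Nat.mul_div_cancel_left _ hb1]
    · have e1 : (J'.card : ℝ) / (ρ ^ (d + 1) : ℕ) ≤ b ^ d := by
        rw [div_le_iff₀ (by positivity)]; push_cast; exact hJc'
      calc ((J'.card : ℝ) / (ρ ^ (d + 1) : ℕ) + (C₁ * b ^ d : ℕ)) * (C₃ * ρ ^ (2 * d))
          ≤ (b ^ d + C₁ * b ^ d) * (C₃ * ρ ^ (2 * d)) := by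
            gcongr; push_cast; exact le_rfl
        _ = _ := by ring
  have hm := (hmul ι I J b r hb1 hr hb.le hJ2 S).of_noPot
    (Ψ := pot (I ∪ J) W) fun S'' h => pot_mono hW0 h
  have hmc : (C₁ : ℝ) * J.card * b ^ (d - 1) * r ^ e + C₁ * (Real.log b + 1) * I.card ≤
      C₁ * (Q + 2) * (b * ρ) ^ (2 * d) := by
    have h1 : (b : ℝ) ^ (d + 1) * b ^ (d - 1) = b ^ (2 * d) := by
      rw [← pow_add]; congr 1; omega
    calc (C₁ : ℝ) * J.card * b ^ (d - 1) * r ^ e + C₁ * (Real.log b + 1) * I.card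
        ≤ C₁ * (b * ρ) ^ (d + 1) * b ^ (d - 1) * ρ +
          C₁ * ((Q + 1) * ρ) * (b * ρ) ^ (d + 1) := by gcongr
      _ = C₁ * (b ^ (2 * d) * (ρ ^ (d + 1) * ρ)) +
          C₁ * (Q + 1) * (b ^ (d + 1) * (ρ ^ (d + 1) * ρ)) := by rw [← h1, mul_pow]; ring
      _ ≤ C₁ * (b ^ (2 * d) * ρ ^ (2 * d)) + C₁ * (Q + 1) * (b ^ (2 * d) * ρ ^ (2 * d)) := by gcongr
      _ = _ := by rw [mul_pow]; ring
  have hsol := (hm.mono hmc).bind (H := Sol I J) (e := (1 + C₁) * D * (b * ρ) ^ (2 * d))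
    fun S₁ _ hR => by
      have hM1 : 1 ≤ b * ρ ^ (d + 1) := Nat.one_le_iff_ne_zero.2 (by positivity)
      refine (hR.solve (M' := b * ρ ^ (d + 1)) hM1 (c := D * (b ^ d * ρ ^ (2 * d)))
        (by positivity) ?_).mono ?_
      · intro I' J' hJ' hI' hJc hIc S₂ _
        refine hinner I' J' hJ' hI' (hJc.trans ((Nat.div_le_div_right hJ).trans (le_of_eq ?_))) hIc S₂
        rw [mul_pow, pow_succ, mul_comm (b ^ d) b, mul_assoc, Nat.mul_div_cancel_left _ hb1]
      · have e1 : (I.card : ℝ) / (b * ρ ^ (d + 1) : ℕ) ≤ b ^ d := by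
          rw [div_le_iff₀ (by positivity)]; push_cast
          refine hIr.trans (le_of_eq ?_)
          rw [mul_pow]; ring
        calc ((I.card : ℝ) / (b * ρ ^ (d + 1) : ℕ) + (C₁ * b ^ d : ℕ)) *
              (D * (b ^ d * ρ ^ (2 * d)))
            ≤ (b ^ d + C₁ * b ^ d) * (D * (b ^ d * ρ ^ (2 * d))) := by
              gcongr; push_cast; exact le_rfl
          _ = _ := by rw [mul_pow, two_mul, pow_add, pow_add]; ring
  refine (hsol.to_noPot (fun S' => pot_nonneg hW0 S')).mono ?_
  have hU : (I ∪ J).card ≤ 2 * (b * ρ) ^ (d + 1) := by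
    have := Finset.card_union_le I J
    omega
  have hpt := hpot ι (I ∪ J) W S _ hW0 hU
  have hlogN : Real.log ((2 * (b * ρ) ^ (d + 1) : ℕ) + d + 2 : ℝ) ≤ (d + 4 + P) * r := by
    have h1 : (1 : ℝ) ≤ (b * ρ) ^ (d + 1) := one_le_pow₀ (one_le_mul_of_one_le_of_one_le hb1' hρ1')
    have h2 : ((2 * (b * ρ) ^ (d + 1) : ℕ) + d + 2 : ℝ) ≤ (d + 4 : ℕ) * r ^ P := by
      have : ((r : ℝ)) ^ P = (b * ρ) ^ (d + 1) := by rw [hP]; exact_mod_cast hN0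
      rw [this]; push_cast
      have h3 : (d + 2 : ℝ) ≤ (d + 2) * (b * ρ) ^ (d + 1) := le_mul_of_one_le_right (by positivity) h1
      linarith
    refine (Real.log_le_log (by positivity) h2).trans ?_
    rw [Real.log_mul (by positivity) (by positivity), Real.log_pow]
    have h3 := log_add_one_le (show 1 ≤ d + 4 by omega)
    push_cast at h3 ⊢
    have h4 : (P : ℝ) * Real.log r ≤ P * r := by gcongr
    have h5 : (d + 4 : ℝ) ≤ (d + 4) * r := le_mul_of_one_le_right (by positivity) hr1'
    linarith
  have hpt2 : pot (I ∪ J) W S ≤ 2 * C₃ * K * (d + 4 + P) * (b * ρ) ^ (2 * d) := by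
    refine hpt.trans ?_
    rw [hW]
    calc (C₃ : ℝ) * ρ ^ w * (K * (2 * (b * ρ) ^ (d + 1) : ℕ) *
          Real.log ((2 * (b * ρ) ^ (d + 1) : ℕ) + d + 2 : ℝ))
        ≤ C₃ * ρ ^ w * (K * (2 * (b * ρ) ^ (d + 1) : ℕ) * ((d + 4 + P) * r)) := by gcongr
      _ = 2 * C₃ * K * (d + 4 + P) * ((b ^ (d + 1) * (ρ ^ w * r)) * ρ ^ (d + 1)) := by
          push_cast; rw [mul_pow]; ring
      _ ≤ 2 * C₃ * K * (d + 4 + P) * ((b ^ (d + 1) * b) * ρ ^ (d + 1)) := by gcongr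
      _ ≤ 2 * C₃ * K * (d + 4 + P) * (b ^ (2 * d) * ρ ^ (2 * d)) := by gcongr
      _ = _ := by rw [mul_pow]
  push_cast
  linarith

/-- Balanced problems. -/
theorem bal (hd : 2 ≤ d) : ∃ C : ℕ, ∀ (ι : Type) [Fintype ι] (I J : Finset ι) (N : ℕ),
    1 ≤ N → I.card ≤ N → J.card ≤ N → ∀ S : Set (Cfg d ι),
      Can noPot (Sol I J) (C * (N : ℝ) ^ ((2 * d : ℝ) / (d + 1))) S := by
  obtain ⟨C, k, hk, h⟩ := bal_pow hd
  obtain ⟨A, hA⟩ : ∃ A, A = (d + 1) * k := ⟨_, rfl⟩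
  refine ⟨C * 2 ^ (2 * A), fun ι _ I J N hN hI hJ S => ?_⟩
  have hA1 : 1 ≤ A := by rw [hA]; exact Nat.one_le_iff_ne_zero.2 (by positivity)
  obtain ⟨r, hr2, hr, hr'⟩ := exists_root hA1 hN
  have hN1 : (1 : ℝ) ≤ N := by exact_mod_cast hN
  have hd0 : (0 : ℝ) ≤ (2 * d : ℝ) / (d + 1) := by positivity
  refine (h ι I J r (by omega) (hI.trans (hA ▸ hr)) (hJ.trans (hA ▸ hr)) S).mono ?_
  have h1 : (r : ℝ) ^ (2 * d * k) = ((r : ℝ) ^ A) ^ ((2 * d : ℝ) / (d + 1)) := by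
    rw [← Real.rpow_natCast, ← Real.rpow_natCast, ← Real.rpow_mul (Nat.cast_nonneg _), hA]
    congr 1
    push_cast; field_simp
  have h2 : ((r : ℝ) ^ A) ^ ((2 * d : ℝ) / (d + 1)) ≤
      (2 ^ A * N : ℝ) ^ ((2 * d : ℝ) / (d + 1)) :=
    Real.rpow_le_rpow (by positivity) (by exact_mod_cast hr') hd0
  have h3 : ((2 : ℝ) ^ A) ^ ((2 * d : ℝ) / (d + 1)) ≤ 2 ^ (2 * A) := by
    rw [mul_comm 2 A, pow_mul, ← Real.rpow_natCast ((2 : ℝ) ^ A) 2]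
    refine Real.rpow_le_rpow_of_exponent_le (one_le_pow₀ (by norm_num)) ?_
    rw [div_le_iff₀ (by positivity)]; push_cast; linarith
  rw [Real.mul_rpow (by positivity) (by positivity)] at h2
  rw [h1]
  push_cast
  calc (C : ℝ) * ((r : ℝ) ^ A) ^ ((2 * d : ℝ) / (d + 1))
      ≤ C * (2 ^ (2 * A) * N ^ ((2 * d : ℝ) / (d + 1))) := by
        gcongr
        exact h2.trans (mul_le_mul_of_nonneg_right h3 (by positivity))
    _ = _ := by ring

end Hop

namespace Hop
set_option linter.unusedSectionVars false
variable {d : ℕ} {ι : Type} [Fintype ι]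
open SignType (sign)

/-! ### Unbalanced problems -/

lemma le_rpow_of_pow {x z : ℝ} (hx : 0 ≤ x) (hz : 0 ≤ z) (h : x ^ (d + 1) ≤ z ^ d) :
    x ≤ z ^ ((d : ℝ) / (d + 1)) := by
  have h1 : x = (x ^ (d + 1)) ^ ((1 : ℝ) / (d + 1)) := by
    rw [← Real.rpow_natCast, ← Real.rpow_mul hx]
    push_cast
    rw [mul_one_div_cancel (by positivity), Real.rpow_one]
  have h2 : z ^ ((d : ℝ) / (d + 1)) = (z ^ d) ^ ((1 : ℝ) / (d + 1)) := by
    rw [← Real.rpow_natCast, ← Real.rpow_mul hz]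
    congr 1; ring
  rw [h2, h1]
  exact Real.rpow_le_rpow (by positivity) h (by positivity)

/-- The size of the balanced subproblems to which an unbalanced problem is reduced. -/
lemma exists_group (hd : 2 ≤ d) {m n : ℕ} (hn : 1 ≤ n) (hnm : n ≤ m) (hmn : m ≤ n ^ d) :
    ∃ N, 1 ≤ N ∧ N ≤ n ∧ n ^ d ≤ m * N ^ (d - 1) ∧ m * N ^ (d - 1) ≤ 2 ^ (d - 1) * n ^ d := by
  classical
  have hd1 : n * n ^ (d - 1) = n ^ d := mul_pow_sub_one (by omega) n
  have hex : ∃ N, n ^ d ≤ m * N ^ (d - 1) := ⟨n, hd1 ▸ Nat.mul_le_mul_right _ hnm⟩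
  have hpos : 1 ≤ n ^ d := Nat.one_le_pow _ _ hn
  have h1 := Nat.find_spec hex
  have h0 : 1 ≤ Nat.find hex := by
    by_contra hc
    have : Nat.find hex = 0 := by omega
    rw [this, zero_pow (by omega), mul_zero] at h1
    omega
  refine ⟨Nat.find hex, h0, Nat.find_min' hex (hd1 ▸ Nat.mul_le_mul_right _ hnm), h1, ?_⟩
  rcases h0.eq_or_lt with h | h
  · rw [← h, one_pow, mul_one]
    exact hmn.trans (Nat.le_mul_of_pos_left _ (by positivity))
  · have h3 := Nat.find_min hex (m := Nat.find hex - 1) (by omega)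
    push Not at h3
    calc m * (Nat.find hex) ^ (d - 1) ≤ m * (2 * (Nat.find hex - 1)) ^ (d - 1) := by
          gcongr; omega
      _ = 2 ^ (d - 1) * (m * (Nat.find hex - 1) ^ (d - 1)) := by rw [mul_pow]; ring
      _ ≤ _ := Nat.mul_le_mul_left _ h3.le

/-- Division with rounding up. -/
lemma exists_ceil {n y : ℕ} (hy : 1 ≤ y) (hyn : y ≤ n) :
    ∃ b, 1 ≤ b ∧ b ≤ n ∧ n ≤ b * y ∧ b * y ≤ 2 * n := by
  have h1 : n - 1 < y * ((n - 1) / y + 1) := Nat.lt_mul_div_succ (n - 1) hy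
  have h2 : y * ((n - 1) / y) ≤ n - 1 := Nat.mul_div_le (n - 1) y
  have h3 : (n - 1) / y ≤ n - 1 := Nat.div_le_self _ _
  obtain ⟨q, hq⟩ : ∃ q, q = (n - 1) / y := ⟨_, rfl⟩
  rw [← hq] at h1 h2 h3
  refine ⟨q + 1, by omega, by omega, ?_, ?_⟩
  · rw [mul_comm]; omega
  · rw [mul_comm, mul_add, mul_one]; omega

/-- The quantities `u = n / N` and `T = N ^ (2 d / (d + 1))` of a reduction to `u ^ d` balanced
problems of size `N`. -/
lemma group_bounds (hd : 2 ≤ d) {m n N : ℕ} (hn : 1 ≤ n) (hN : 1 ≤ N)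
    (h1 : n ^ d ≤ m * N ^ (d - 1)) (h2 : m * N ^ (d - 1) ≤ 2 ^ (d - 1) * n ^ d) :
    ((n : ℝ) / N) ^ d * (N : ℝ) ^ ((2 * d : ℝ) / (d + 1)) ≤ ((m : ℝ) * n) ^ ((d : ℝ) / (d + 1)) ∧
    ((n : ℝ) / N) ^ d * N ≤ m ∧ (m : ℝ) / N ≤ 2 ^ d * ((n : ℝ) / N) ^ d := by
  have hN0 : (0 : ℝ) < N := by exact_mod_cast hN
  have hn0 : (0 : ℝ) < n := by exact_mod_cast hn
  have h1' : (n : ℝ) ^ d ≤ m * N ^ (d - 1) := by exact_mod_cast h1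
  have h2' : (m : ℝ) * N ^ (d - 1) ≤ 2 ^ (d - 1) * n ^ d := by exact_mod_cast h2
  have hNd : (N : ℝ) ^ d = N ^ (d - 1) * N := (pow_sub_one_mul (by omega) _).symm
  refine ⟨?_, ?_, ?_⟩
  · have e1 : ((n : ℝ) / N) ^ d = (((n : ℝ) / N) ^ (d + 1)) ^ ((d : ℝ) / (d + 1)) := by
      rw [← Real.rpow_natCast _ (d + 1), ← Real.rpow_mul (by positivity), ← Real.rpow_natCast]
      congr 1
      push_cast; field_simp
    have e2 : (N : ℝ) ^ ((2 * d : ℝ) / (d + 1)) = ((N : ℝ) ^ 2) ^ ((d : ℝ) / (d + 1)) := by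
      rw [← Real.rpow_natCast _ 2, ← Real.rpow_mul (by positivity)]
      congr 1
      push_cast; ring
    rw [e1, e2, ← Real.mul_rpow (by positivity) (by positivity)]
    refine Real.rpow_le_rpow (by positivity) ?_ (by positivity)
    have e3 : ((n : ℝ) / N) ^ (d + 1) * N ^ 2 = n ^ d * n / N ^ (d - 1) := by
      rw [div_pow, pow_succ (N : ℝ), hNd]; field_simp; ring
    rw [e3, div_le_iff₀ (by positivity)]
    nlinarith
  · rw [div_pow, hNd]
    have : (n : ℝ) ^ d / (N ^ (d - 1) * N) * N = n ^ d / N ^ (d - 1) := by field_simp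
    rw [this, div_le_iff₀ (by positivity)]
    exact h1'
  · rw [div_pow, hNd, div_le_iff₀ hN0]
    have : (2 : ℝ) ^ d * (n ^ d / (N ^ (d - 1) * N)) * N = 2 ^ d * n ^ d / N ^ (d - 1) := by
      field_simp
    rw [this, le_div_iff₀ (by positivity)]
    refine h2'.trans ?_
    gcongr
    · norm_num
    · omega

/-- If the balanced subproblems are large, one reduction suffices. -/
lemma phase_large (hd : 2 ≤ d) {e : ℕ} (he : MultiBound d e) {R : ℕ} (hR : 1 ≤ R) :
    ∃ C : ℕ, ∀ (ι : Type) [Fintype ι] (I J : Finset ι) (m n N r : ℕ), 2 ≤ n → 1 ≤ N → N ≤ n →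
      n ^ d ≤ m * N ^ (d - 1) → m * N ^ (d - 1) ≤ 2 ^ (d - 1) * n ^ d →
      I.card ≤ m → J.card ≤ n → 1 ≤ r → n ≤ r ^ R → r ^ (e * (d + 1)) ≤ N →
      ∀ S : Set (Cfg d ι), Can noPot (Sol I J)
        (C * (((m : ℝ) * n) ^ ((d : ℝ) / (d + 1)) + m * Real.log n)) S := by
  obtain ⟨C₁, hC₁, hm⟩ := he R R hR
  obtain ⟨C₂, hbal⟩ := bal hd
  refine ⟨2 ^ d * C₁ + 3 * C₁ + 2 ^ d * (1 + C₁) * C₂,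
    fun ι _ I J m n N r hn hN hNn h1 h2 hI hJ hr hnr hrN S => ?_⟩
  obtain ⟨b, hb1, hbn, hb2, hb3⟩ := exists_ceil hN hNn
  obtain ⟨g1, g2, g3⟩ := group_bounds hd (by omega) hN h1 h2
  obtain ⟨u, hu⟩ : ∃ u : ℝ, u = n / N := ⟨_, rfl⟩
  obtain ⟨T, hT⟩ : ∃ T : ℝ, T = (N : ℝ) ^ ((2 * d : ℝ) / (d + 1)) := ⟨_, rfl⟩
  obtain ⟨X, hX⟩ : ∃ X : ℝ, X = ((m : ℝ) * n) ^ ((d : ℝ) / (d + 1)) := ⟨_, rfl⟩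
  obtain ⟨L, hL⟩ : ∃ L : ℝ, L = Real.log n := ⟨_, rfl⟩
  have hN0 : (0 : ℝ) < N := by exact_mod_cast hN
  have hn0 : (0 : ℝ) < n := by exact_mod_cast (by omega : 0 < n)
  have hr1 : (1 : ℝ) ≤ r := by exact_mod_cast hr
  have hIr : (I.card : ℝ) ≤ m := by exact_mod_cast hI
  have hJr : (J.card : ℝ) ≤ n := by exact_mod_cast hJ
  have hu0 : 0 < u := by rw [hu]; positivity
  have hT0 : 0 < T := by rw [hT]; positivity
  have hL1 : 1 ≤ 2 * L := by
    have := Real.log_two_gt_d9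
    have h3 : Real.log 2 ≤ Real.log n := Real.log_le_log (by norm_num) (by exact_mod_cast hn)
    rw [hL]; linarith
  have hbu : (b : ℝ) ≤ 2 * u := by
    rw [hu, ← mul_div_assoc, le_div_iff₀ hN0]; exact_mod_cast hb3
  have hlb : Real.log b + 1 ≤ 3 * L := by
    have : Real.log b ≤ L := by
      rw [hL]; exact Real.log_le_log (by exact_mod_cast hb1) (by exact_mod_cast hbn)
    linarith
  have hlb0 : 0 ≤ Real.log b := Real.log_natCast_nonneg b
  have hNT : (N : ℝ) * r ^ e ≤ T := by
    have e2 : T = ((N : ℝ) ^ 2) ^ ((d : ℝ) / (d + 1)) := by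
      rw [hT, ← Real.rpow_natCast _ 2, ← Real.rpow_mul (by positivity)]
      congr 1
      push_cast; ring
    rw [e2]
    refine le_rpow_of_pow (by positivity) (by positivity) ?_
    have hrN' : (r : ℝ) ^ (e * (d + 1)) ≤ N := by exact_mod_cast hrN
    calc ((N : ℝ) * r ^ e) ^ (d + 1) = N ^ (d + 1) * r ^ (e * (d + 1)) := by
          rw [mul_pow, ← pow_mul]
      _ ≤ N ^ (d + 1) * N := by gcongr
      _ = N ^ (d + 2) := by ring
      _ ≤ N ^ (2 * d) := pow_le_pow_right₀ (by exact_mod_cast hN) (by omega)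
      _ = _ := by rw [← pow_mul]
  rw [← hu, ← hT, ← hX] at g1
  rw [← hu] at g2 g3
  rw [← hX, ← hL]
  have hnu : (n : ℝ) = u * N := by rw [hu, div_mul_cancel₀ _ hN0.ne']
  have hud : u ^ (d - 1) * u = u ^ d := pow_sub_one_mul (by omega) _
  have hJ2 : J.card ≤ 2 ^ (R * r) := by
    refine (hJ.trans hnr).trans ?_
    rw [mul_comm R r, pow_mul]
    exact Nat.pow_le_pow_left (Nat.lt_two_pow_self).le _
  have hred := hm ι I J b r hb1 hr (hbn.trans hnr) hJ2 S
  have hcost : (C₁ : ℝ) * J.card * b ^ (d - 1) * r ^ e + C₁ * (Real.log b + 1) * I.card ≤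
      2 ^ d * C₁ * X + 3 * C₁ * (m * L) := by
    have e1 : (C₁ : ℝ) * J.card * b ^ (d - 1) * r ^ e ≤ 2 ^ d * C₁ * X := by
      calc (C₁ : ℝ) * J.card * b ^ (d - 1) * r ^ e ≤ C₁ * n * (2 * u) ^ (d - 1) * r ^ e := by gcongr
        _ = 2 ^ (d - 1) * C₁ * (u ^ d * (N * r ^ e)) := by rw [hnu, mul_pow, ← hud]; ring
        _ ≤ 2 ^ d * C₁ * (u ^ d * T) := by
            gcongr
            · norm_num
            · omega
        _ ≤ _ := by gcongr
    have e2 : (C₁ : ℝ) * (Real.log b + 1) * I.card ≤ C₁ * (3 * L) * m :=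
      mul_le_mul (mul_le_mul_of_nonneg_left hlb (by positivity)) hIr (Nat.cast_nonneg _)
        (mul_nonneg (Nat.cast_nonneg _) (by linarith))
    linarith
  refine ((hred.mono hcost).bind (e := 2 ^ d * (1 + C₁) * C₂ * X) fun S' _ hRed => ?_).mono ?_
  · refine (hRed.solve (M' := N) hN (c := C₂ * T) (by positivity) ?_).mono ?_
    · intro I' J' hJ' hI' hJc hIc S'' _
      rw [hT]
      refine hbal ι I' J' N hN hIc (hJc.trans ?_) S''
      exact Nat.div_le_of_le_mul (hJ.trans hb2)
    · have e1 : (I.card : ℝ) / N ≤ 2 ^ d * u ^ d := le_trans (by gcongr) g3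
      have e2 : ((C₁ * b ^ d : ℕ) : ℝ) ≤ C₁ * (2 * u) ^ d := by push_cast; gcongr
      calc ((I.card : ℝ) / N + (C₁ * b ^ d : ℕ)) * (C₂ * T)
          ≤ (2 ^ d * u ^ d + C₁ * (2 * u) ^ d) * (C₂ * T) := by gcongr
        _ = 2 ^ d * (1 + C₁) * C₂ * (u ^ d * T) := by rw [mul_pow]; ring
        _ ≤ _ := by gcongr
  · have hX0 : 0 ≤ X := by rw [hX]; positivity
    have hmL : 0 ≤ (m : ℝ) * L := mul_nonneg (Nat.cast_nonneg _) (by linarith)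
    have e1 : 0 ≤ 3 * (C₁ : ℝ) * X := by positivity
    have e2 : 0 ≤ 2 ^ d * (C₁ : ℝ) * (m * L) := by positivity
    have e3 : 0 ≤ 2 ^ d * (1 + (C₁ : ℝ)) * C₂ * (m * L) := by positivity
    push_cast
    linarith

end Hop

namespace Hop
set_option linter.unusedSectionVars false
variable {d : ℕ} {ι : Type} [Fintype ι]
open SignType (sign)

set_option maxHeartbeats 1000000 in
/-- If the balanced subproblems have size polylogarithmic in `n`, the overhead of the multi-level
reduction is too large for them. It is stopped at problems larger by a further polylogarithmic
factor `a`, which are then reduced by the one-level reduction, with amortized cost. -/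
lemma phase_small (hd : 2 ≤ d) {e : ℕ} (he : MultiBound d e) :
    ∃ R : ℕ, 1 ≤ R ∧ ∃ C : ℕ, ∀ (ι : Type) [Fintype ι] (I J : Finset ι) (m n N r : ℕ),
      2 ≤ n → n ≤ m → 1 ≤ N → n ^ d ≤ m * N ^ (d - 1) → m * N ^ (d - 1) ≤ 2 ^ (d - 1) * n ^ d →
      I.card ≤ m → J.card ≤ n → 4 ≤ r → n ≤ r ^ R → r ^ R ≤ 2 ^ R * n → N ≤ r ^ (e * (d + 1)) →
      ∀ S : Set (Cfg d ι), Can noPot (Sol I J)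
        (C * (((m : ℝ) * n) ^ ((d : ℝ) / (d + 1)) + m * Real.log n)) S := by
  obtain ⟨C₂, hC₂, hst⟩ := stage2 hd
  obtain ⟨C₃, hbal⟩ := bal hd
  obtain ⟨K, hK, hpot⟩ := pot_le hd
  obtain ⟨s, hs⟩ : ∃ s, s = e * (d + 1) + (e + 1) := ⟨_, rfl⟩
  obtain ⟨B, hB⟩ : ∃ B, B = 2 * (d + 1) ^ 3 := ⟨_, rfl⟩
  have hBd : d + 1 ≤ B := by
    have : d + 1 ≤ (d + 1) ^ 3 := Nat.le_self_pow (by norm_num) _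
    omega
  rw [← hB] at hst
  obtain ⟨h, hh⟩ : ∃ h, h = s + (s * B + 1) * (d + 1) := ⟨_, rfl⟩
  obtain ⟨R, hRdef⟩ : ∃ R, R = 2 * h := ⟨_, rfl⟩
  have hR : 1 ≤ R := by
    have : 1 ≤ s := by omega
    omega
  obtain ⟨C₁, hC₁, hm⟩ := he R R hR
  obtain ⟨K₂, hK₂⟩ : ∃ K₂, K₂ = 4 * (d + 3) ^ B + 3 * C₂ := ⟨_, rfl⟩
  refine ⟨R, hR, 2 ^ d * C₁ + 3 * C₁ + 2 ^ d * (1 + C₁) * (5 * C₂ + (1 + C₂) * C₃) +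
    K₂ * K * (d + 3 + R), fun ι _ I J m n N r hn hnm hN h1 h2 hI hJ hr4 hnr hrn hNr S => ?_⟩
  obtain ⟨a, ha⟩ : ∃ a, a = r ^ (e + 1) := ⟨_, rfl⟩
  have hr : 1 ≤ r := by omega
  have ha1 : 1 ≤ a := by rw [ha]; exact Nat.one_le_pow _ _ hr
  have hrh : r ^ h ≤ n := by
    have e1 : r ^ h * r ^ h ≤ r ^ h * n := by
      calc r ^ h * r ^ h = r ^ R := by rw [← pow_add, hRdef, two_mul]
        _ ≤ 2 ^ R * n := hrn
        _ = 4 ^ h * n := by rw [hRdef, pow_mul]; norm_num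
        _ ≤ _ := Nat.mul_le_mul_right _ (Nat.pow_le_pow_left hr4 h)
    exact Nat.le_of_mul_le_mul_left e1 (by positivity)
  have hNa : N * a ≤ r ^ s := by
    rw [hs, pow_add, ha]; exact Nat.mul_le_mul_right _ hNr
  have hrs : r ^ s ≤ n := (Nat.pow_le_pow_right hr (by omega)).trans hrh
  have hrw : (r ^ (s * B + 1)) ^ (d + 1) ≤ n := by
    rw [← pow_mul]; exact (Nat.pow_le_pow_right hr (by omega)).trans hrh
  have hN1 : 1 ≤ N * a := Nat.mul_pos hN ha1
  have han : a ≤ n := ((Nat.le_mul_of_pos_left a hN).trans hNa).trans hrs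
  obtain ⟨b, hb1, hbn, hb2, hb3⟩ := exists_ceil hN1 (hNa.trans hrs)
  obtain ⟨g1, g2, g3⟩ := group_bounds hd (by omega) hN h1 h2
  obtain ⟨v, hv⟩ : ∃ v : ℝ, v = n / (N * a) := ⟨_, rfl⟩
  obtain ⟨T, hT⟩ : ∃ T : ℝ, T = (N : ℝ) ^ ((2 * d : ℝ) / (d + 1)) := ⟨_, rfl⟩
  obtain ⟨X, hX⟩ : ∃ X : ℝ, X = ((m : ℝ) * n) ^ ((d : ℝ) / (d + 1)) := ⟨_, rfl⟩
  obtain ⟨L, hL⟩ : ∃ L : ℝ, L = Real.log n := ⟨_, rfl⟩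
  have hN1r : (1 : ℝ) ≤ N := by exact_mod_cast hN
  have hN0 : (0 : ℝ) < N := by linarith
  have ha1r : (1 : ℝ) ≤ a := by exact_mod_cast ha1
  have ha0 : (0 : ℝ) < a := by linarith
  have hn0 : (0 : ℝ) < n := by exact_mod_cast (by omega : 0 < n)
  have hr1 : (1 : ℝ) ≤ r := by exact_mod_cast hr
  have hIr : (I.card : ℝ) ≤ m := by exact_mod_cast hI
  have hJr : (J.card : ℝ) ≤ n := by exact_mod_cast hJ
  have hv0 : 0 < v := by rw [hv]; positivity
  have hT0 : 0 < T := by rw [hT]; positivity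
  have hX0 : 0 ≤ X := by rw [hX]; positivity
  have hL1 : 1 ≤ 2 * L := by
    have := Real.log_two_gt_d9
    have h3 : Real.log 2 ≤ Real.log n := Real.log_le_log (by norm_num) (by exact_mod_cast hn)
    rw [hL]; linarith
  have hL0 : 0 ≤ L := by linarith
  have hmL : 0 ≤ (m : ℝ) * L := mul_nonneg (Nat.cast_nonneg _) hL0
  have hNT : (N : ℝ) ≤ T := by
    rw [hT]
    refine Real.self_le_rpow_of_one_le hN1r ?_
    rw [le_div_iff₀ (by positivity)]
    have : (2 : ℝ) ≤ d := by exact_mod_cast hd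
    linarith
  have hu : (n : ℝ) / N = v * a := by rw [hv]; field_simp
  have hnv : (n : ℝ) = v * (N * a) := by rw [hv, div_mul_cancel₀ _ (by positivity)]
  rw [hu, ← hT, ← hX] at g1
  rw [hu] at g2 g3
  rw [← hX, ← hL]
  have hbv : (b : ℝ) ≤ 2 * v := by
    rw [hv, ← mul_div_assoc, le_div_iff₀ (by positivity)]; exact_mod_cast hb3
  have hlog : ∀ x : ℕ, 1 ≤ x → x ≤ n → Real.log x + 1 ≤ 3 * L := by
    intro x hx hxn
    have : Real.log x ≤ L := by
      rw [hL]; exact Real.log_le_log (by exact_mod_cast hx) (by exact_mod_cast hxn)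
    linarith
  have hvd : v ^ (d - 1) * v = v ^ d := pow_sub_one_mul (by omega) _
  have hare : (r : ℝ) ^ e ≤ a ^ (d - 1) := by
    have e1 : (r : ℝ) ^ e ≤ a := by
      rw [ha]; push_cast; exact pow_le_pow_right₀ hr1 (by omega)
    exact e1.trans (le_self_pow₀ ha1r (by omega))
  have had : (a : ℝ) ^ (d - 1) * a = a ^ d := pow_sub_one_mul (by omega) _
  have hJ2 : J.card ≤ 2 ^ (R * r) := by
    refine (hJ.trans hnr).trans ?_
    rw [mul_comm R r, pow_mul]
    exact Nat.pow_le_pow_left (Nat.lt_two_pow_self).le _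
  obtain ⟨W, hW⟩ : ∃ W : ℝ, W = K₂ * (r : ℝ) ^ (s * B) := ⟨_, rfl⟩
  have hW0 : 0 ≤ W := by rw [hW]; positivity
  have hK₂r : (K₂ : ℝ) = 4 * (d + 3) ^ B + 3 * C₂ := by rw [hK₂]; push_cast; ring
  have hrsB : 0 ≤ (r : ℝ) ^ (s * B) := by positivity
  have h4W : 4 * ((d : ℝ) + 3) ^ B * r ^ (s * B) ≤ W := by
    rw [hW, hK₂r]
    have : 0 ≤ 3 * (C₂ : ℝ) * r ^ (s * B) := by positivity
    linarith
  have h3W : 3 * (C₂ : ℝ) * r ^ (s * B) ≤ W := by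
    rw [hW, hK₂r]
    have : 0 ≤ 4 * ((d : ℝ) + 3) ^ B * r ^ (s * B) := by positivity
    linarith
  obtain ⟨c₁, hc₁⟩ : ∃ c₁ : ℝ, c₁ = a ^ d * (2 * C₂ * T + 3 * C₂ * (L * N)) := ⟨_, rfl⟩
  obtain ⟨c₂, hc₂⟩ : ∃ c₂ : ℝ, c₂ = (1 + C₂) * a ^ d * (C₃ * T) := ⟨_, rfl⟩
  have hc₁0 : 0 ≤ c₁ := by rw [hc₁]; positivity
  have hc₂0 : 0 ≤ c₂ := by rw [hc₂]; positivity
  -- the subproblems left by the multi-level reduction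
  have hinner : ∀ I' J', J' ⊆ J → J'.card ≤ N * a → I'.card ≤ N * a ^ d →
      ∀ S' : Set (Cfg d ι), Can (pot J W) (Sol I' J') (c₁ + c₂) S' := by
    intro I' J' hJ' hJc hIc S'
    have hJc' : (J'.card : ℝ) ≤ N * a := by exact_mod_cast hJc
    have hIc' : (I'.card : ℝ) ≤ N * a ^ d := by exact_mod_cast hIc
    have hJs : (J'.card : ℝ) ≤ r ^ s := by exact_mod_cast hJc.trans hNa
    have hJa : (J'.card : ℝ) / a ≤ N := by rw [div_le_iff₀ ha0]; exact hJc'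
    have hla0 : 0 ≤ Real.log a := Real.log_natCast_nonneg a
    have f1 : 4 * ((J'.card : ℝ) + d + 2) ^ B ≤ W := by
      refine le_trans ?_ h4W
      have e1 : (1 : ℝ) ≤ r ^ s := one_le_pow₀ hr1
      have e2 : (J'.card : ℝ) + d + 2 ≤ (d + 3) * r ^ s := by
        have : (d + 2 : ℝ) ≤ (d + 2) * r ^ s := le_mul_of_one_le_right (by positivity) e1
        linarith
      calc 4 * ((J'.card : ℝ) + d + 2) ^ B ≤ 4 * ((d + 3) * r ^ s) ^ B := by
            have : (0 : ℝ) ≤ (J'.card : ℝ) + d + 2 :=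
              add_nonneg (add_nonneg (Nat.cast_nonneg _) (Nat.cast_nonneg _)) (by norm_num)
            exact mul_le_mul_of_nonneg_left (pow_le_pow_left₀ this e2 _) (by norm_num)
        _ = _ := by rw [mul_pow, ← pow_mul]; ring
    have f0 : (C₂ : ℝ) * (J'.card / a + 1) * a ^ d ≤ C₂ * (2 * N) * a ^ d := by
      refine mul_le_mul_of_nonneg_right (mul_le_mul_of_nonneg_left ?_ (Nat.cast_nonneg _))
        (by positivity)
      linarith
    have f2 : (C₂ : ℝ) * (J'.card / a + 1) * a ^ d + C₂ * (Real.log a + 1) * I'.card ≤ W := by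
      refine le_trans ?_ h3W
      have e1 : (C₂ : ℝ) * (Real.log a + 1) * I'.card ≤ C₂ * a * (N * a ^ d) :=
        mul_le_mul (mul_le_mul_of_nonneg_left (log_add_one_le ha1) (Nat.cast_nonneg _)) hIc'
          (Nat.cast_nonneg _) (by positivity)
      have e2 : (N : ℝ) * a ^ d ≤ N * a ^ d * a := le_mul_of_one_le_right (by positivity) ha1r
      have e3 : (N : ℝ) * a ^ d * a ≤ r ^ (s * B) := by
        have e4 : (N : ℝ) ≤ N ^ (d + 1) := le_self_pow₀ hN1r (by omega)
        have e5 : (N : ℝ) * a ≤ r ^ s := by exact_mod_cast hNa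
        calc (N : ℝ) * a ^ d * a ≤ N ^ (d + 1) * a ^ d * a := by gcongr
          _ = (N * a) ^ (d + 1) := by rw [mul_pow]; ring
          _ ≤ (r ^ s) ^ (d + 1) := by gcongr
          _ = r ^ (s * (d + 1)) := by rw [← pow_mul]
          _ ≤ _ := pow_le_pow_right₀ hr1 (Nat.mul_le_mul_left _ hBd)
      calc (C₂ : ℝ) * (J'.card / a + 1) * a ^ d + C₂ * (Real.log a + 1) * I'.card
          ≤ C₂ * (2 * N) * a ^ d + C₂ * a * (N * a ^ d) := add_le_add f0 e1
        _ = C₂ * (2 * (N * a ^ d) + N * a ^ d * a) := by ring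
        _ ≤ C₂ * (3 * r ^ (s * B)) := by gcongr; linarith
        _ = _ := by ring
    have f3 : (C₂ : ℝ) * (J'.card / a + 1) * a ^ d + C₂ * (Real.log a + 1) * I'.card ≤ c₁ := by
      have e1 : (C₂ : ℝ) * (Real.log a + 1) * I'.card ≤ C₂ * (3 * L) * (N * a ^ d) :=
        mul_le_mul (mul_le_mul_of_nonneg_left (hlog a ha1 han) (Nat.cast_nonneg _)) hIc'
          (Nat.cast_nonneg _) (by positivity)
      have e2 : (C₂ : ℝ) * (2 * N) * a ^ d ≤ C₂ * (2 * T) * a ^ d := by gcongr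
      refine (add_le_add (f0.trans e2) e1).trans (le_of_eq ?_)
      rw [hc₁]; ring
    refine ((hst ι J I' J' hJ' a ha1 W S' f1 f2).mono f3).bind fun S₁ _ hRed => ?_
    refine (hRed.solve (M' := N) hN (c := C₃ * T) (by positivity) ?_).mono ?_
    · intro I₁ J₁ _ _ hJ₁ hI₁ S₂ _
      rw [hT]
      refine (hbal ι I₁ J₁ N hN hI₁ (hJ₁.trans ?_) S₂).of_noPot fun S₃ h => pot_mono hW0 h
      exact Nat.div_le_of_le_mul (by rw [mul_comm]; exact hJc)
    · have e1 : (I'.card : ℝ) / N ≤ a ^ d := by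
        rw [div_le_iff₀ hN0, mul_comm]; exact hIc'
      rw [hc₂]
      refine mul_le_mul_of_nonneg_right ?_ (by positivity)
      push_cast
      linarith
  have hred := (hm ι I J b r hb1 hr (hbn.trans hnr) hJ2 S).of_noPot
    (Ψ := pot J W) fun S'' h => pot_mono hW0 h
  have hcost : (C₁ : ℝ) * J.card * b ^ (d - 1) * r ^ e + C₁ * (Real.log b + 1) * I.card ≤
      2 ^ d * C₁ * X + 3 * C₁ * (m * L) := by
    have e1 : (C₁ : ℝ) * J.card * b ^ (d - 1) * r ^ e ≤ 2 ^ d * C₁ * X := by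
      calc (C₁ : ℝ) * J.card * b ^ (d - 1) * r ^ e
          ≤ C₁ * n * (2 * v) ^ (d - 1) * a ^ (d - 1) := by gcongr
        _ = 2 ^ (d - 1) * C₁ * ((v * a) ^ d * N) := by
            rw [hnv, mul_pow, mul_pow, ← hvd, ← had]; ring
        _ ≤ 2 ^ d * C₁ * ((v * a) ^ d * T) := by
            gcongr
            · norm_num
            · omega
        _ ≤ _ := by gcongr
    have e2 : (C₁ : ℝ) * (Real.log b + 1) * I.card ≤ C₁ * (3 * L) * m :=
      mul_le_mul (mul_le_mul_of_nonneg_left (hlog b hb1 hbn) (Nat.cast_nonneg _)) hIr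
        (Nat.cast_nonneg _) (by positivity)
    linarith
  have hsol := (hred.mono hcost).bind (H := Sol I J)
    (e := 2 ^ d * (1 + C₁) * ((2 * C₂ + (1 + C₂) * C₃) * X + 3 * C₂ * (m * L)))
    fun S₁ _ hRed => by
      refine (hRed.solve (M' := N * a ^ d) (Nat.mul_pos hN (by positivity)) (c := c₁ + c₂)
        (by positivity) ?_).mono ?_
      · intro I' J' hJ' _ hJc hIc S₂ _
        exact hinner I' J' hJ' (hJc.trans (Nat.div_le_of_le_mul (hJ.trans hb2))) hIc S₂
      · have e1 : (I.card : ℝ) / (N * a ^ d : ℕ) ≤ 2 ^ d * v ^ d := by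
          push_cast
          rw [div_le_iff₀ (by positivity)]
          rw [div_le_iff₀ hN0, mul_pow] at g3
          refine (hIr.trans g3).trans (le_of_eq (by ring))
        have e2 : ((C₁ * b ^ d : ℕ) : ℝ) ≤ C₁ * (2 * v) ^ d := by push_cast; gcongr
        calc ((I.card : ℝ) / (N * a ^ d : ℕ) + (C₁ * b ^ d : ℕ)) * (c₁ + c₂)
            ≤ (2 ^ d * v ^ d + C₁ * (2 * v) ^ d) * (c₁ + c₂) := by gcongr
          _ = 2 ^ d * (1 + C₁) * ((2 * C₂ + (1 + C₂) * C₃) * ((v * a) ^ d * T) +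
                3 * C₂ * ((v * a) ^ d * N * L)) := by
              rw [hc₁, hc₂, mul_pow, mul_pow]; ring
          _ ≤ _ := by gcongr
  refine (hsol.to_noPot (fun S' => pot_nonneg hW0 S')).mono ?_
  have hpt := hpot ι J W S n hW0 hJ
  have hlogN : Real.log ((n : ℝ) + d + 2) ≤ (d + 3 + R) * r := by
    have h2 : ((n : ℝ) + d + 2) ≤ (d + 3 : ℕ) * r ^ R := by
      have e1 : (1 : ℝ) ≤ r ^ R := one_le_pow₀ hr1
      have e2 : (n : ℝ) ≤ r ^ R := by exact_mod_cast hnr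
      have h3 : (d + 2 : ℝ) ≤ (d + 2) * r ^ R := le_mul_of_one_le_right (by positivity) e1
      push_cast
      linarith
    refine (Real.log_le_log (by positivity) h2).trans ?_
    rw [Real.log_mul (by positivity) (by positivity), Real.log_pow]
    have h3 := log_add_one_le (show 1 ≤ d + 3 by omega)
    have h6 := log_add_one_le hr
    push_cast at h3 ⊢
    have h4 : (R : ℝ) * Real.log r ≤ R * r := by gcongr; linarith
    have h5 : (d + 3 : ℝ) ≤ (d + 3) * r := le_mul_of_one_le_right (by positivity) hr1
    linarith
  have hrX : (r : ℝ) ^ (s * B + 1) * n ≤ X := by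
    rw [hX]
    refine le_rpow_of_pow (by positivity) (by positivity) ?_
    have e1 : ((r : ℝ) ^ (s * B + 1)) ^ (d + 1) ≤ n := by exact_mod_cast hrw
    have e2 : (1 : ℝ) ≤ n := by exact_mod_cast (by omega : 1 ≤ n)
    have e3 : (n : ℝ) ≤ m := by exact_mod_cast hnm
    calc ((r : ℝ) ^ (s * B + 1) * n) ^ (d + 1)
        = (r ^ (s * B + 1)) ^ (d + 1) * n ^ (d + 1) := mul_pow _ _ _
      _ ≤ n * n ^ (d + 1) := by gcongr
      _ = n ^ (d + 2) := by ring
      _ ≤ n ^ (2 * d) := pow_le_pow_right₀ e2 (by omega)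
      _ = (n * n : ℝ) ^ d := by rw [pow_mul, pow_two]
      _ ≤ _ := by gcongr
  have hpt2 : pot J W S ≤ K₂ * K * (d + 3 + R) * X := by
    refine hpt.trans ?_
    rw [hW]
    calc (K₂ : ℝ) * r ^ (s * B) * (K * n * Real.log ((n : ℝ) + d + 2))
        ≤ K₂ * r ^ (s * B) * (K * n * ((d + 3 + R) * r)) := by gcongr
      _ = K₂ * K * (d + 3 + R) * (r ^ (s * B + 1) * n) := by ring
      _ ≤ _ := by gcongr
  have e1 : 0 ≤ 3 * (C₁ : ℝ) * X := by positivity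
  have e2 : 0 ≤ 2 ^ d * (C₁ : ℝ) * (m * L) := by positivity
  have e3 : 0 ≤ 2 ^ d * (1 + (C₁ : ℝ)) * (3 * C₂) * X := by positivity
  have e4 : 0 ≤ 2 ^ d * (1 + (C₁ : ℝ)) * (2 * C₂ + (1 + C₂) * C₃) * (m * L) := by positivity
  have e5 : 0 ≤ (K₂ : ℝ) * K * (d + 3 + R) * (m * L) := by positivity
  push_cast
  linarith

end Hop

namespace Hop
set_option linter.unusedSectionVars false
variable {d : ℕ} {ι : Type} [Fintype ι]
open SignType (sign)

lemma one_le_two_log {n : ℕ} (hn : 2 ≤ n) : 1 ≤ 2 * Real.log n := by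
  have := Real.log_two_gt_d9
  have h3 : Real.log 2 ≤ Real.log n := Real.log_le_log (by norm_num) (by exact_mod_cast hn)
  linarith

/-- The range `n ≤ m ≤ n ^ d`. -/
theorem phase_mid (hd : 2 ≤ d) : ∃ C : ℕ, ∀ (ι : Type) [Fintype ι] (I J : Finset ι) (m n : ℕ),
    2 ≤ n → n ≤ m → m ≤ n ^ d → I.card ≤ m → J.card ≤ n → ∀ S : Set (Cfg d ι),
      Can noPot (Sol I J) (C * (((m : ℝ) * n) ^ ((d : ℝ) / (d + 1)) + m * Real.log n)) S := by
  obtain ⟨e, he⟩ := multi hd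
  obtain ⟨R, hR, C₁, hsmall⟩ := phase_small hd he
  obtain ⟨C₂, hlarge⟩ := phase_large hd he hR
  refine ⟨2 * 4 ^ R + C₁ + C₂, fun ι _ I J m n hn hnm hmn hI hJ S => ?_⟩
  have hL := one_le_two_log hn
  obtain ⟨Y, hY⟩ : ∃ Y : ℝ, Y = ((m : ℝ) * n) ^ ((d : ℝ) / (d + 1)) + m * Real.log n := ⟨_, rfl⟩
  have hX0 : (0 : ℝ) ≤ ((m : ℝ) * n) ^ ((d : ℝ) / (d + 1)) := by positivity
  have hL0 : 0 ≤ (m : ℝ) * Real.log n := by positivity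
  have hY0 : 0 ≤ Y := by rw [hY]; positivity
  have hYm : (m : ℝ) ≤ 2 * Y := by
    have : (m : ℝ) ≤ m * (2 * Real.log n) := le_mul_of_one_le_right (Nat.cast_nonneg _) hL
    rw [hY]; linarith
  obtain ⟨N, hN, hNn, h1, h2⟩ := exists_group hd (by omega) hnm hmn
  obtain ⟨r, hr2, hnr, hrn⟩ := exists_root hR (show 1 ≤ n by omega)
  have c1 : 0 ≤ (C₁ : ℝ) * Y := by positivity
  have c2 : 0 ≤ (C₂ : ℝ) * Y := by positivity
  have c3 : 0 ≤ 2 * (4 : ℝ) ^ R * Y := by positivity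
  rw [← hY]
  push_cast
  by_cases hr4 : 4 ≤ r
  · rcases le_total (r ^ (e * (d + 1))) N with hc | hc
    · refine (hlarge ι I J m n N r hn hN hNn h1 h2 hI hJ (by omega) hnr hc S).mono ?_
      rw [← hY]; linarith
    · refine (hsmall ι I J m n N r hn hnm hN h1 h2 hI hJ hr4 hnr hrn hc S).mono ?_
      rw [← hY]; linarith
  · refine (Sol.brute I J S).mono ?_
    have hn4 : n ≤ 4 ^ R := hnr.trans (Nat.pow_le_pow_left (by omega) R)
    have e1 : I.card * J.card ≤ m * 4 ^ R := Nat.mul_le_mul hI (hJ.trans hn4)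
    have e2 : (I.card : ℝ) * J.card ≤ m * 4 ^ R := by exact_mod_cast e1
    have e3 : (m : ℝ) * 4 ^ R ≤ 2 * Y * 4 ^ R := by gcongr
    linarith

/-- The range `n ≤ m`: if `m > n ^ d`, the points are split into groups of size `n ^ d`. -/
theorem phase_ge (hd : 2 ≤ d) : ∃ C : ℕ, ∀ (ι : Type) [Fintype ι] (I J : Finset ι) (m n : ℕ),
    2 ≤ n → n ≤ m → I.card ≤ m → J.card ≤ n → ∀ S : Set (Cfg d ι),
      Can noPot (Sol I J) (C * (((m : ℝ) * n) ^ ((d : ℝ) / (d + 1)) + m * Real.log n)) S := by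
  obtain ⟨C, hC⟩ := phase_mid hd
  refine ⟨6 * C, fun ι _ I J m n hn hnm hI hJ S => ?_⟩
  have hL := one_le_two_log hn
  have hX0 : (0 : ℝ) ≤ ((m : ℝ) * n) ^ ((d : ℝ) / (d + 1)) := by positivity
  have hL0 : 0 ≤ (m : ℝ) * Real.log n := by positivity
  by_cases hmn : m ≤ n ^ d
  · refine (hC ι I J m n hn hnm hmn hI hJ S).mono ?_
    push_cast
    have : 0 ≤ (C : ℝ) * (((m : ℝ) * n) ^ ((d : ℝ) / (d + 1)) + m * Real.log n) := by positivity
    linarith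
  push Not at hmn
  have hnd : n ≤ n ^ d := Nat.le_self_pow (by omega) n
  have hn0 : (0 : ℝ) < n := by exact_mod_cast (by omega : 0 < n)
  have hM : (0 : ℝ) < n ^ d := by positivity
  have hmr : (n : ℝ) ^ d ≤ m := by exact_mod_cast hmn.le
  have hIr : (I.card : ℝ) ≤ m := by exact_mod_cast hI
  have hpow : (((n ^ d : ℕ) : ℝ) * n) ^ ((d : ℝ) / (d + 1)) = n ^ d := by
    push_cast
    rw [← pow_succ, ← Real.rpow_natCast, ← Real.rpow_mul hn0.le, ← Real.rpow_natCast]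
    congr 1
    push_cast; field_simp
  have hsub : ∀ I' J', J' ⊆ J → I' ⊆ I → J'.card ≤ J.card → I'.card ≤ n ^ d → ∀ S' ⊆ S,
      Can noPot (Sol I' J') (C * (3 * n ^ d * Real.log n)) S' := by
    intro I' J' _ _ hJ' hI' S' _
    refine (hC ι I' J' (n ^ d) n hn hnd le_rfl hI' (hJ'.trans hJ) S').mono ?_
    rw [hpow]; push_cast
    have : (n : ℝ) ^ d ≤ n ^ d * (2 * Real.log n) := le_mul_of_one_le_right hM.le hL
    exact mul_le_mul_of_nonneg_left (by linarith) (Nat.cast_nonneg _)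
  refine ((Red.refl I J S).solve (M' := n ^ d) (by omega) (by positivity) hsub).mono ?_
  push_cast
  have e1 : (I.card : ℝ) / n ^ d + 1 ≤ 2 * m / n ^ d := by
    rw [le_div_iff₀ hM, add_mul, div_mul_cancel₀ _ hM.ne']; linarith
  calc ((I.card : ℝ) / n ^ d + 1) * (C * (3 * n ^ d * Real.log n))
      ≤ 2 * m / n ^ d * (C * (3 * n ^ d * Real.log n)) :=
        mul_le_mul_of_nonneg_right e1 (by positivity)
    _ = 6 * C * (m * Real.log n) := by field_simp; ring
    _ ≤ _ := by
        have : 0 ≤ 6 * (C : ℝ) * ((m : ℝ) * n) ^ ((d : ℝ) / (d + 1)) := by positivity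
        linarith

/-- All problems. -/
theorem solve_all (hd : 2 ≤ d) : ∃ C : ℕ, ∀ (ι : Type) [Fintype ι] (I J : Finset ι) (m n : ℕ),
    2 ≤ m → 2 ≤ n → I.card ≤ m → J.card ≤ n → ∀ S : Set (Cfg d ι),
      Can noPot (Sol I J) (C * (((m : ℝ) * n) ^ ((d : ℝ) / (d + 1)) + m * Real.log n +
        n * Real.log m)) S := by
  obtain ⟨C, hC⟩ := phase_ge hd
  refine ⟨C, fun ι _ I J m n hm hn hI hJ S => ?_⟩
  have hX0 : (0 : ℝ) ≤ ((m : ℝ) * n) ^ ((d : ℝ) / (d + 1)) := by positivity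
  have hL0 : 0 ≤ (m : ℝ) * Real.log n := by positivity
  have hL1 : 0 ≤ (n : ℝ) * Real.log m := by positivity
  rcases le_total n m with h | h
  · refine (hC ι I J m n hn h hI hJ S).mono ?_
    exact mul_le_mul_of_nonneg_left (by linarith) (Nat.cast_nonneg _)
  · refine ((hC ι J I n m hm h hJ hI S).imp fun S' _ h => h.swap).mono ?_
    rw [mul_comm (n : ℝ) m]
    exact mul_le_mul_of_nonneg_left (by linarith) (Nat.cast_nonneg _)

end Hop

namespace Hop
set_option linter.unusedSectionVars false
variable {d : ℕ} {ι : Type} [Fintype ι]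
open SignType (sign)

/-! ### From amortized decision trees to algebraic decision trees -/

/-- The input of the problem as a configuration: the point `p` becomes `(p, -1)` and the
hyperplane `a · x = b` becomes `(a, b)`, so that the sign of the product of the two vectors tells on
which side of the hyperplane the point lies. -/
noncomputable def inputCfg (d m n : ℕ) (x : Fin (d * m + (d + 1) * n) → ℝ) :
    Cfg d (Fin m ⊕ Fin n)
  | Sum.inl i => Fin.snoc (α := fun _ => ℝ) (fun t => x (ptIdx d m n i t)) (-1)
  | Sum.inr j => Fin.snoc (α := fun _ => ℝ) (fun t => x (coefIdx d m n j t)) (x (offIdx d m n j))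

lemma inputCfg_poly (d m n : ℕ) (i : Fin m ⊕ Fin n) (t : Fin (d + 1)) :
    ∃ p : MvPolynomial (Fin (d * m + (d + 1) * n)) ℝ, p.totalDegree ≤ 1 ∧
      ∀ x, MvPolynomial.eval x p = inputCfg d m n x i t := by
  rcases i with i | j <;> refine Fin.lastCases ?_ (fun t => ?_) t
  · exact ⟨MvPolynomial.C (-1), by simp, fun x => by simp [inputCfg]⟩
  · exact ⟨MvPolynomial.X (ptIdx d m n i t), by simp, fun x => by simp [inputCfg]⟩
  · exact ⟨MvPolynomial.X (offIdx d m n j), by simp, fun x => by simp [inputCfg]⟩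
  · exact ⟨MvPolynomial.X (coefIdx d m n j t), by simp, fun x => by simp [inputCfg]⟩

lemma bt_inputCfg (d m n : ℕ) (x : Fin (d * m + (d + 1) * n) → ℝ) (i : Fin m) (j : Fin n) :
    bt (Sum.inl i) (Sum.inr j) (inputCfg d m n x) =
      (∑ t : Fin d, x (coefIdx d m n j t) * x (ptIdx d m n i t)) - x (offIdx d m n j) := by
  simp only [bt, inputCfg, dotProduct, Fin.sum_univ_castSucc, Fin.snoc_castSucc, Fin.snoc_last]
  rw [neg_one_mul, ← sub_eq_add_neg]
  simp only [mul_comm]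

/-- If every test is a polynomial of bounded degree in the input, a decision tree whose leaves
determine the value of `g` gives an algebraic decision tree computing `g`. -/
lemma Can.exists_adt {N D : ℕ} (φ : (Fin N → ℝ) → Cfg d ι) (g : Cfg d ι → ℕ)
    (hφ : ∀ f ∈ (Tst Finset.univ : Finset (Test d ι)), ∃ p : MvPolynomial (Fin N) ℝ,
      p.totalDegree ≤ D ∧ ∀ x, MvPolynomial.eval x p = f (φ x))
    {G : Set (Cfg d ι) → Prop} (hG : ∀ S, G S → ∀ v ∈ S, ∀ w ∈ S, g v = g w)
    {c : ℝ} {S : Set (Cfg d ι)} (h : Can noPot G c S) :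
    ∃ T : ADT N ℕ, T.DegLE D ∧ (T.depth : ℝ) ≤ c ∧ ∀ x, φ x ∈ S → T.eval x = g (φ x) := by
  classical
  induction h with
  | @leaf c S h0 hS =>
    by_cases hne : S.Nonempty
    · obtain ⟨v, hv⟩ := hne
      exact ⟨.leaf (g v), trivial, by simpa [ADT.depth] using h0, fun x hx => hG S hS v hv _ hx⟩
    · exact ⟨.leaf 0, trivial, by simpa [ADT.depth] using h0, fun x hx => absurd ⟨_, hx⟩ hne⟩
  | @node c S p hp _ ih =>
    obtain ⟨P, hP, hPe⟩ := hφ p hp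
    choose T hT1 hT2 hT3 using ih
    have hT2' : ∀ s, ((T s).depth : ℝ) + 1 ≤ c := by
      intro s
      have := hT2 s
      simp only [noPot, sub_self, add_zero] at this
      linarith
    refine ⟨.node P (T (-1)) (T 0) (T 1), ⟨hP, hT1 _, hT1 _, hT1 _⟩, ?_, fun x hx => ?_⟩
    · simp only [ADT.depth]
      push_cast
      have h1 : max (max ((T (-1)).depth : ℝ) (T 0).depth) (T 1).depth ≤ c - 1 :=
        max_le (max_le (by linarith [hT2' (-1)]) (by linarith [hT2' 0])) (by linarith [hT2' 1])
      linarith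
    · have hbr : ∀ s, sign (p (φ x)) = s → φ x ∈ br S p s := fun s hs => ⟨hx, hs⟩
      simp only [ADT.eval, hPe]
      split_ifs with h1 h2
      · exact hT3 _ x (hbr _ (sign_neg h1))
      · exact hT3 _ x (hbr _ (by rw [h2, sign_zero]))
      · exact hT3 _ x (hbr _ (sign_pos (lt_of_le_of_ne (not_lt.1 h1) (Ne.symm h2))))

end Hop

/-- **Decision-tree complexity of the asymmetric case of Hopcroft's problem:**
an algebraic decision tree of constant degree and depth
`O((mn)^{d/(d+1)} + m log n + n log m)` counting point-above-hyperplane pairs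
for `m` points and `n` hyperplanes in `ℝ^d`. -/
theorem hopcroft_asymmetric_decision_tree (d : ℕ) (hd : 2 ≤ d) :
    ∃ (C : ℝ) (D : ℕ), ∀ m n : ℕ, 2 ≤ m → 2 ≤ n →
      ∃ T : ADT (d * m + (d + 1) * n) ℕ,
        T.DegLE D ∧
        (T.depth : ℝ) ≤
          C * (((m : ℝ) * (n : ℝ)) ^ ((d : ℝ) / ((d : ℝ) + 1)) +
            (m : ℝ) * Real.log (n : ℝ) + (n : ℝ) * Real.log (m : ℝ)) ∧
        ∀ x : Fin (d * m + (d + 1) * n) → ℝ,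
          (∀ j : Fin n, (fun t : Fin d => x (coefIdx d m n j t)) ≠ 0) →
          T.eval x =
            ((Finset.univ : Finset (Fin m × Fin n)).filter fun ij =>
              x (offIdx d m n ij.2) <
                ∑ t : Fin d, x (coefIdx d m n ij.2 t) * x (ptIdx d m n ij.1 t)).card := by
  classical
  obtain ⟨C, hC⟩ := Hop.solve_all hd
  refine ⟨C, 2 * d ^ 3, fun m n hm hn => ?_⟩
  have hcan := hC (Fin m ⊕ Fin n) (Finset.univ.map Function.Embedding.inl)
    (Finset.univ.map Function.Embedding.inr) m n hm hn (by simp) (by simp) Set.univ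
  have hpoly := Hop.Tst_poly (U := Finset.univ) hd (Hop.inputCfg d m n)
    fun i _ t => Hop.inputCfg_poly d m n i t
  let g : Hop.Cfg d (Fin m ⊕ Fin n) → ℕ := fun v =>
    ((Finset.univ : Finset (Fin m × Fin n)).filter fun ij =>
      SignType.sign (Hop.bt (Sum.inl ij.1) (Sum.inr ij.2) v) = 1).card
  obtain ⟨T, hT1, hT2, hT3⟩ := hcan.exists_adt (D := 2 * d ^ 3) (Hop.inputCfg d m n) g
    (fun f hf => by
      obtain ⟨p, hp, hpe⟩ := hpoly f hf
      exact ⟨p, hp, fun x => hpe x _ fun _ _ => rfl⟩)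
    (fun S hS v hv w hw => by
      refine congrArg Finset.card (Finset.filter_congr fun ij _ => ?_)
      rw [hS (Sum.inl ij.1) (by simp) (Sum.inr ij.2) (by simp) v hv w hw])
  refine ⟨T, hT1, hT2, fun x _ => ?_⟩
  rw [hT3 x (Set.mem_univ _)]
  refine congrArg Finset.card (Finset.filter_congr fun ij _ => ?_)
  rw [Hop.bt_inputCfg, sign_eq_one_iff, sub_pos]
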